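/- There exists a constant C > 0 such that for every R > 1 and every x ∈ ℝⁿ, ∫_{B_R(x)} (u v³ + v u³) dy ≤ C R^{n−1}. -/

import Mathlib

/-!
Write `M s x f` for the Gaussian mean of `f` around `x` at scale `s`, `H = ⟨u² + v²⟩`,
`E = ⟨|∇u|² + |∇v|² + u²v²⟩` and `w = u - v`. The theorem follows from two facts about the cubic
interaction `m = uv³ + vu³` and the quadratic interaction `g = uv² + vu²` (`Sol.exists_control`):
there is a closed nonempty set `Z`, the interface, such that `H ≤ K S²` around every point of `Z` at
every large scale `S`; moreover `m ≤ C / dist(·, Z)` far from `Z`, and `m ≤ C (g + M_16 g)`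
everywhere. If `B_R(x)` is far from `Z` compared with `R`, the first bound on `m` integrates to
`C R^(n-1)`. Otherwise `S ~ R` is such that `H ≤ C S²` around `x`; since `g = Δ(u + v)`, an
integration by parts gives `⟨g⟩ ≤ C / S` (`Sol.M_uvv_le`), and the second bound on `m` together with
the semigroup property `M_M` gives `⟨m⟩ ≤ C / S`.

*Frequency.* An Almgren-type formula (`Sol.hasDeriv_N`, from the Pohozaev identity
`Sol.pohozaev`) shows that `N = s² E / H` is nondecreasing in `s`. Linear growth then forces `N ≤ 1`
(`Sol.N_le_one`), so that `H / s²` is almost nonincreasing, uniformly in the center. An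
Alt–Caffarelli–Friedman-type argument (`Sol.pq_alt`) bounds `min (u, v)` pointwise
(`Sol.min_bound`), and all interaction terms `⟨u²v²⟩`, `⟨|∇u| |∇v|⟩`, `⟨uv⟩` are small, by a power of
`s² H`, relative to `H` (`Sol.exists_Th_bound`, `Sol.uv_le`).

*Bootstrap.* Since `Δw · b` is, up to interaction terms and quadratic terms in `∇w - b`, the
divergence of a field that vanishes when `∇w = b` (`Sol.lap_mul_const`), the mean `z` of `w`
drifts slowly with the scale where `w` is nearly linear. As a consequence, if `s² H` is large and
`|z| ≤ η √H` at one scale, then `w` is nearly linear at all larger scales, and `H / s²` does not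
decay (`Sol.exists_bal`). A point and scale of this kind exists (`Sol.exists_balanced`), because
otherwise one component, say `u`, would dominate everywhere; the mean of `v²` would then be bounded,
while its frequency would be bounded from below. This makes `H ≥ c s²` at all points and scales, and
the bootstrap applies at every zero of `z` at a fixed scale; these zeros form `Z`
(`Sol.exists_interface`).

*Away from the interface.* At distance `d` from `Z`, near-linearity around the closest point of `Z`
shows that one component dominates at scale `θ d` with small frequency (`Sol.exists_far`).
Descending to scale one, the dominant component is at least `√d` pointwise (`Sol.u_sq_ge`). The
other component `v` satisfies `Δv ≥ d v`, and so decays faster than any power of `d`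
(`barrier_iter`); this yields both bounds on `m` (`Sol.far_bound`).
-/

open MeasureTheory Metric Set
open scoped RealInnerProductSpace ENNReal

/-- Euclidean space `ℝⁿ`. -/
abbrev Euc (n : ℕ) := EuclideanSpace ℝ (Fin n)

/-- The Laplacian `Δu` of a function `u : ℝⁿ → ℝ`. -/
noncomputable def lap {n : ℕ} (u : Euc n → ℝ) (x : Euc n) : ℝ :=
  ∑ i : Fin n,
    fderiv ℝ (fun y => fderiv ℝ u y (EuclideanSpace.single i 1)) x (EuclideanSpace.single i 1)

/-- The divergence `div Y = Σ_α ∂Y^α/∂x_α` of a vector field `Y`. -/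
noncomputable def vdiv {n : ℕ} (Y : Euc n → Euc n) (x : Euc n) : ℝ :=
  ∑ i : Fin n, fderiv ℝ Y x (EuclideanSpace.single i 1) i

/-- `DY(p,q)(x) = Σ_{α,β} (∂Y^α/∂x_β)(x) p_α q_β`. -/
noncomputable def DYbil {n : ℕ} (Y : Euc n → Euc n) (p q x : Euc n) : ℝ :=
  ∑ α : Fin n, ∑ β : Fin n,
    fderiv ℝ Y x (EuclideanSpace.single β 1) α * p α * q β

/-- The rescaled function `u_κ(x) = R⁻¹ u(x₀ + R x)` (with `κ = R⁴`). -/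
noncomputable def resc {n : ℕ} (u : Euc n → ℝ) (x₀ : Euc n) (R : ℝ) (x : Euc n) : ℝ :=
  R⁻¹ * u (x₀ + R • x)

/-! ### Functions of polynomial growth and partial derivatives -/

/-- Continuous functions of at most polynomial growth. -/
@[fun_prop]
structure CP {n : ℕ} (f : Euc n → ℝ) : Prop where
  cont : Continuous f
  growth : ∃ C : ℝ, ∃ k : ℕ, 0 ≤ C ∧ ∀ x, |f x| ≤ C * (1 + ‖x‖) ^ k

namespace CP
variable {n : ℕ} {f g : Euc n → ℝ}

@[fun_prop]
theorem const (c : ℝ) : CP (fun _ : Euc n => c) :=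
  ⟨continuous_const, |c|, 0, abs_nonneg c, fun x => by simp⟩

@[fun_prop]
theorem add (hf : CP f) (hg : CP g) : CP (fun x => f x + g x) := by
  obtain ⟨cf, C, k, hC, h⟩ := hf
  obtain ⟨cg, D, l, hD, h'⟩ := hg
  refine ⟨cf.add cg, C + D, k + l, by positivity, fun x => ?_⟩
  have h1 : 1 ≤ 1 + ‖x‖ := by linarith [norm_nonneg x]
  have e1 : (1 + ‖x‖) ^ k ≤ (1 + ‖x‖) ^ (k + l) := pow_le_pow_right₀ h1 (by omega)
  have e2 : (1 + ‖x‖) ^ l ≤ (1 + ‖x‖) ^ (k + l) := pow_le_pow_right₀ h1 (by omega)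
  calc |f x + g x| ≤ |f x| + |g x| := abs_add_le _ _
    _ ≤ C * (1 + ‖x‖) ^ k + D * (1 + ‖x‖) ^ l := add_le_add (h x) (h' x)
    _ ≤ C * (1 + ‖x‖) ^ (k + l) + D * (1 + ‖x‖) ^ (k + l) := by gcongr
    _ = _ := by ring

@[fun_prop]
theorem mul (hf : CP f) (hg : CP g) : CP (fun x => f x * g x) := by
  obtain ⟨cf, C, k, hC, h⟩ := hf
  obtain ⟨cg, D, l, hD, h'⟩ := hg
  refine ⟨cf.mul cg, C * D, k + l, by positivity, fun x => ?_⟩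
  calc |f x * g x| = |f x| * |g x| := abs_mul _ _
    _ ≤ (C * (1 + ‖x‖) ^ k) * (D * (1 + ‖x‖) ^ l) := by gcongr; exacts [h x, h' x]
    _ = _ := by ring

@[fun_prop]
theorem neg (hf : CP f) : CP (fun x => - f x) := by
  simpa using (CP.const (-1)).mul hf

@[fun_prop]
theorem sub (hf : CP f) (hg : CP g) : CP (fun x => f x - g x) := by
  simpa [sub_eq_add_neg] using hf.add hg.neg

@[fun_prop]
theorem pow (hf : CP f) (m : ℕ) : CP (fun x => f x ^ m) := by
  induction m with
  | zero => simpa using CP.const 1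
  | succ m ih => simpa [pow_succ] using ih.mul hf

@[fun_prop]
theorem div_const (hf : CP f) (c : ℝ) : CP (fun x => f x / c) := by
  simpa [div_eq_mul_inv] using hf.mul (CP.const c⁻¹)

@[fun_prop]
theorem sum {ι : Type*} {F : ι → Euc n → ℝ} (s : Finset ι) (h : ∀ i, CP (F i)) :
    CP (fun x => ∑ i ∈ s, F i x) := by
  classical
  induction s using Finset.induction_on with
  | empty => simpa using CP.const 0
  | insert a s ha ih => simpa [Finset.sum_insert ha] using (h a).add ih

@[fun_prop]
theorem abs (hf : CP f) : CP (fun x => |f x|) :=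
  ⟨hf.cont.abs, by simpa using hf.growth⟩

theorem of_le (hf : Continuous f) (hg : CP g) (h : ∀ x, |f x| ≤ g x) : CP f := by
  obtain ⟨cg, D, l, hD, h'⟩ := hg
  exact ⟨hf, D, l, hD, fun x => (h x).trans ((le_abs_self _).trans (h' x))⟩

@[fun_prop]
theorem norm : CP (fun x : Euc n => ‖x‖) :=
  ⟨continuous_norm, 1, 1, by norm_num, fun x => by simp⟩

@[fun_prop]
theorem coord (i : Fin n) : CP (fun x : Euc n => x i) :=
  of_le (by fun_prop) norm fun x => by simpa using PiLp.norm_apply_le x i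

theorem aff (hf : CP f) (x : Euc n) (s : ℝ) : CP (fun ξ => f (x + s • ξ)) := by
  obtain ⟨cf, C, k, hC, h⟩ := hf
  refine ⟨by fun_prop, C * (1 + ‖x‖ + |s|) ^ k, k, by positivity, fun ξ => (h _).trans ?_⟩
  rw [mul_assoc, ← mul_pow]
  have := norm_add_le x (s • ξ)
  rw [norm_smul, Real.norm_eq_abs] at this
  gcongr
  nlinarith [norm_nonneg x, norm_nonneg ξ, abs_nonneg s, mul_nonneg (norm_nonneg x) (norm_nonneg ξ)]

@[fun_prop]
theorem dist (x : Euc n) : CP (fun y : Euc n => dist y x) :=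
  of_le (by fun_prop) (norm.add (const ‖x‖)) fun y => by
    simpa [dist_eq_norm] using norm_sub_le y x

end CP

/-- The partial derivative `∂ᵢ f`. -/
noncomputable def pd {n : ℕ} (i : Fin n) (f : Euc n → ℝ) (x : Euc n) : ℝ :=
  fderiv ℝ f x (EuclideanSpace.single i 1)

/-- `Smooth` abbreviates `C^∞`. -/
abbrev Smooth {n : ℕ} (f : Euc n → ℝ) : Prop := ContDiff ℝ (⊤ : ℕ∞) f

section pd
variable {n : ℕ} {f g : Euc n → ℝ}

theorem lap_eq (f : Euc n → ℝ) (x : Euc n) : lap f x = ∑ i, pd i (pd i f) x := rfl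

theorem Smooth.diff (hf : Smooth f) : Differentiable ℝ f := hf.differentiable (by simp)

theorem Smooth.pd (hf : Smooth f) (i : Fin n) : Smooth (pd i f) := by
  have : ContDiff ℝ (⊤ : ℕ∞) (fderiv ℝ f) := hf.fderiv_right (by simp)
  exact this.clm_apply contDiff_const

theorem pd_const (i : Fin n) (c : ℝ) : pd i (fun _ => c) = fun _ => 0 := by
  ext x; simp [pd]

theorem pd_add (i : Fin n) (hf : Differentiable ℝ f) (hg : Differentiable ℝ g) :
    pd i (fun x => f x + g x) = fun x => pd i f x + pd i g x := by
  ext x; simp [pd, fderiv_fun_add (hf x) (hg x)]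

theorem pd_sub (i : Fin n) (hf : Differentiable ℝ f) (hg : Differentiable ℝ g) :
    pd i (fun x => f x - g x) = fun x => pd i f x - pd i g x := by
  ext x; simp [pd, fderiv_fun_sub (hf x) (hg x)]

theorem pd_neg (i : Fin n) : pd i (fun x => - f x) = fun x => - pd i f x := by
  ext x; simp [pd]

theorem pd_mul (i : Fin n) (hf : Differentiable ℝ f) (hg : Differentiable ℝ g) :
    pd i (fun x => f x * g x) = fun x => pd i f x * g x + f x * pd i g x := by
  ext x; simp [pd, fderiv_fun_mul (hf x) (hg x)]; ring

theorem pd_const_mul (i : Fin n) (c : ℝ) (hf : Differentiable ℝ f) :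
    pd i (fun x => c * f x) = fun x => c * pd i f x := by
  rw [pd_mul i (by fun_prop) hf, pd_const]; ext x; simp

theorem pd_pow (i : Fin n) (m : ℕ) (hf : Differentiable ℝ f) :
    pd i (fun x => f x ^ m) = fun x => m * f x ^ (m - 1) * pd i f x := by
  ext x; simp [pd, fderiv_fun_pow m (hf x)]

theorem pd_sum {ι : Type*} (i : Fin n) (s : Finset ι) {F : ι → Euc n → ℝ}
    (h : ∀ j, Differentiable ℝ (F j)) :
    pd i (fun x => ∑ j ∈ s, F j x) = fun x => ∑ j ∈ s, pd i (F j) x := by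
  ext x
  simp [pd, fderiv_fun_sum (fun j _ => h j x)]

theorem diff_coord (j : Fin n) : Differentiable ℝ (fun x : Euc n => x j) := by fun_prop

theorem pd_coord (i j : Fin n) : pd i (fun x : Euc n => x j) = fun _ => if i = j then 1 else 0 := by
  ext x
  have : (fun x : Euc n => x j) = (EuclideanSpace.proj j : Euc n →L[ℝ] ℝ) := by ext; simp
  rw [pd, this, ContinuousLinearMap.fderiv]
  simp [eq_comm]

theorem pd_comm (hf : Smooth f) (i j : Fin n) : pd i (pd j f) = pd j (pd i f) := by
  ext x
  have hs : IsSymmSndFDerivAt ℝ f x := hf.contDiffAt.isSymmSndFDerivAt (by simpa using WithTop.coe_le_coe.2 (le_top : (2 : ℕ∞) ≤ ⊤))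
  have hd : Differentiable ℝ (fderiv ℝ f) := by
    have : ContDiff ℝ (⊤ : ℕ∞) (fderiv ℝ f) := hf.fderiv_right (by simp)
    exact this.differentiable (by simp)
  have key : ∀ a b : Fin n, pd a (pd b f) x =
      fderiv ℝ (fderiv ℝ f) x (EuclideanSpace.single a 1) (EuclideanSpace.single b 1) := by
    intro a b
    change fderiv ℝ (fun y => fderiv ℝ f y (EuclideanSpace.single b 1)) x _ = _
    rw [fderiv_clm_apply (hd x) (by fun_prop)]
    simp
  rw [key, key]
  exact hs _ _

theorem fderiv_eq_sum (x y : Euc n) : fderiv ℝ f x y = ∑ i, y i * pd i f x := by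
  have hy : y = ∑ i, y i • EuclideanSpace.single i (1 : ℝ) := by
    ext j; simp [Finset.sum_apply, Pi.single_apply]
  conv_lhs => rw [hy]
  simp [pd]

end pd

/-- `T m f`: all partial derivatives of `f` of order at most `m` have polynomial growth. -/
def T {n : ℕ} : ℕ → (Euc n → ℝ) → Prop
  | 0, f => Smooth f ∧ CP f
  | m + 1, f => Smooth f ∧ CP f ∧ ∀ i, T m (pd i f)

namespace T
variable {n : ℕ} {f g : Euc n → ℝ} {m : ℕ}

theorem smooth (h : T m f) : Smooth f := by cases m <;> exact h.1

theorem cp (h : T m f) : CP f := by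
  cases m
  · exact h.2
  · exact h.2.1

theorem down (h : T (m + 1) f) : T m f := by
  induction m generalizing f with
  | zero => exact ⟨h.1, h.2.1⟩
  | succ m ih => exact ⟨h.1, h.2.1, fun i => ih (h.2.2 i)⟩

theorem const (c : ℝ) : T m (fun _ : Euc n => c) := by
  induction m generalizing c with
  | zero => exact ⟨contDiff_const, CP.const c⟩
  | succ m ih => exact ⟨contDiff_const, CP.const c, fun i => by rw [pd_const]; exact ih 0⟩

theorem add (hf : T m f) (hg : T m g) : T m (fun x => f x + g x) := by
  induction m generalizing f g with
  | zero => exact ⟨hf.1.add hg.1, hf.2.add hg.2⟩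
  | succ m ih =>
    refine ⟨hf.1.add hg.1, hf.cp.add hg.cp, fun i => ?_⟩
    rw [pd_add i hf.1.diff hg.1.diff]
    exact ih (hf.2.2 i) (hg.2.2 i)

theorem mul (hf : T m f) (hg : T m g) : T m (fun x => f x * g x) := by
  induction m generalizing f g with
  | zero => exact ⟨hf.1.mul hg.1, hf.2.mul hg.2⟩
  | succ m ih =>
    refine ⟨hf.1.mul hg.1, hf.cp.mul hg.cp, fun i => ?_⟩
    rw [pd_mul i hf.1.diff hg.1.diff]
    exact (ih (hf.2.2 i) hg.down).add (ih hf.down (hg.2.2 i))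

end T

/-- Smooth functions all of whose derivatives have polynomial growth. -/
@[fun_prop]
def Nice {n : ℕ} (f : Euc n → ℝ) : Prop := ∀ m, T m f

namespace Nice
variable {n : ℕ} {f g : Euc n → ℝ}

theorem smooth (h : Nice f) : Smooth f := (h 0).smooth
theorem diff (h : Nice f) : Differentiable ℝ f := h.smooth.diff
theorem cp (h : Nice f) : CP f := (h 0).cp

@[fun_prop]
theorem pd (h : Nice f) (i : Fin n) : Nice (pd i f) := fun m => (h (m + 1)).2.2 i

theorem of_pd (hs : Smooth f) (hc : CP f) (h : ∀ i, Nice (_root_.pd i f)) : Nice f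
  | 0 => ⟨hs, hc⟩
  | m + 1 => ⟨hs, hc, fun i => h i m⟩

@[fun_prop]
theorem const (c : ℝ) : Nice (fun _ : Euc n => c) := fun _ => T.const c

@[fun_prop]
theorem add (hf : Nice f) (hg : Nice g) : Nice (fun x => f x + g x) := fun m => (hf m).add (hg m)

@[fun_prop]
theorem mul (hf : Nice f) (hg : Nice g) : Nice (fun x => f x * g x) := fun m => (hf m).mul (hg m)

@[fun_prop]
theorem neg (hf : Nice f) : Nice (fun x => - f x) := by
  simpa using (Nice.const (-1)).mul hf

@[fun_prop]
theorem sub (hf : Nice f) (hg : Nice g) : Nice (fun x => f x - g x) := by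
  simpa [sub_eq_add_neg] using hf.add hg.neg

@[fun_prop]
theorem pow (hf : Nice f) (m : ℕ) : Nice (fun x => f x ^ m) := by
  induction m with
  | zero => simpa using Nice.const 1
  | succ m ih => simpa [pow_succ] using ih.mul hf

@[fun_prop]
theorem div_const (hf : Nice f) (c : ℝ) : Nice (fun x => f x / c) := by
  simpa [div_eq_mul_inv] using hf.mul (Nice.const c⁻¹)

@[fun_prop]
theorem sum {ι : Type*} {F : ι → Euc n → ℝ} (s : Finset ι) (h : ∀ i, Nice (F i)) :
    Nice (fun x => ∑ i ∈ s, F i x) := by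
  classical
  induction s using Finset.induction_on with
  | empty => simpa using Nice.const 0
  | insert a s ha ih => simpa [Finset.sum_insert ha] using (h a).add ih

@[fun_prop]
theorem coord (i : Fin n) : Nice (fun x : Euc n => x i) :=
  of_pd (by unfold Smooth; fun_prop) (by fun_prop) fun j => by rw [pd_coord]; exact const _

@[fun_prop]
theorem lap (hf : Nice f) : Nice (lap f) := by
  change Nice (fun x => ∑ i, _root_.pd i (_root_.pd i f) x)
  fun_prop

end Nice

@[fun_prop]
theorem CP.pd {n : ℕ} {f : Euc n → ℝ} (hf : Nice f) (i : Fin n) : CP (pd i f) := (hf.pd i).cp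
@[fun_prop]
theorem CP.of_nice {n : ℕ} {f : Euc n → ℝ} (hf : Nice f) : CP f := hf.cp

/-! ### Interior gradient estimates and regularity -/

section gradient
open Filter Topology

theorem second_deriv_nonpos {g g' : ℝ → ℝ} {c : ℝ} (hm : IsLocalMax g 0)
    (h1 : ∀ t, HasDerivAt g (g' t) t) (h2 : HasDerivAt g' c 0) : c ≤ 0 := by
  by_contra! hc
  have hd : deriv g = g' := funext fun t => (h1 t).deriv
  have h0 : g' 0 = 0 := hm.hasDerivAt_eq_zero (h1 0)
  have hmin : IsLocalMin g 0 :=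
    isLocalMin_of_deriv_deriv_pos (by rw [hd, h2.deriv]; exact hc) (by rw [hd, h0])
      (h1 0).continuousAt
  have he : g =ᶠ[𝓝 0] fun _ => g 0 := by
    filter_upwards [hm, hmin] with t a b using le_antisymm a b
  have he' : g' =ᶠ[𝓝 0] fun _ => 0 := by
    have := he.deriv
    rw [hd] at this
    simpa using this
  have := (he'.hasDerivAt_iff.1 h2).unique (hasDerivAt_const _ _)
  linarith

theorem deriv_nonpos_of_right {g : ℝ → ℝ} {c : ℝ} (h : HasDerivAt g c 0) (h0 : g 0 = 0)
    (hg : ∀ t, 0 < t → t ≤ 1 → g t ≤ 0) : c ≤ 0 := by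
  have h' := h.hasDerivWithinAt (s := Ioi 0)
  rw [hasDerivWithinAt_iff_tendsto_slope' (by simp)] at h'
  refine le_of_tendsto h' ?_
  filter_upwards [Ioc_mem_nhdsGT (zero_lt_one' ℝ)] with t ht
  rw [slope_def_field, h0]
  have := hg t ht.1 ht.2
  simp only [sub_zero]
  exact div_nonpos_of_nonpos_of_nonneg this ht.1.le

variable {n : ℕ} {f : Euc n → ℝ}

theorem hasDerivAt_line (hf : Differentiable ℝ f) (a : Euc n) (j : Fin n) (σ t : ℝ) :
    HasDerivAt (fun t : ℝ => f (a + (σ * t) • EuclideanSpace.single j (1 : ℝ)))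
      (σ * pd j f (a + (σ * t) • EuclideanSpace.single j (1 : ℝ))) t := by
  have h1 : HasDerivAt (fun t : ℝ => a + (σ * t) • EuclideanSpace.single j (1 : ℝ))
      (σ • EuclideanSpace.single j (1 : ℝ)) t := by
    have := ((((hasDerivAt_id t).const_mul σ).smul_const
      (EuclideanSpace.single j (1 : ℝ) : Euc n))).const_add a
    simpa using this
  have := (hf _).hasFDerivAt.comp_hasDerivAt t h1
  simpa [pd, Function.comp_def] using this

/-- The comparison step of the interior gradient estimate, on the half cube. -/
theorem half_cube_bound (hf : Smooth f) (x₀ : Euc n) (i : Fin n) {M N : ℝ} (hM : 0 ≤ M)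
    (hN : 0 ≤ N)
    (hfM : ∀ y : Euc n, (∀ j, |y j| ≤ 1) → |f (x₀ + y)| ≤ M)
    (hfN : ∀ y : Euc n, (∀ j, |y j| ≤ 1) → |lap f (x₀ + y)| ≤ N)
    (p : Euc n) (hp : ∀ j, |p j| ≤ 1) (hpi : 0 ≤ p i) :
    (f (x₀ + p) - f (x₀ + (p - (2 * p i) • EuclideanSpace.single i (1 : ℝ)))) / 2 ≤
      M * (∑ j, (if j = i then (p i) * (n - (n - 1) * p i) else (p j) ^ 2))
        + (N + 1) / 2 * (p i * (1 - p i)) := by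
  classical
  set e : Fin n → Euc n := fun j => EuclideanSpace.single j (1 : ℝ) with he
  have hn1 : (1 : ℝ) ≤ n := by
    have : 1 ≤ n := by have := i.2; omega
    exact_mod_cast this
  set ρ : Euc n → Euc n := fun p => p - (2 * p i) • e i with hρ
  have hρj : ∀ q j, ρ q j = if j = i then - q i else q j := by
    intro q j
    by_cases h : j = i
    · subst h; simp [hρ, he]; ring
    · simp [hρ, he, h]
  have hρa : ∀ q, (∀ j, |q j| ≤ 1) → ∀ j, |ρ q j| ≤ 1 := by
    intro q hq j
    rw [hρj]; split_ifs
    · simpa using hq i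
    · exact hq j
  set Ψ : Euc n → ℝ := fun p =>
    (f (x₀ + p) - f (x₀ + ρ p)) / 2 -
      (M * (∑ j, (if j = i then (p i) * (n - (n - 1) * p i) else (p j) ^ 2))
        + (N + 1) / 2 * (p i * (1 - p i))) with hΨ
  suffices h : Ψ p ≤ 0 by simpa [hΨ, hρ, he] using h
  set K : Set (Euc n) := {p | (∀ j, |p j| ≤ 1) ∧ 0 ≤ p i} with hK
  have hKc : IsCompact K := by
    refine Metric.isCompact_of_isClosed_isBounded ?_ ?_
    · have : K = (⋂ j, {p : Euc n | |p j| ≤ 1}) ∩ {p : Euc n | 0 ≤ p i} := by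
        ext q; simp [hK]
      rw [this]
      refine (isClosed_iInter fun j => ?_).inter ?_
      · exact isClosed_le (by fun_prop) continuous_const
      · exact isClosed_le continuous_const (by fun_prop)
    · refine (Metric.isBounded_closedBall (x := (0 : Euc n)) (r := Real.sqrt n)).subset fun q hq => ?_
      rw [mem_closedBall_zero_iff, EuclideanSpace.norm_eq]
      apply Real.sqrt_le_sqrt
      calc ∑ j, ‖q j‖ ^ 2 ≤ ∑ j : Fin n, (1 : ℝ) := by
            refine Finset.sum_le_sum fun j _ => ?_
            have := hq.1 j
            rw [Real.norm_eq_abs]; nlinarith [abs_nonneg (q j)]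
        _ = n := by simp
  have hfc : Continuous f := hf.continuous
  have hcoord : ∀ j, Continuous (fun p : Euc n => p j) := fun j => by fun_prop
  have hΨc : Continuous Ψ := by
    have hs : Continuous fun p : Euc n =>
        ∑ j, (if j = i then (p i) * (n - (n - 1) * p i) else (p j) ^ 2) := by
      refine continuous_finsetSum _ fun j _ => ?_
      by_cases h : j = i <;> simp only [h, if_true, if_false] <;> fun_prop
    simp only [hΨ, hρ]
    fun_prop
  obtain ⟨q, hq, hmax⟩ := hKc.exists_isMaxOn ⟨p, hp, hpi⟩ hΨc.continuousOn
  refine (hmax (a := p) ⟨hp, hpi⟩ : Ψ p ≤ Ψ q).trans ?_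
  -- bounds for the pieces at `q`
  have hf1 := abs_le.1 (hfM q hq.1)
  have hf2 := abs_le.1 (hfM _ (hρa q hq.1))
  have hqi1 : q i ≤ 1 := (abs_le.1 (hq.1 i)).2
  have hqi0 := hq.2
  have hterm0 : ∀ j, 0 ≤ (if j = i then (q i) * (n - (n - 1) * q i) else (q j) ^ 2) := by
    intro j; split_ifs
    · have : 0 ≤ (n : ℝ) - (n - 1) * q i := by nlinarith
      positivity
    · positivity
  by_cases h0 : q i = 0
  · have hρq : ρ q = q := by simp [hρ, h0]
    have := Finset.sum_nonneg fun j (_ : j ∈ Finset.univ) => hterm0 j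
    simp only [hΨ, hρq, h0]
    rw [h0] at this
    nlinarith
  have hqpos : 0 < q i := lt_of_le_of_ne hqi0 (Ne.symm h0)
  by_cases hb : ∃ j, |q j| = 1
  · obtain ⟨j, hj⟩ := hb
    have hge : 1 ≤ (if j = i then (q i) * (n - (n - 1) * q i) else (q j) ^ 2) := by
      split_ifs with h
      · subst h
        rw [abs_of_pos hqpos] at hj
        rw [hj]; linarith
      · rw [← sq_abs, hj]; norm_num
    have := Finset.single_le_sum (fun j (_ : j ∈ Finset.univ) => hterm0 j) (Finset.mem_univ j)
    have h3 := mul_le_mul_of_nonneg_left (hge.trans this) hM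
    have h4 : 0 ≤ (N + 1) / 2 * (q i * (1 - q i)) := by
      have : 0 ≤ 1 - q i := by linarith
      positivity
    simp only [hΨ]
    linarith
  · push Not at hb
    have hlt : ∀ j, |q j| < 1 := fun j => lt_of_le_of_ne (hq.1 j) (hb j)
    exfalso
    -- the second derivatives along the coordinate lines
    set c : Fin n → ℝ := fun j => (pd j (pd j f) (x₀ + q) - pd j (pd j f) (x₀ + ρ q)) / 2
      - (if j = i then M * (- 2 * (n - 1)) - (N + 1) else 2 * M) with hc
    have hcn : ∀ j, c j ≤ 0 := by
      intro j
      have hcoordl : ∀ (t : ℝ) (k : Fin n), (q + t • e j) k = if k = j then q k + t else q k := by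
        intro t k
        by_cases h : k = j
        · subst h; simp [he]
        · simp [he, h]
      have hmaxl : IsLocalMax (fun t : ℝ => Ψ (q + t • e j)) 0 := by
        have hcont : Continuous fun t : ℝ => q + t • e j := by fun_prop
        have ev1 : ∀ᶠ t : ℝ in 𝓝 0, ∀ k, |(q + t • e j) k| < 1 := by
          rw [eventually_all]
          intro k
          have : Continuous fun t : ℝ => |(q + t • e j) k| :=
            ((hcoord k).comp hcont).abs
          exact this.continuousAt.eventually_lt continuousAt_const (by simpa using hlt k)
        have ev2 : ∀ᶠ t : ℝ in 𝓝 0, 0 < (q + t • e j) i := by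
          have : Continuous fun t : ℝ => (q + t • e j) i := (hcoord i).comp hcont
          exact continuousAt_const.eventually_lt this.continuousAt (by simpa using hqpos)
        filter_upwards [ev1, ev2] with t h1 h2
        have := hmax (a := q + t • e j) ⟨fun k => (h1 k).le, h2.le⟩
        simpa using this
      have hfd := hf.diff
      have hfpd := (hf.pd j).diff
      set σ : ℝ := if j = i then -1 else 1 with hσ
      have hσ2 : σ * σ = 1 := by rw [hσ]; split_ifs <;> norm_num
      have hρl : ∀ t : ℝ, ρ (q + t • e j) = ρ q + (σ * t) • e j := by
        intro t
        ext k
        rw [hρj]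
        simp only [PiLp.add_apply, PiLp.smul_apply, hρj, smul_eq_mul]
        by_cases hji : j = i
        · subst hji
          by_cases hk : k = j
          · subst hk; simp [hσ, he]; ring
          · simp [hk, he, hσ]
        · by_cases hk : k = i
          · subst hk; simp [hσ, he, hji]
          · simp [hk, hσ, hji]
      set P : ℝ → ℝ := fun t => if j = i then M * ((q i + t) * (n - (n - 1) * (q i + t)))
          + (N + 1) / 2 * ((q i + t) * (1 - (q i + t))) else M * (q j + t) ^ 2 with hP
      set Cst : ℝ := M * (∑ k ∈ Finset.univ.erase j,
        (if k = i then (q i) * (n - (n - 1) * q i) else (q k) ^ 2))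
        + (if j = i then 0 else (N + 1) / 2 * (q i * (1 - q i))) with hCst
      have hline : ∀ t : ℝ, Ψ (q + t • e j) =
          (f (x₀ + q + (1 * t) • e j) - f (x₀ + ρ q + (σ * t) • e j)) / 2 - (P t + Cst) := by
        intro t
        simp only [hΨ, hρl]
        rw [← Finset.add_sum_erase _ _ (Finset.mem_univ j)]
        have hs : ∑ k ∈ Finset.univ.erase j, (if k = i then
            ((q + t • e j) i) * (n - (n - 1) * (q + t • e j) i) else ((q + t • e j) k) ^ 2)
            = ∑ k ∈ Finset.univ.erase j,
              (if k = i then (q i) * (n - (n - 1) * q i) else (q k) ^ 2) := by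
          refine Finset.sum_congr rfl fun k hk => ?_
          have hkj := Finset.ne_of_mem_erase hk
          by_cases hki : k = i
          · subst hki; simp only [if_true]; rw [hcoordl, if_neg hkj]
          · simp only [hki, if_false]; rw [hcoordl, if_neg hkj]
        rw [hs]
        simp only [hP, hCst, one_mul, ← add_assoc]
        by_cases hji : j = i
        · subst hji
          simp only [if_true, hcoordl]; ring
        · have hij : i ≠ j := fun h => hji h.symm
          simp only [hji, if_false, hcoordl, hij, if_true]; ring
      set P' : ℝ → ℝ := fun t => if j = i then M * (n - 2 * (n - 1) * (q i + t))
          + (N + 1) / 2 * (1 - 2 * (q i + t)) else 2 * M * (q j + t) with hP'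
      have hPd : ∀ t, HasDerivAt P (P' t) t := by
        intro t
        simp only [hP, hP']
        by_cases hji : j = i
        · simp only [hji, if_true]
          have h1 := (hasDerivAt_id t).const_add (q i)
          have h2 := ((h1.mul ((h1.const_mul ((n : ℝ) - 1)).const_sub (n : ℝ))).const_mul M).add
            ((h1.mul (h1.const_sub 1)).const_mul ((N + 1) / 2))
          refine h2.congr_deriv ?_
          simp; ring
        · simp only [hji, if_false]
          have h1 := (hasDerivAt_id t).const_add (q j)
          have h2 := (h1.pow 2).const_mul M
          refine h2.congr_deriv ?_
          simp; ring
      have hPd' : HasDerivAt P' (if j = i then M * (- 2 * (n - 1)) - (N + 1) else 2 * M) 0 := by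
        simp only [hP']
        by_cases hji : j = i
        · simp only [hji, if_true]
          have h1 := (hasDerivAt_id (0 : ℝ)).const_add (q i)
          have h2 := (((h1.const_mul (2 * ((n : ℝ) - 1))).const_sub (n : ℝ)).const_mul M).add
            (((h1.const_mul 2).const_sub 1).const_mul ((N + 1) / 2))
          refine h2.congr_deriv ?_
          ring
        · simp only [hji, if_false]
          have h1 := (hasDerivAt_id (0 : ℝ)).const_add (q j)
          have h2 := h1.const_mul (2 * M)
          refine h2.congr_deriv ?_
          ring
      simp only [hline] at hmaxl
      refine second_deriv_nonpos hmaxl (fun t =>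
        (((hasDerivAt_line hfd (x₀ + q) j 1 t).sub
          (hasDerivAt_line hfd (x₀ + ρ q) j σ t)).div_const 2).sub ((hPd t).add_const Cst)) ?_
      have h5 := ((((hasDerivAt_line hfpd (x₀ + q) j 1 0).const_mul 1).sub
          ((hasDerivAt_line hfpd (x₀ + ρ q) j σ 0).const_mul σ)).div_const 2).sub hPd'
      refine h5.congr_deriv ?_
      rw [← mul_assoc σ, hσ2]
      simp [hc]
    have hsum : ∑ j, c j ≤ 0 := Finset.sum_nonpos fun j _ => hcn j
    have hsum2 : ∑ j, c j = (lap f (x₀ + q) - lap f (x₀ + ρ q)) / 2 + (N + 1) := by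
      simp only [hc, Finset.sum_sub_distrib, ← Finset.sum_div, lap_eq]
      have : ∑ j : Fin n, (if j = i then M * (- 2 * ((n : ℝ) - 1)) - (N + 1) else 2 * M)
          = - (N + 1) := by
        rw [← Finset.add_sum_erase _ _ (Finset.mem_univ i)]
        rw [Finset.sum_congr rfl (g := fun _ => 2 * M)
          (fun k hk => if_neg (Finset.ne_of_mem_erase hk))]
        simp [Finset.card_erase_of_mem]
        rw [Nat.cast_sub (by have := i.2; omega)]
        push_cast; ring
      rw [this]; ring
    have a1 := abs_le.1 (hfN q hq.1)
    have a2 := abs_le.1 (hfN _ (hρa q hq.1))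
    linarith

/-- Interior gradient estimate: a bound for `f` and `Δf` on the unit cube around `x₀` bounds `∂ᵢf (x₀)`. -/
theorem pd_le_of_bound (hf : Smooth f) (x₀ : Euc n) (i : Fin n) {M N : ℝ} (hM : 0 ≤ M)
    (hN : 0 ≤ N)
    (hfM : ∀ y : Euc n, (∀ j, |y j| ≤ 1) → |f (x₀ + y)| ≤ M)
    (hfN : ∀ y : Euc n, (∀ j, |y j| ≤ 1) → |lap f (x₀ + y)| ≤ N) :
    pd i f x₀ ≤ n * M + (N + 1) / 2 := by
  classical
  have hn1 : (1 : ℝ) ≤ n := by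
    have : 1 ≤ n := by have := i.2; omega
    exact_mod_cast this
  set e : Euc n := EuclideanSpace.single i (1 : ℝ) with he
  have h1 := (((hasDerivAt_line hf.diff x₀ i 1 0).sub (hasDerivAt_line hf.diff x₀ i (-1) 0)).div_const
    2).sub ((hasDerivAt_id (0 : ℝ)).mul_const (n * M + (N + 1) / 2))
  have h2 := deriv_nonpos_of_right h1 (by simp) ?_
  · simp at h2; linarith
  intro t ht0 ht1
  have := half_cube_bound hf x₀ i hM hN hfM hfN (t • e) (fun j => by
    by_cases h : j = i
    · subst h; simp [he, abs_of_pos ht0, ht1]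
    · simp [he, h]) (by simp [he, ht0.le])
  have hs : ∑ j, (if j = i then ((t • e) i) * (n - (n - 1) * (t • e) i) else ((t • e) j) ^ 2)
      = t * (n - (n - 1) * t) := by
    rw [Finset.sum_eq_single i]
    · simp [he]
    · intro j _ hj; simp [hj, he]
    · simp
  rw [hs] at this
  have e1 : (t • e) i = t := by simp [he]
  rw [e1] at this
  have e2 : t • e - (2 * t) • e = (-1 * t) • e := by rw [← sub_smul]; congr 1; ring
  rw [e2] at this
  simp only [Pi.sub_apply, one_mul, id]
  have a1 : M * (t * (n - (n - 1) * t)) ≤ t * (n * M) := by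
    have : 0 ≤ M * ((n - 1) * t * t) := by
      have : (0 : ℝ) ≤ n - 1 := by linarith
      positivity
    nlinarith
  have a2 : (N + 1) / 2 * (t * (1 - t)) ≤ (N + 1) / 2 * t := by
    apply mul_le_mul_of_nonneg_left _ (by positivity); nlinarith
  linarith

theorem abs_pd_le_of_bound (hf : Smooth f) (x₀ : Euc n) (i : Fin n) {M N : ℝ} (hM : 0 ≤ M)
    (hN : 0 ≤ N)
    (hfM : ∀ y : Euc n, (∀ j, |y j| ≤ 1) → |f (x₀ + y)| ≤ M)
    (hfN : ∀ y : Euc n, (∀ j, |y j| ≤ 1) → |lap f (x₀ + y)| ≤ N) :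
    |pd i f x₀| ≤ n * M + (N + 1) / 2 := by
  refine abs_le.2 ⟨?_, pd_le_of_bound hf x₀ i hM hN hfM hfN⟩
  have hl : ∀ y, lap (fun x => - f x) y = - lap f y := by
    intro y
    simp only [lap_eq, pd_neg, Finset.sum_neg_distrib]
  have := pd_le_of_bound (f := fun x => - f x) hf.neg x₀ i hM hN (by simpa using hfM)
    (by simpa [hl] using hfN)
  rw [pd_neg] at this
  linarith

/-- Polynomial growth of `f` and `Δf` passes to the first derivatives, by the interior gradient
estimate. -/
theorem CP.pd_of_lap (hf : Smooth f) (h1 : CP f) (h2 : CP (lap f)) (i : Fin n) :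
    CP (_root_.pd i f) := by
  obtain ⟨c1, C, k, hC, hb⟩ := h1
  obtain ⟨c2, D, l, hD, hd⟩ := h2
  have hsq : ∀ y : Euc n, (∀ j, |y j| ≤ 1) → ‖y‖ ≤ n := by
    intro y hy
    have := EuclideanSpace.norm_eq y
    rw [this]
    have h3 : ∑ j, ‖y j‖ ^ 2 ≤ n := by
      calc ∑ j, ‖y j‖ ^ 2 ≤ ∑ j : Fin n, (1 : ℝ) := by
            refine Finset.sum_le_sum fun j _ => ?_
            have := hy j
            rw [Real.norm_eq_abs]; nlinarith [abs_nonneg (y j)]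
        _ = n := by simp
    rw [Real.sqrt_le_left (by positivity)]
    have hn1 : (1 : ℝ) ≤ n := by
      have : 1 ≤ n := by have := i.2; omega
      exact_mod_cast this
    nlinarith
  refine CP.of_le (hf.pd i).continuous (g := fun x => n * (C * (1 + (‖x‖ + n)) ^ k)
    + (D * (1 + (‖x‖ + n)) ^ l + 1) / 2) (by fun_prop) fun x => ?_
  refine abs_pd_le_of_bound hf x i (by positivity) (by positivity) (fun y hy => ?_) fun y hy => ?_
  · refine (hb _).trans ?_
    have : ‖x + y‖ ≤ ‖x‖ + n := (norm_add_le _ _).trans (by linarith [hsq y hy])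
    gcongr
  · refine (hd _).trans ?_
    have : ‖x + y‖ ≤ ‖x‖ + n := (norm_add_le _ _).trans (by linarith [hsq y hy])
    gcongr

theorem lap_pd (hf : Smooth f) (i : Fin n) : lap (pd i f) = pd i (lap f) := by
  have : lap f = fun x => ∑ j, pd j (pd j f) x := rfl
  rw [this, pd_sum _ _ (fun j => ((hf.pd j).pd j).diff)]
  ext x
  rw [lap_eq]
  refine Finset.sum_congr rfl fun j _ => ?_
  rw [pd_comm hf j i, pd_comm (hf.pd j) j i]

/-- Elliptic regularity with polynomial bounds. -/
theorem T.succ_of_lap {m : ℕ} (h1 : T m f) (h2 : T m (lap f)) : T (m + 1) f := by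
  induction m generalizing f with
  | zero => exact ⟨h1.1, h1.2, fun i => ⟨h1.1.pd i, CP.pd_of_lap h1.1 h1.2 h2.2 i⟩⟩
  | succ m ih =>
    refine ⟨h1.1, h1.2.1, fun i => ih (h1.2.2 i) ?_⟩
    rw [lap_pd h1.1]
    exact h2.2.2 i

theorem nice_of_system {u v : Euc n → ℝ} (hu : Smooth u) (hv : Smooth v)
    (hequ : ∀ x, lap u x = u x * v x ^ 2) (heqv : ∀ x, lap v x = v x * u x ^ 2)
    (cu : CP u) (cv : CP v) : Nice u ∧ Nice v := by
  have key : ∀ m, T m u ∧ T m v := by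
    intro m
    induction m with
    | zero => exact ⟨⟨hu, cu⟩, ⟨hv, cv⟩⟩
    | succ m ih =>
      obtain ⟨a, b⟩ := ih
      refine ⟨a.succ_of_lap ?_, b.succ_of_lap ?_⟩
      · rw [show lap u = fun x => u x * (v x * v x) from funext fun x => by rw [hequ]; ring]
        exact a.mul (b.mul b)
      · rw [show lap v = fun x => v x * (u x * u x) from funext fun x => by rw [heqv]; ring]
        exact b.mul (a.mul a)
  exact ⟨fun m => (key m).1, fun m => (key m).2⟩

end gradient

/-! ### Gaussian means -/

section gaussian
open Filter Topology

/-- The density of the standard Gaussian measure on `ℝⁿ`. -/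
noncomputable def gw {n : ℕ} (ξ : Euc n) : ℝ :=
  (∫ η : Euc n, Real.exp (-(1 / 2) * ‖η‖ ^ 2))⁻¹ * Real.exp (-(1 / 2) * ‖ξ‖ ^ 2)

/-- The standard Gaussian probability measure on `ℝⁿ`. -/
noncomputable def gm (n : ℕ) : Measure (Euc n) :=
  (volume : Measure (Euc n)).withDensity fun ξ => ENNReal.ofReal (gw ξ)

variable {n : ℕ}

theorem gauss_Z_pos : 0 < ∫ η : Euc n, Real.exp (-(1 / 2) * ‖η‖ ^ 2) := by
  rw [GaussianFourier.integral_rexp_neg_mul_sq_norm (by norm_num)]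
  positivity

theorem gw_pos (ξ : Euc n) : 0 < gw ξ := mul_pos (inv_pos.2 gauss_Z_pos) (Real.exp_pos _)

theorem gw_cont : Continuous (gw : Euc n → ℝ) := by unfold gw; fun_prop

theorem integrable_gauss {b : ℝ} (hb : 0 < b) :
    Integrable (fun ξ : Euc n => Real.exp (-b * ‖ξ‖ ^ 2)) := by
  have := GaussianFourier.integrable_cexp_neg_mul_sq_norm_add (b := (b : ℂ)) (V := Euc n)
    (by simpa using hb) 0 0
  have h2 := this.norm
  refine h2.congr (Eventually.of_forall fun ξ => ?_)
  simp only [Complex.norm_exp]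
  congr 1
  simp only [zero_mul, add_zero]
  rw [← Complex.ofReal_neg, ← Complex.ofReal_pow, ← Complex.ofReal_mul, Complex.ofReal_re]

theorem integrable_gw_mul {f : Euc n → ℝ} (hf : CP f) : Integrable (fun ξ => gw ξ * f ξ) := by
  obtain ⟨cf, C, k, hC, h⟩ := hf
  set Z := ∫ η : Euc n, Real.exp (-(1 / 2) * ‖η‖ ^ 2)
  have hZ : 0 < Z := gauss_Z_pos
  refine ((integrable_gauss (n := n) (b := 1 / 4) (by norm_num)).const_mul
    (Z⁻¹ * C * k.factorial * Real.exp 2)).mono' (gw_cont.mul cf).aestronglyMeasurable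
    (Eventually.of_forall fun ξ => ?_)
  rw [norm_mul, Real.norm_eq_abs, Real.norm_eq_abs, abs_of_pos (gw_pos ξ)]
  have h1 := Real.pow_div_factorial_le_exp (1 + ‖ξ‖) (by positivity) k
  rw [div_le_iff₀ (by positivity)] at h1
  have h2 : Real.exp (1 + ‖ξ‖) * Real.exp (-(1 / 2) * ‖ξ‖ ^ 2) ≤
      Real.exp 2 * Real.exp (-(1 / 4) * ‖ξ‖ ^ 2) := by
    rw [← Real.exp_add, ← Real.exp_add]
    apply Real.exp_le_exp.2
    nlinarith [sq_nonneg (‖ξ‖ - 2)]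
  calc gw ξ * |f ξ| ≤ gw ξ * (C * (1 + ‖ξ‖) ^ k) :=
        mul_le_mul_of_nonneg_left (h ξ) (gw_pos ξ).le
    _ ≤ gw ξ * (C * (Real.exp (1 + ‖ξ‖) * k.factorial)) := by
        apply mul_le_mul_of_nonneg_left _ (gw_pos ξ).le
        gcongr
    _ = Z⁻¹ * C * k.factorial * (Real.exp (1 + ‖ξ‖) * Real.exp (-(1 / 2) * ‖ξ‖ ^ 2)) := by
        simp only [gw]; ring
    _ ≤ Z⁻¹ * C * k.factorial * (Real.exp 2 * Real.exp (-(1 / 4) * ‖ξ‖ ^ 2)) := by gcongr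
    _ = _ := by ring

theorem integrable_gm_iff {f : Euc n → ℝ} :
    Integrable f (gm n) ↔ Integrable (fun ξ => gw ξ * f ξ) := by
  rw [gm, integrable_withDensity_iff_integrable_smul' (by exact gw_cont.measurable.ennreal_ofReal)
    (by simp)]
  simp only [ENNReal.toReal_ofReal (gw_pos _).le, smul_eq_mul]

theorem integral_gm (f : Euc n → ℝ) : ∫ ξ, f ξ ∂(gm n) = ∫ ξ, gw ξ * f ξ := by
  rw [gm, integral_withDensity_eq_integral_toReal_smul
    (by exact gw_cont.measurable.ennreal_ofReal) (by simp)]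
  simp only [ENNReal.toReal_ofReal (gw_pos _).le, smul_eq_mul]

theorem CP.integrable {f : Euc n → ℝ} (hf : CP f) : Integrable f (gm n) :=
  integrable_gm_iff.2 (integrable_gw_mul hf)

instance : IsProbabilityMeasure (gm n) := by
  constructor
  rw [gm, withDensity_apply _ MeasurableSet.univ, Measure.restrict_univ,
    ← ofReal_integral_eq_lintegral_ofReal]
  · simp only [gw]
    rw [integral_const_mul, inv_mul_cancel₀ gauss_Z_pos.ne', ENNReal.ofReal_one]
  · simpa using integrable_gw_mul (CP.const (n := n) 1)
  · exact Eventually.of_forall fun ξ => (gw_pos ξ).le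

/-- The Gaussian mean of `f` centred at `x` with scale `s`. -/
noncomputable def M (s : ℝ) (x : Euc n) (f : Euc n → ℝ) : ℝ := ∫ ξ, f (x + s • ξ) ∂(gm n)

section algebra
variable {f g : Euc n → ℝ} {s : ℝ} {x : Euc n}

theorem CP.int (hf : CP f) (s : ℝ) (x : Euc n) : Integrable (fun ξ => f (x + s • ξ)) (gm n) :=
  (hf.aff x s).integrable

theorem M_const (s : ℝ) (x : Euc n) (c : ℝ) : M s x (fun _ => c) = c := by simp [M]

theorem M_add (hf : CP f) (hg : CP g) : M s x (fun y => f y + g y) = M s x f + M s x g :=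
  integral_add (hf.int s x) (hg.int s x)

theorem M_sub (hf : CP f) (hg : CP g) : M s x (fun y => f y - g y) = M s x f - M s x g :=
  integral_sub (hf.int s x) (hg.int s x)

theorem M_neg : M s x (fun y => - f y) = - M s x f := integral_neg _

theorem M_const_mul (c : ℝ) : M s x (fun y => c * f y) = c * M s x f := integral_const_mul _ _

theorem M_mul_const (c : ℝ) : M s x (fun y => f y * c) = M s x f * c := integral_mul_const _ _

theorem M_div_const (c : ℝ) : M s x (fun y => f y / c) = M s x f / c := integral_div _ _

theorem M_sum {ι : Type*} (t : Finset ι) {F : ι → Euc n → ℝ} (h : ∀ i, CP (F i)) :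
    M s x (fun y => ∑ i ∈ t, F i y) = ∑ i ∈ t, M s x (F i) :=
  integral_finsetSum t fun i _ => (h i).int s x

theorem M_mono (hf : CP f) (hg : CP g) (h : ∀ y, f y ≤ g y) : M s x f ≤ M s x g :=
  integral_mono (hf.int s x) (hg.int s x) fun _ => h _

theorem M_nonneg (h : ∀ y, 0 ≤ f y) : 0 ≤ M s x f := integral_nonneg fun _ => h _

theorem M_congr (h : ∀ y, f y = g y) : M s x f = M s x g := by rw [funext h]

theorem M_pos (hf : CP f) (h : ∀ y, 0 < f y) : 0 < M s x f := by
  refine (integral_pos_iff_support_of_nonneg (fun ξ => (h _).le) (hf.int s x)).2 ?_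
  have : Function.support (fun ξ => f (x + s • ξ)) = univ := by
    ext ξ; simp [(h (x + s • ξ)).ne']
  rw [this]; simp

theorem abs_M_le (f : Euc n → ℝ) : |M s x f| ≤ M s x (fun y => |f y|) :=
  abs_integral_le_integral_abs

/-- Cauchy–Schwarz. -/
theorem M_mul_sq_le (hf : CP f) (hg : CP g) :
    M s x (fun y => f y * g y) ^ 2 ≤ M s x (fun y => f y ^ 2) * M s x (fun y => g y ^ 2) := by
  have key : ∀ t : ℝ, 0 ≤ M s x (fun y => g y ^ 2) * (t * t)
      + 2 * M s x (fun y => f y * g y) * t + M s x (fun y => f y ^ 2) := by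
    intro t
    have h0 : 0 ≤ M s x (fun y => (f y + t * g y) ^ 2) := M_nonneg fun y => sq_nonneg _
    have : M s x (fun y => (f y + t * g y) ^ 2) = M s x (fun y => f y ^ 2)
        + (2 * t) * M s x (fun y => f y * g y) + (t * t) * M s x (fun y => g y ^ 2) := by
      rw [← M_const_mul, ← M_const_mul, ← M_add (by fun_prop) (by fun_prop),
        ← M_add (by fun_prop) (by fun_prop)]
      exact M_congr fun y => by ring
    rw [this] at h0
    linarith
  have := discrim_le_zero key
  rw [discrim] at this
  linarith

theorem M_sq_le (hf : CP f) : M s x f ^ 2 ≤ M s x (fun y => f y ^ 2) := by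
  have := M_mul_sq_le (s := s) (x := x) hf (CP.const 1)
  simpa [M_const] using this

end algebra

theorem pd_gw (i : Fin n) (ξ : Euc n) : fderiv ℝ (gw : Euc n → ℝ) ξ (EuclideanSpace.single i 1)
    = - (ξ i * gw ξ) := by
  have h1 : HasFDerivAt (fun ξ : Euc n => ‖ξ‖ ^ 2) (2 • innerSL ℝ ξ) ξ :=
    (hasStrictFDerivAt_norm_sq ξ).hasFDerivAt
  have h2 := ((h1.const_mul (-(1 / 2 : ℝ))).exp).const_mul
    (∫ η : Euc n, Real.exp (-(1 / 2) * ‖η‖ ^ 2))⁻¹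
  have h3 : HasFDerivAt (gw : Euc n → ℝ) _ ξ := h2
  rw [h3.fderiv]
  simp [gw, EuclideanSpace.inner_single_right]
  ring

/-- Gaussian integration by parts on the standard space. -/
theorem gm_ibp {g : Euc n → ℝ} (i : Fin n) (hd : Differentiable ℝ g) (hg : CP g)
    (hg' : CP (pd i g)) : ∫ ξ, ξ i * g ξ ∂(gm n) = ∫ ξ, pd i g ξ ∂(gm n) := by
  rw [integral_gm, integral_gm]
  have hgw : Differentiable ℝ (gw : Euc n → ℝ) := by
    intro ξ
    have h1 : HasFDerivAt (fun ξ : Euc n => ‖ξ‖ ^ 2) (2 • innerSL ℝ ξ) ξ :=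
      (hasStrictFDerivAt_norm_sq ξ).hasFDerivAt
    have h2 := ((h1.const_mul (-(1 / 2 : ℝ))).exp).const_mul
      (∫ η : Euc n, Real.exp (-(1 / 2) * ‖η‖ ^ 2))⁻¹
    exact h2.differentiableAt
  have := integral_mul_fderiv_eq_neg_fderiv_mul_of_integrable (μ := (volume : Measure (Euc n)))
    (f := gw) (g := g) (v := EuclideanSpace.single i (1 : ℝ)) ?_ ?_ ?_ (fun x _ => hgw x)
    (fun x _ => hd x)
  · simp only [pd]
    rw [this, ← integral_neg]
    congr 1; ext ξ; rw [pd_gw]; ring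
  · simp only [pd_gw]
    have := (integrable_gw_mul (f := fun ξ => - (ξ i * g ξ)) (by fun_prop))
    refine this.congr (Eventually.of_forall fun ξ => ?_)
    simp only; ring
  · exact integrable_gw_mul hg'
  · exact integrable_gw_mul hg

theorem pd_aff {f : Euc n → ℝ} (hd : Differentiable ℝ f) (x : Euc n) (s : ℝ) (i : Fin n) :
    pd i (fun ξ => f (x + s • ξ)) = fun ξ => s * pd i f (x + s • ξ) := by
  ext ξ
  have h1 : HasFDerivAt (fun ξ : Euc n => x + s • ξ) (s • ContinuousLinearMap.id ℝ (Euc n)) ξ :=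
    ((hasFDerivAt_id ξ).const_smul s).const_add x
  have h2 := (hd (x + s • ξ)).hasFDerivAt.comp ξ h1
  have h3 : HasFDerivAt (fun ξ => f (x + s • ξ)) _ ξ := h2
  rw [pd, h3.fderiv]
  simp [pd]

theorem gm_ibp' {f : Euc n → ℝ} (i : Fin n) (hd : Differentiable ℝ f) (hf : CP f)
    (hf' : CP (pd i f)) (s : ℝ) (x : Euc n) :
    ∫ ξ, ξ i * f (x + s • ξ) ∂(gm n) = s * M s x (pd i f) := by
  rw [gm_ibp i (g := fun ξ => f (x + s • ξ)) (by fun_prop) (hf.aff x s)]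
  · rw [pd_aff hd, integral_const_mul]; rfl
  · rw [pd_aff hd]; exact (CP.const s).mul (hf'.aff x s)

/-- Gaussian integration by parts. -/
theorem M_ibp {f : Euc n → ℝ} (i : Fin n) (hd : Differentiable ℝ f) (hf : CP f)
    (hf' : CP (pd i f)) (s : ℝ) (x : Euc n) :
    M s x (fun y => (y i - x i) * f y) = s ^ 2 * M s x (pd i f) := by
  have : M s x (fun y => (y i - x i) * f y) = s * ∫ ξ, ξ i * f (x + s • ξ) ∂(gm n) := by
    rw [← integral_const_mul]
    unfold M
    congr 1; ext ξ
    simp; ring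
  rw [this, gm_ibp' i hd hf hf']; ring

end gaussian

/-! ### Differentiation of Gaussian means -/

section diffM
open Filter Topology
variable {n : ℕ}

theorem aff_bound {C R S : ℝ} {k : ℕ} (hC : 0 ≤ C) {x ξ : Euc n} {s : ℝ} (hx : ‖x‖ ≤ R)
    (hs : |s| ≤ S) :
    C * (1 + ‖x + s • ξ‖) ^ k ≤ C * (1 + R + S) ^ k * (1 + ‖ξ‖) ^ k := by
  rw [mul_assoc, ← mul_pow]
  have := norm_add_le x (s • ξ)
  rw [norm_smul, Real.norm_eq_abs] at this
  have hR : 0 ≤ R := (norm_nonneg x).trans hx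
  have h2 : |s| * ‖ξ‖ ≤ S * ‖ξ‖ := by gcongr
  gcongr
  nlinarith [norm_nonneg ξ, mul_nonneg hR (norm_nonneg ξ), (abs_nonneg s).trans hs]

/-- Polynomial bound for Gaussian means, uniform for bounded scales. -/
theorem M_bound {f : Euc n → ℝ} (hf : CP f) (S : ℝ) : ∃ C : ℝ, ∃ k : ℕ, 0 ≤ C ∧
    ∀ s x, |s| ≤ S → |M s x f| ≤ C * (1 + ‖x‖) ^ k := by
  obtain ⟨cf, C, k, hC, h⟩ := hf
  set I := ∫ ξ : Euc n, (1 + ‖ξ‖) ^ k ∂(gm n) with hI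
  have hI0 : 0 ≤ I := integral_nonneg fun ξ => by positivity
  refine ⟨C * (1 + |S|) ^ k * I, k, by positivity, fun s x hs => ?_⟩
  calc |M s x f| ≤ M s x (fun y => |f y|) := abs_M_le f
    _ ≤ ∫ ξ, C * (1 + ‖x‖ + |S|) ^ k * (1 + ‖ξ‖) ^ k ∂(gm n) := by
        refine integral_mono (CP.int ⟨cf.abs, C, k, hC, by simpa using h⟩ s x)
          (CP.integrable (by fun_prop)) fun ξ => ?_
        exact (h _).trans (aff_bound hC le_rfl (hs.trans (le_abs_self S)))
    _ = C * (1 + ‖x‖ + |S|) ^ k * I := integral_const_mul _ _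
    _ ≤ (C * ((1 + |S|) * (1 + ‖x‖)) ^ k) * I := by
        gcongr
        nlinarith [norm_nonneg x, abs_nonneg S, mul_nonneg (norm_nonneg x) (abs_nonneg S)]
    _ = _ := by rw [mul_pow]; ring

/-- The derivative of `g (x + s ξ)` in `(x, s)`. -/
noncomputable def affD (g : Euc n → ℝ) (q : Euc n × ℝ) (ξ : Euc n) : Euc n × ℝ →L[ℝ] ℝ :=
  (fderiv ℝ g (q.1 + q.2 • ξ)).comp
    (ContinuousLinearMap.fst ℝ (Euc n) ℝ + (ContinuousLinearMap.snd ℝ (Euc n) ℝ).smulRight ξ)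

theorem affD_apply (g : Euc n → ℝ) (q : Euc n × ℝ) (ξ : Euc n) (p : Euc n × ℝ) :
    affD g q ξ p = ∑ i, (p.1 i + p.2 * ξ i) * pd i g (q.1 + q.2 • ξ) := by
  simp only [affD, ContinuousLinearMap.comp_apply, add_apply,
    ContinuousLinearMap.coe_fst', ContinuousLinearMap.smulRight_apply,
    ContinuousLinearMap.coe_snd']
  rw [fderiv_eq_sum]
  simp

theorem affD_norm_le (g : Euc n → ℝ) (q : Euc n × ℝ) (ξ : Euc n) :
    ‖affD g q ξ‖ ≤ (1 + ‖ξ‖) * ∑ i, |pd i g (q.1 + q.2 • ξ)| := by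
  refine ContinuousLinearMap.opNorm_le_bound _ (by positivity) fun p => ?_
  rw [affD_apply, Real.norm_eq_abs]
  refine (Finset.abs_sum_le_sum_abs _ _).trans ?_
  rw [Finset.mul_sum, Finset.sum_mul]
  refine Finset.sum_le_sum fun i _ => ?_
  rw [abs_mul]
  have h1 : |p.1 i| ≤ ‖p‖ := (by simpa using PiLp.norm_apply_le p.1 i : |p.1 i| ≤ ‖p.1‖).trans
    (norm_fst_le p)
  have h2 : |p.2| ≤ ‖p‖ := norm_snd_le p
  have h3 : |ξ i| ≤ ‖ξ‖ := by simpa using PiLp.norm_apply_le ξ i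
  have : |p.1 i + p.2 * ξ i| ≤ (1 + ‖ξ‖) * ‖p‖ := by
    calc |p.1 i + p.2 * ξ i| ≤ |p.1 i| + |p.2| * |ξ i| := by
          rw [← abs_mul]; exact abs_add_le _ _
      _ ≤ ‖p‖ + ‖p‖ * ‖ξ‖ := by gcongr
      _ = _ := by ring
  calc |p.1 i + p.2 * ξ i| * |pd i g (q.1 + q.2 • ξ)|
      ≤ ((1 + ‖ξ‖) * ‖p‖) * |pd i g (q.1 + q.2 • ξ)| := by gcongr
    _ = _ := by ring

theorem hasFDerivAt_M {g : Euc n → ℝ} (hg : Nice g) (q : Euc n × ℝ) :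
    HasFDerivAt (fun q : Euc n × ℝ => M q.2 q.1 g) (∫ ξ, affD g q ξ ∂(gm n)) q ∧
    Integrable (affD g q) (gm n) := by
  have hsum : CP (fun y => ∑ i, |pd i g y|) := by fun_prop
  obtain ⟨-, C, k, hC, hb⟩ := hsum
  have hcd : Continuous (fderiv ℝ g) := hg.smooth.continuous_fderiv (by simp)
  have hmeas : ∀ q : Euc n × ℝ, AEStronglyMeasurable (affD g q) (gm n) := by
    intro q
    apply Continuous.aestronglyMeasurable
    unfold affD
    apply Continuous.clm_comp
    · exact hcd.comp (by fun_prop)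
    · refine continuous_const.add ?_
      exact ((ContinuousLinearMap.smulRightL ℝ (Euc n × ℝ) (Euc n))
        (ContinuousLinearMap.snd ℝ (Euc n) ℝ)).continuous
  have hbd : ∀ᵐ ξ ∂(gm n), ∀ p ∈ ball q 1, ‖affD g p ξ‖ ≤
      C * (1 + (‖q‖ + 1) + (‖q‖ + 1)) ^ k * (1 + ‖ξ‖) ^ k * (1 + ‖ξ‖) := by
    refine Eventually.of_forall fun ξ p hp => ?_
    have hpn : ‖p‖ ≤ ‖q‖ + 1 := by
      have := norm_sub_norm_le p q
      rw [mem_ball, dist_eq_norm] at hp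
      linarith
    refine (affD_norm_le g p ξ).trans ?_
    rw [mul_comm]
    gcongr
    refine ((le_abs_self _).trans (hb _)).trans ?_
    exact aff_bound hC ((norm_fst_le p).trans hpn) ((norm_snd_le p).trans hpn)
  have hbi : Integrable (fun ξ : Euc n =>
      C * (1 + (‖q‖ + 1) + (‖q‖ + 1)) ^ k * (1 + ‖ξ‖) ^ k * (1 + ‖ξ‖)) (gm n) :=
    CP.integrable (by fun_prop)
  refine ⟨?_, hbi.mono' (hmeas q) (hbd.mono fun ξ h => h q (mem_ball_self one_pos))⟩
  refine hasFDerivAt_integral_of_dominated_of_fderiv_le (ball_mem_nhds q one_pos)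
    (Eventually.of_forall fun p => (hg.cp.int p.2 p.1).aestronglyMeasurable)
    (hg.cp.int q.2 q.1) (hmeas q) hbd hbi (Eventually.of_forall fun ξ p _ => ?_)
  have h1 : HasFDerivAt (fun p : Euc n × ℝ => p.1 + p.2 • ξ)
      (ContinuousLinearMap.fst ℝ (Euc n) ℝ + (ContinuousLinearMap.snd ℝ (Euc n) ℝ).smulRight ξ) p :=
    hasFDerivAt_fst.add (hasFDerivAt_snd.smul_const ξ)
  exact (hg.diff _).hasFDerivAt.comp p h1

theorem integral_affD {g : Euc n → ℝ} (hg : Nice g) (q p : Euc n × ℝ) :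
    (∫ ξ, affD g q ξ ∂(gm n)) p =
      ∑ i, p.1 i * M q.2 q.1 (pd i g) + p.2 * q.2 * M q.2 q.1 (lap g) := by
  rw [ContinuousLinearMap.integral_apply (hasFDerivAt_M hg q).2]
  simp only [affD_apply]
  have hA : ∀ i, CP (fun ξ => pd i g (q.1 + q.2 • ξ)) := fun i => CP.aff (by fun_prop) _ _
  rw [integral_finsetSum]
  · have : lap g = fun x => ∑ i, pd i (pd i g) x := rfl
    rw [this, M_sum _ (fun i => by fun_prop), Finset.mul_sum, ← Finset.sum_add_distrib]
    refine Finset.sum_congr rfl fun i _ => ?_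
    simp only [add_mul]
    rw [integral_add]
    · rw [integral_const_mul]
      congr 1
      simp only [mul_assoc]
      rw [integral_const_mul, gm_ibp' i (hg.pd i).diff (hg.pd i).cp ((hg.pd i).pd i).cp]
    · exact CP.integrable ((CP.const _).mul (hA i))
    · exact CP.integrable (((CP.const _).mul (CP.coord i)).mul (hA i))
  · intro i _
    exact CP.integrable (((CP.const _).add ((CP.const _).mul (CP.coord i))).mul (hA i))

/-- Chain rule for Gaussian means along a curve of centres and scales. -/
theorem hasDerivAt_M_curve {g : Euc n → ℝ} (hg : Nice g) {p : ℝ → Euc n} {p' : Euc n}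
    {c : ℝ → ℝ} {c' t : ℝ} (hp : HasDerivAt p p' t) (hc : HasDerivAt c c' t) :
    HasDerivAt (fun t => M (c t) (p t) g)
      (∑ i, p' i * M (c t) (p t) (pd i g) + c' * c t * M (c t) (p t) (lap g)) t := by
  have h1 := (hasFDerivAt_M hg (p t, c t)).1
  have h2 := h1.comp_hasDerivAt t (hp.prodMk hc)
  rw [integral_affD hg] at h2
  exact h2

/-- The heat equation. -/
theorem hasDerivAt_M {g : Euc n → ℝ} (hg : Nice g) (s : ℝ) (x : Euc n) :
    HasDerivAt (fun s => M s x g) (s * M s x (lap g)) s := by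
  have := hasDerivAt_M_curve hg (hasDerivAt_const s x) (hasDerivAt_id s)
  simpa using this

theorem continuous_M {g : Euc n → ℝ} (hg : Nice g) :
    Continuous (fun q : Euc n × ℝ => M q.2 q.1 g) :=
  continuous_iff_continuousAt.2 fun q => (hasFDerivAt_M hg q).1.continuousAt

theorem M_diff_center {g : Euc n → ℝ} (hg : Nice g) (s : ℝ) (x : Euc n) :
    DifferentiableAt ℝ (fun x => M s x g) x ∧ ∀ i, pd i (fun x => M s x g) x = M s x (pd i g) := by
  have h1 := (hasFDerivAt_M hg (x, s)).1
  have h2 : HasFDerivAt (fun x : Euc n => (x, s)) (ContinuousLinearMap.inl ℝ (Euc n) ℝ) x :=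
    hasFDerivAt_prodMk_left x s
  have h3 : HasFDerivAt (fun x => M s x g)
      ((∫ ξ, affD g (x, s) ξ ∂(gm n)).comp (ContinuousLinearMap.inl ℝ (Euc n) ℝ)) x :=
    HasFDerivAt.comp (g := fun q : Euc n × ℝ => M q.2 q.1 g) x h1 h2
  refine ⟨h3.differentiableAt, fun i => ?_⟩
  rw [pd, h3.fderiv, ContinuousLinearMap.comp_apply, integral_affD hg]
  simp

theorem CP_M {g : Euc n → ℝ} (hg : Nice g) (s : ℝ) : CP (fun x => M s x g) := by
  obtain ⟨C, k, hC, h⟩ := M_bound hg.cp |s|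
  exact ⟨(continuous_M hg).comp (continuous_id.prodMk continuous_const), C, k, hC,
    fun x => h s x le_rfl⟩

/-- Change of variables: Gaussian means as weighted Lebesgue integrals. -/
theorem M_eq_integral (f : Euc n → ℝ) {s : ℝ} (hs : 0 < s) (x : Euc n) :
    M s x f = (∫ η : Euc n, Real.exp (-(1 / 2) * ‖η‖ ^ 2))⁻¹ * (s ^ n)⁻¹ *
      ∫ y, Real.exp (-(1 / 2) * (dist y x / s) ^ 2) * f y := by
  rw [M, integral_gm]
  have h1 := Measure.integral_comp_smul (volume : Measure (Euc n))
    (fun z => Real.exp (-(1 / 2) * (‖z‖ / s) ^ 2) * f (x + z)) s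
  have h2 := integral_add_left_eq_self (μ := (volume : Measure (Euc n)))
    (fun y => Real.exp (-(1 / 2) * (dist y x / s) ^ 2) * f y) x
  rw [← h2]
  simp only [dist_self_add_left]
  rw [show (Module.finrank ℝ (Euc n)) = n by simp, abs_of_pos (by positivity), smul_eq_mul] at h1
  rw [mul_assoc, ← h1, ← integral_const_mul]
  congr 1; ext ξ
  rw [norm_smul, Real.norm_eq_abs, abs_of_pos hs, mul_div_cancel_left₀ _ hs.ne', gw]
  ring

theorem CP.int_kernel {f : Euc n → ℝ} (hf : CP f) {s : ℝ} (hs : 0 < s) (x : Euc n) :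
    Integrable (fun y => Real.exp (-(1 / 2) * (Dist.dist y x / s) ^ 2) * f y) := by
  have h0 := integrable_gw_mul (hf.aff x s)
  have h1 : Integrable (fun ξ : Euc n => (fun z => Real.exp (-(1 / 2) * (‖z‖ / s) ^ 2)
      * f (x + z)) (s • ξ)) := by
    refine (h0.const_mul (∫ η : Euc n, Real.exp (-(1 / 2) * ‖η‖ ^ 2))).congr
      (Eventually.of_forall fun ξ => ?_)
    simp only [gw]
    rw [norm_smul, Real.norm_eq_abs, abs_of_pos hs, mul_div_cancel_left₀ _ hs.ne']
    rw [← mul_assoc, ← mul_assoc, mul_inv_cancel₀ (gauss_Z_pos (n := n)).ne', one_mul]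
  have h2 := (integrable_comp_smul_iff (volume : Measure (Euc n))
    (fun z => Real.exp (-(1 / 2) * (‖z‖ / s) ^ 2) * f (x + z)) hs.ne').1 h1
  have h3 := h2.comp_add_left (-x)
  refine h3.congr (Eventually.of_forall fun y => ?_)
  simp only [dist_eq_norm]
  rw [show -x + y = y - x by abel, add_sub_cancel]

/-- Kernel comparison for Gaussian means. -/
theorem M_le_of_kernel {f W : Euc n → ℝ} (hf : CP f) (hW : CP W) (hf0 : ∀ y, 0 ≤ f y)
    {s s' A : ℝ} (hs : 0 < s) (hs' : 0 < s') {x x' : Euc n}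
    (h : ∀ y, W y * Real.exp (-(1 / 2) * (dist y x / s) ^ 2) ≤
      A * Real.exp (-(1 / 2) * (dist y x' / s') ^ 2)) :
    M s x (fun y => W y * f y) ≤ A * (s' / s) ^ n * M s' x' f := by
  rw [M_eq_integral _ hs, M_eq_integral _ hs']
  have hZ := gauss_Z_pos (n := n)
  have h1 : ∫ y, Real.exp (-(1 / 2) * (dist y x / s) ^ 2) * (W y * f y) ≤
      A * ∫ y, Real.exp (-(1 / 2) * (dist y x' / s') ^ 2) * f y := by
    rw [← integral_const_mul]
    refine integral_mono (CP.int_kernel (hW.mul hf) hs x)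
      ((CP.int_kernel hf hs' x').const_mul A) fun y => ?_
    have := mul_le_mul_of_nonneg_right (h y) (hf0 y)
    simp only
    linarith
  calc _ ≤ (∫ η : Euc n, Real.exp (-(1 / 2) * ‖η‖ ^ 2))⁻¹ * (s ^ n)⁻¹ *
      (A * ∫ y, Real.exp (-(1 / 2) * (dist y x' / s') ^ 2) * f y) := by gcongr
    _ = _ := by rw [div_pow]; field_simp

end diffM

/-! ### The semigroup property and Poincaré inequalities -/

section gap
open Filter Topology
variable {n : ℕ}

theorem gm_hasDerivAt {F F' : ℝ → Euc n → ℝ} {t₀ : ℝ} {B : Euc n → ℝ} (hF : ∀ t, Continuous (F t))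
    (hFi : CP (F t₀)) (hF' : Continuous (F' t₀)) (hB : CP B) (hb : ∀ t ξ, |F' t ξ| ≤ B ξ)
    (hd : ∀ t ξ, HasDerivAt (fun t => F t ξ) (F' t ξ) t) :
    HasDerivAt (fun t => ∫ ξ, F t ξ ∂(gm n)) (∫ ξ, F' t₀ ξ ∂(gm n)) t₀ :=
  (hasDerivAt_integral_of_dominated_loc_of_deriv_le (ball_mem_nhds t₀ one_pos)
    (Eventually.of_forall fun t => (hF t).aestronglyMeasurable) hFi.integrable
    hF'.aestronglyMeasurable (Eventually.of_forall fun ξ t _ => hb t ξ) hB.integrable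
    (Eventually.of_forall fun ξ t _ => hd t ξ)).2

/-- `f` averaged at scale `σ cos θ` and evaluated at `x + σ sin θ Z`. -/
noncomputable def rot (σ : ℝ) (x : Euc n) (f : Euc n → ℝ) (θ : ℝ) (Z : Euc n) : ℝ :=
  M (σ * Real.cos θ) (x + (σ * Real.sin θ) • Z) f

variable {f : Euc n → ℝ} (σ : ℝ) (x : Euc n)

theorem rot_cp (hf : Nice f) (θ : ℝ) : CP (rot σ x f θ) := (CP_M hf _).aff x _

theorem rot_bound (hf : Nice f) : ∃ B : Euc n → ℝ, CP B ∧ (∀ Z, 0 ≤ B Z) ∧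
    ∀ θ Z, |rot σ x f θ Z| ≤ B Z := by
  obtain ⟨C, k, hC, h⟩ := M_bound hf.cp |σ|
  refine ⟨fun Z => C * (1 + ‖x‖ + |σ|) ^ k * (1 + ‖Z‖) ^ k, by fun_prop, fun Z => by positivity,
    fun θ Z => (h _ _ ?_).trans (aff_bound hC le_rfl ?_)⟩
  · rw [abs_mul]; exact mul_le_of_le_one_right (abs_nonneg _) (Real.abs_cos_le_one _)
  · rw [abs_mul]; exact mul_le_of_le_one_right (abs_nonneg _) (Real.abs_sin_le_one _)

/-- The `θ`-derivative of `rot`. -/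
noncomputable def rotD (σ : ℝ) (x : Euc n) (f : Euc n → ℝ) (θ : ℝ) (Z : Euc n) : ℝ :=
  σ * Real.cos θ * ∑ i, Z i * rot σ x (pd i f) θ Z
    - σ ^ 2 * Real.sin θ * Real.cos θ * rot σ x (lap f) θ Z

theorem rot_deriv (hf : Nice f) (θ : ℝ) (Z : Euc n) :
    HasDerivAt (fun θ => rot σ x f θ Z) (rotD σ x f θ Z) θ := by
  have h1 : HasDerivAt (fun θ => x + (σ * Real.sin θ) • Z) ((σ * Real.cos θ) • Z) θ :=
    (((Real.hasDerivAt_sin θ).const_mul σ).smul_const Z).const_add x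
  have h2 := (Real.hasDerivAt_cos θ).const_mul σ
  refine (hasDerivAt_M_curve hf h1 h2).congr_deriv ?_
  simp only [rotD, rot, Finset.mul_sum, PiLp.smul_apply, smul_eq_mul, mul_assoc]
  ring

theorem rotD_cp (hf : Nice f) (θ : ℝ) : CP (rotD σ x f θ) := by
  have h1 := fun i => rot_cp σ x (hf.pd i) θ
  have h2 := rot_cp σ x hf.lap θ
  unfold rotD
  fun_prop

theorem rotD_bound (hf : Nice f) : ∃ B : Euc n → ℝ, CP B ∧ (∀ Z, 0 ≤ B Z) ∧
    ∀ θ Z, |rotD σ x f θ Z| ≤ B Z := by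
  choose B hB hB0 hb using fun i => rot_bound σ x (hf.pd i)
  obtain ⟨D, hD, hD0, hd⟩ := rot_bound σ x hf.lap
  refine ⟨fun Z => |σ| * ∑ i, ‖Z‖ * B i Z + σ ^ 2 * D Z, by fun_prop, fun Z => ?_, fun θ Z => ?_⟩
  · have := Finset.sum_nonneg fun i (_ : i ∈ Finset.univ) =>
      mul_nonneg (norm_nonneg Z) (hB0 i Z)
    have := hD0 Z
    positivity
  · have h1 : |∑ i, Z i * rot σ x (pd i f) θ Z| ≤ ∑ i, ‖Z‖ * B i Z := by
      refine (Finset.abs_sum_le_sum_abs _ _).trans (Finset.sum_le_sum fun i _ => ?_)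
      rw [abs_mul]
      exact mul_le_mul (by simpa using PiLp.norm_apply_le Z i) (hb i θ Z) (abs_nonneg _)
        (norm_nonneg _)
    unfold rotD
    refine (abs_sub _ _).trans (add_le_add ?_ ?_)
    · rw [abs_mul, abs_mul]
      refine mul_le_mul ?_ h1 (abs_nonneg _) (abs_nonneg _)
      exact mul_le_of_le_one_right (abs_nonneg _) (Real.abs_cos_le_one _)
    · rw [abs_mul, abs_mul, abs_mul, abs_of_nonneg (sq_nonneg σ)]
      refine mul_le_mul ?_ (hd θ Z) (abs_nonneg _) (sq_nonneg _)
      rw [mul_assoc]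
      refine mul_le_of_le_one_right (sq_nonneg _) ?_
      exact mul_le_one₀ (Real.abs_sin_le_one _) (abs_nonneg _) (Real.abs_cos_le_one _)

theorem rot_ibp (hf : Nice f) (θ : ℝ) (i : Fin n) :
    ∫ Z, Z i * rot σ x f θ Z ∂(gm n) = σ * Real.sin θ * ∫ Z, rot σ x (pd i f) θ Z ∂(gm n) := by
  have h := gm_ibp' i (f := fun y => M (σ * Real.cos θ) y f) (fun y => (M_diff_center hf _ y).1)
    (CP_M hf _) (by
      rw [show pd i (fun y => M (σ * Real.cos θ) y f) = fun y => M (σ * Real.cos θ) y (pd i f) from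
        funext fun y => (M_diff_center hf _ y).2 i]
      exact CP_M (hf.pd i) _) (σ * Real.sin θ) x
  rw [show pd i (fun y => M (σ * Real.cos θ) y f) = fun y => M (σ * Real.cos θ) y (pd i f) from
        funext fun y => (M_diff_center hf _ y).2 i] at h
  exact h

theorem rot_ibp2 {g : Euc n → ℝ} (hf : Nice f) (hg : Nice g) (θ : ℝ) (i : Fin n) :
    ∫ Z, Z i * (rot σ x f θ Z * rot σ x g θ Z) ∂(gm n) =
      σ * Real.sin θ * ∫ Z, (rot σ x (pd i f) θ Z * rot σ x g θ Z
        + rot σ x f θ Z * rot σ x (pd i g) θ Z) ∂(gm n) := by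
  have hpd : pd i (fun y => M (σ * Real.cos θ) y f * M (σ * Real.cos θ) y g) = fun y =>
      M (σ * Real.cos θ) y (pd i f) * M (σ * Real.cos θ) y g
        + M (σ * Real.cos θ) y f * M (σ * Real.cos θ) y (pd i g) := by
    rw [pd_mul i (fun y => (M_diff_center hf _ y).1) (fun y => (M_diff_center hg _ y).1)]
    ext y
    rw [(M_diff_center hf _ y).2 i, (M_diff_center hg _ y).2 i]
  have h1 := CP_M hf (σ * Real.cos θ)
  have h2 := CP_M hg (σ * Real.cos θ)
  have h3 := CP_M (hf.pd i) (σ * Real.cos θ)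
  have h4 := CP_M (hg.pd i) (σ * Real.cos θ)
  have h := gm_ibp' i (f := fun y => M (σ * Real.cos θ) y f * M (σ * Real.cos θ) y g)
    (fun y => (M_diff_center hf _ y).1.mul (M_diff_center hg _ y).1) (h1.mul h2)
    (by rw [hpd]; exact (h3.mul h2).add (h1.mul h4)) (σ * Real.sin θ) x
  rw [hpd] at h
  exact h

/-- The averages `M_{σ sin θ} M_{σ cos θ} f` do not depend on `θ`. -/
theorem rot_const (hf : Nice f) (θ : ℝ) : ∫ Z, rot σ x f θ Z ∂(gm n) = M σ x f := by
  obtain ⟨B, hB, -, hb⟩ := rotD_bound σ x hf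
  have hd : ∀ θ, HasDerivAt (fun θ => ∫ Z, rot σ x f θ Z ∂(gm n)) 0 θ := by
    intro θ
    refine (gm_hasDerivAt (fun t => (rot_cp σ x hf t).cont) (rot_cp σ x hf θ)
      (rotD_cp σ x hf θ).cont hB hb (fun t Z => rot_deriv σ x hf t Z)).congr_deriv ?_
    have h1 := fun i => rot_cp σ x (hf.pd i) θ
    have h2 := rot_cp σ x hf.lap θ
    unfold rotD
    rw [integral_sub (CP.integrable (by fun_prop)) (CP.integrable (by fun_prop)),
      integral_const_mul, integral_const_mul, integral_finsetSum _ (fun i _ =>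
        CP.integrable (f := fun Z => Z i * rot σ x (pd i f) θ Z) (by fun_prop))]
    have hl : ∫ Z, rot σ x (lap f) θ Z ∂(gm n)
        = ∑ i, ∫ Z, rot σ x (pd i (pd i f)) θ Z ∂(gm n) := by
      rw [← integral_finsetSum _ (fun i _ => (rot_cp σ x ((hf.pd i).pd i) θ).integrable)]
      congr 1; ext Z
      exact M_sum (F := fun i => pd i (pd i f)) _ (fun i => ((hf.pd i).pd i).cp)
    rw [hl, Finset.sum_congr rfl (fun i _ => rot_ibp σ x (hf.pd i) θ i), ← Finset.mul_sum]
    ring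
  have hc := is_const_of_deriv_eq_zero (fun θ => (hd θ).differentiableAt)
    (fun θ => (hd θ).deriv) θ 0
  rw [hc]
  simp [rot]

/-- The semigroup property of Gaussian means. -/
theorem M_M (hf : Nice f) (s t : ℝ) :
    M s x (fun y => M t y f) = M (Real.sqrt (s ^ 2 + t ^ 2)) x f := by
  set σ := Real.sqrt (s ^ 2 + t ^ 2) with hσ
  have hσ2 : σ ^ 2 = s ^ 2 + t ^ 2 := Real.sq_sqrt (by positivity)
  have h := rot_const σ x hf (Complex.arg ⟨t, s⟩)
  have hn : ‖(⟨t, s⟩ : ℂ)‖ = σ := by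
    rw [Complex.norm_def, Complex.normSq_mk, hσ]; congr 1; ring
  have h1 : σ * Real.cos (Complex.arg ⟨t, s⟩) = t := by
    rw [← hn]; exact Complex.norm_mul_cos_arg _
  have h2 : σ * Real.sin (Complex.arg ⟨t, s⟩) = s := by
    rw [← hn]; exact Complex.norm_mul_sin_arg _
  rw [← h]
  simp only [rot, h1, h2, M]

/-- The correlation `E (E[f | Z])²`. -/
noncomputable def corr (σ : ℝ) (x : Euc n) (f : Euc n → ℝ) (θ : ℝ) : ℝ :=
  ∫ Z, rot σ x f θ Z ^ 2 ∂(gm n)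

theorem corr_nonneg (θ : ℝ) : 0 ≤ corr σ x f θ := integral_nonneg fun _ => sq_nonneg _

theorem corr_zero : corr σ x f 0 = M σ x f ^ 2 := by simp [corr, rot]

theorem corr_pi_div_two : corr σ x f (Real.pi / 2) = M σ x (fun y => f y ^ 2) := by
  simp [corr, rot, M]

theorem corr_deriv (hf : Nice f) (θ : ℝ) :
    HasDerivAt (corr σ x f) (2 * σ ^ 2 * Real.sin θ * Real.cos θ * ∑ i, corr σ x (pd i f) θ) θ := by
  obtain ⟨B, hB, hB0, hb⟩ := rotD_bound σ x hf
  obtain ⟨D, hD, hD0, hd⟩ := rot_bound σ x hf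
  have h0 := rot_cp σ x hf θ
  have h1 := fun i => rot_cp σ x (hf.pd i) θ
  have h2 := rot_cp σ x hf.lap θ
  have h3 := rotD_cp σ x hf θ
  have key := gm_hasDerivAt (n := n) (F := fun t Z => rot σ x f t Z ^ 2)
    (F' := fun t Z => 2 * rot σ x f t Z * rotD σ x f t Z) (t₀ := θ) (B := fun Z => 2 * D Z * B Z)
    (fun t => (rot_cp σ x hf t).cont.pow 2) (by fun_prop)
    (CP.cont (f := fun Z => 2 * rot σ x f θ Z * rotD σ x f θ Z) (by fun_prop)) (by fun_prop)
    (fun t Z => by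
      rw [abs_mul, abs_mul, abs_two]
      have := hd t Z
      have := hb t Z
      have := hD0 Z
      gcongr)
    (fun t Z => by
      have := (rot_deriv σ x hf t Z).pow 2
      refine this.congr_deriv ?_
      simp)
  refine HasDerivAt.congr_deriv key ?_
  have hpt : ∀ Z, 2 * rot σ x f θ Z * rotD σ x f θ Z = (2 * σ * Real.cos θ) *
      (∑ i, Z i * (rot σ x f θ Z * rot σ x (pd i f) θ Z))
      - (2 * σ ^ 2 * Real.sin θ * Real.cos θ) * (rot σ x f θ Z * rot σ x (lap f) θ Z) := by
    intro Z
    unfold rotD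
    have : ∑ i, Z i * (rot σ x f θ Z * rot σ x (pd i f) θ Z) =
        rot σ x f θ Z * ∑ i, Z i * rot σ x (pd i f) θ Z := by
      rw [Finset.mul_sum]; exact Finset.sum_congr rfl fun i _ => by ring
    rw [this]; ring
  simp only [hpt]
  rw [integral_sub (CP.integrable (by fun_prop)) (CP.integrable (by fun_prop)),
    integral_const_mul, integral_const_mul, integral_finsetSum _ (fun i _ =>
      CP.integrable (f := fun Z => Z i * (rot σ x f θ Z * rot σ x (pd i f) θ Z)) (by fun_prop))]
  have hl : ∫ Z, rot σ x f θ Z * rot σ x (lap f) θ Z ∂(gm n)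
      = ∑ i, ∫ Z, rot σ x f θ Z * rot σ x (pd i (pd i f)) θ Z ∂(gm n) := by
    rw [← integral_finsetSum _ (fun i _ =>
      (h0.mul (rot_cp σ x ((hf.pd i).pd i) θ)).integrable)]
    congr 1; ext Z
    rw [← Finset.mul_sum]
    congr 1
    exact M_sum (F := fun i => pd i (pd i f)) _ (fun i => ((hf.pd i).pd i).cp)
  rw [hl, Finset.sum_congr rfl (fun i _ => rot_ibp2 σ x hf (hf.pd i) θ i), ← Finset.mul_sum]
  have hs : ∀ i, ∫ Z, (rot σ x (pd i f) θ Z * rot σ x (pd i f) θ Z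
        + rot σ x f θ Z * rot σ x (pd i (pd i f)) θ Z) ∂(gm n) = corr σ x (pd i f) θ
        + ∫ Z, rot σ x f θ Z * rot σ x (pd i (pd i f)) θ Z ∂(gm n) := by
    intro i
    rw [integral_add ((h1 i).mul (h1 i)).integrable
      (h0.mul (rot_cp σ x ((hf.pd i).pd i) θ)).integrable]
    congr 1
    simp only [corr, sq]
  simp only [hs, Finset.sum_add_distrib]
  ring

/-- The second-order Poincaré inequality for Gaussian means. -/
theorem spectral_gap (hf : Nice f) :
    M σ x (fun y => f y ^ 2) - M σ x f ^ 2 ≤ σ ^ 2 / 2 *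
      (∑ i, M σ x (pd i f) ^ 2 + ∑ i, M σ x (fun y => pd i f y ^ 2)) := by
  set K : ℝ → ℝ := fun θ => ∑ i, corr σ x (pd i f) θ with hK
  set K2 : ℝ → ℝ := fun θ => ∑ i, ∑ j, corr σ x (pd j (pd i f)) θ with hK2
  set K3 : ℝ → ℝ := fun θ => ∑ i, ∑ j, ∑ k, corr σ x (pd k (pd j (pd i f))) θ with hK3
  set m : ℝ → ℝ := fun θ => 2 * σ ^ 2 * Real.sin θ * Real.cos θ with hm
  have dK : ∀ θ, HasDerivAt K (m θ * K2 θ) θ := by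
    intro θ
    have := HasDerivAt.fun_sum (u := Finset.univ) fun i _ => corr_deriv σ x (hf.pd i) θ
    refine this.congr_deriv ?_
    simp only [hm, hK2, Finset.mul_sum]
  have dK2 : ∀ θ, HasDerivAt K2 (m θ * K3 θ) θ := by
    intro θ
    have := HasDerivAt.fun_sum (u := Finset.univ) fun i _ =>
      HasDerivAt.fun_sum (u := Finset.univ) fun j _ => corr_deriv σ x ((hf.pd i).pd j) θ
    refine this.congr_deriv ?_
    simp only [hm, hK3, Finset.mul_sum]
  have dS : ∀ θ, HasDerivAt (fun θ => σ ^ 2 * Real.sin θ ^ 2) (m θ) θ := by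
    intro θ
    refine (((Real.hasDerivAt_sin θ).pow 2).const_mul (σ ^ 2)).congr_deriv ?_
    simp [hm]; ring
  have hI : interior (Icc 0 (Real.pi / 2)) = Ioo 0 (Real.pi / 2) := interior_Icc
  have hm0 : ∀ θ ∈ Ioo 0 (Real.pi / 2), 0 ≤ m θ := by
    intro θ hθ
    have h1 := Real.sin_nonneg_of_nonneg_of_le_pi hθ.1.le (by linarith [hθ.2, Real.pi_pos])
    have h2 := Real.cos_nonneg_of_mem_Icc ⟨by linarith [hθ.1, Real.pi_pos], hθ.2.le⟩
    simp only [hm]; positivity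
  have hK3n : ∀ θ, 0 ≤ K3 θ := fun θ => Finset.sum_nonneg fun i _ => Finset.sum_nonneg fun j _ =>
    Finset.sum_nonneg fun k _ => corr_nonneg σ x θ
  have hpi : (0 : ℝ) ≤ Real.pi / 2 := by positivity
  have step1 : AntitoneOn (fun θ => K θ - σ ^ 2 * Real.sin θ ^ 2 * K2 θ) (Icc 0 (Real.pi / 2)) := by
    have hd : ∀ θ, HasDerivAt (fun θ => K θ - σ ^ 2 * Real.sin θ ^ 2 * K2 θ)
        (- (σ ^ 2 * Real.sin θ ^ 2 * (m θ * K3 θ))) θ := fun θ => by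
      refine ((dK θ).sub ((dS θ).mul (dK2 θ))).congr_deriv ?_
      ring
    refine antitoneOn_of_deriv_nonpos (convex_Icc _ _)
      (fun θ _ => (hd θ).continuousAt.continuousWithinAt)
      (fun θ _ => (hd θ).differentiableAt.differentiableWithinAt) fun θ hθ => ?_
    rw [hI] at hθ
    rw [(hd θ).deriv]
    have := hm0 θ hθ
    have := hK3n θ
    have : 0 ≤ σ ^ 2 * Real.sin θ ^ 2 * (m θ * K3 θ) := by positivity
    linarith
  have step2 : AntitoneOn (fun θ => corr σ x f θ - σ ^ 2 * Real.sin θ ^ 2 / 2 * (K 0 + K θ))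
      (Icc 0 (Real.pi / 2)) := by
    have hd : ∀ θ, HasDerivAt (fun θ => corr σ x f θ - σ ^ 2 * Real.sin θ ^ 2 / 2 * (K 0 + K θ))
        (m θ / 2 * (K θ - K 0 - σ ^ 2 * Real.sin θ ^ 2 * K2 θ)) θ := fun θ => by
      refine ((corr_deriv σ x hf θ).sub
        (((dS θ).div_const 2).mul ((dK θ).const_add (K 0)))).congr_deriv ?_
      simp only [hK, hm]
      ring
    refine antitoneOn_of_deriv_nonpos (convex_Icc _ _)
      (fun θ _ => (hd θ).continuousAt.continuousWithinAt)
      (fun θ _ => (hd θ).differentiableAt.differentiableWithinAt) fun θ hθ => ?_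
    rw [hI] at hθ
    rw [(hd θ).deriv]
    have h1 := hm0 θ hθ
    have h2 := step1 ⟨le_rfl, hpi⟩ ⟨hθ.1.le, hθ.2.le⟩ hθ.1.le
    simp only [Real.sin_zero] at h2
    refine mul_nonpos_of_nonneg_of_nonpos (by positivity) (by linarith)
  have h3 := step2 ⟨le_rfl, hpi⟩ ⟨hpi, le_rfl⟩ hpi
  simp only [Real.sin_zero, Real.sin_pi_div_two, hK, corr_zero, corr_pi_div_two] at h3
  linarith

/-- The Gaussian Poincaré inequality. -/
theorem poincare (hf : Nice f) :
    M σ x (fun y => f y ^ 2) - M σ x f ^ 2 ≤ σ ^ 2 * ∑ i, M σ x (fun y => pd i f y ^ 2) := by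
  have h1 := spectral_gap σ x hf
  have h2 : ∑ i, M σ x (pd i f) ^ 2 ≤ ∑ i, M σ x (fun y => pd i f y ^ 2) :=
    Finset.sum_le_sum fun i _ => M_sq_le (hf.pd i).cp
  nlinarith [sq_nonneg σ]

end gap

/-! ### The frequency function -/

section monotonicity
variable {n : ℕ}

theorem mono_of_hasDeriv {f f' : ℝ → ℝ} {a b : ℝ} (hab : a ≤ b)
    (h : ∀ s ∈ Icc a b, HasDerivAt f (f' s) s) (h0 : ∀ s ∈ Icc a b, 0 ≤ f' s) : f a ≤ f b := by
  refine monotoneOn_of_deriv_nonneg (convex_Icc a b)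
    (fun s hs => (h s hs).continuousAt.continuousWithinAt)
    (fun s hs => (h s (interior_subset hs)).differentiableAt.differentiableWithinAt)
    (fun s hs => ?_) (left_mem_Icc.2 hab) (right_mem_Icc.2 hab) hab
  rw [(h s (interior_subset hs)).deriv]
  exact h0 s (interior_subset hs)

/-- Positive solutions of the system, in the class of smooth functions all of whose derivatives
grow polynomially, with linear growth. -/
structure Sol (u v : Euc n → ℝ) : Prop where
  nu : Nice u
  nv : Nice v
  pu : ∀ x, 0 < u x
  pv : ∀ x, 0 < v x
  equ : ∀ x, lap u x = u x * v x ^ 2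
  eqv : ∀ x, lap v x = v x * u x ^ 2
  growth : ∃ C₀ : ℝ, 0 < C₀ ∧ ∀ x, u x + v x ≤ C₀ * (1 + ‖x‖)

/-- The squared gradient `|∇f|²`. -/
noncomputable def gr (f : Euc n → ℝ) (y : Euc n) : ℝ := ∑ i, pd i f y ^ 2

@[fun_prop]
theorem Nice.gr {f : Euc n → ℝ} (hf : Nice f) : Nice (gr f) :=
  Nice.sum Finset.univ fun i => (hf.pd i).pow 2

theorem gr_nonneg (f : Euc n → ℝ) (y : Euc n) : 0 ≤ gr f y :=
  Finset.sum_nonneg fun _ _ => sq_nonneg _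

/-- The energy density `|∇u|² + |∇v|² + u²v²`. -/
noncomputable def en (u v : Euc n → ℝ) (y : Euc n) : ℝ := gr u y + gr v y + u y ^ 2 * v y ^ 2

@[fun_prop]
theorem Nice.en {u v : Euc n → ℝ} (hu : Nice u) (hv : Nice v) : Nice (en u v) := by
  unfold _root_.en; fun_prop

theorem en_nonneg (u v : Euc n → ℝ) (y : Euc n) : 0 ≤ en u v y := by
  have := gr_nonneg u y
  have := gr_nonneg v y
  unfold en; positivity

/-- The mean height `⟨u² + v²⟩`. -/
noncomputable def Hm (u v : Euc n → ℝ) (s : ℝ) (x : Euc n) : ℝ :=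
  M s x (fun y => u y ^ 2 + v y ^ 2)

/-- The mean energy `⟨|∇u|² + |∇v|² + u²v²⟩`. -/
noncomputable def Em (u v : Euc n → ℝ) (s : ℝ) (x : Euc n) : ℝ := M s x (en u v)

/-- The mean interaction `⟨u²v²⟩`. -/
noncomputable def Fm (u v : Euc n → ℝ) (s : ℝ) (x : Euc n) : ℝ :=
  M s x (fun y => u y ^ 2 * v y ^ 2)

/-- The frequency `s² E / H`. -/
noncomputable def Nm (u v : Euc n → ℝ) (s : ℝ) (x : Euc n) : ℝ :=
  s ^ 2 * Em u v s x / Hm u v s x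

theorem lap_sq {f : Euc n → ℝ} (hf : Smooth f) (y : Euc n) :
    lap (fun y => f y ^ 2) y = 2 * (gr f y + f y * lap f y) := by
  rw [lap_eq, lap_eq, gr, Finset.mul_sum, ← Finset.sum_add_distrib, Finset.mul_sum]
  refine Finset.sum_congr rfl fun i _ => ?_
  have hd := hf.diff
  have hd' := (hf.pd i).diff
  rw [pd_pow i 2 hd]
  have : (fun x => ((2 : ℕ) : ℝ) * f x ^ (2 - 1) * pd i f x) = fun x => 2 * (f x * pd i f x) := by
    ext x; simp; ring
  rw [this, pd_const_mul i 2 (hd.fun_mul hd'), pd_mul i hd hd']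
  ring

theorem lap_add {f g : Euc n → ℝ} (hf : Smooth f) (hg : Smooth g) (y : Euc n) :
    lap (fun y => f y + g y) y = lap f y + lap g y := by
  simp only [lap_eq, ← Finset.sum_add_distrib]
  refine Finset.sum_congr rfl fun i _ => ?_
  rw [pd_add i hf.diff hg.diff, pd_add i (hf.pd i).diff (hg.pd i).diff]

theorem lap_sub {f g : Euc n → ℝ} (hf : Smooth f) (hg : Smooth g) (y : Euc n) :
    lap (fun y => f y - g y) y = lap f y - lap g y := by
  simp only [lap_eq, ← Finset.sum_sub_distrib]
  refine Finset.sum_congr rfl fun i _ => ?_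
  rw [pd_sub i hf.diff hg.diff, pd_sub i (hf.pd i).diff (hg.pd i).diff]

theorem M_lap {g : Euc n → ℝ} (hg : Nice g) (s : ℝ) (x : Euc n) :
    M s x (fun y => ∑ i, (y i - x i) * pd i g y) = s ^ 2 * M s x (lap g) := by
  rw [M_sum (F := fun i y => (y i - x i) * pd i g y) _ (fun i => by fun_prop)]
  rw [Finset.sum_congr rfl (fun i _ => M_ibp i (hg.pd i).diff (hg.pd i).cp ((hg.pd i).pd i).cp s x),
    ← Finset.mul_sum, ← M_sum _ (fun i => ((hg.pd i).pd i).cp)]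
  rfl

/-- The stress identity behind the Pohozaev formula. -/
theorem M_stress {g : Euc n → ℝ} (hg : Nice g) (s : ℝ) (x : Euc n) :
    M s x (fun y => (∑ i, (y i - x i) * pd i g y) ^ 2) = s ^ 2 * (M s x (gr g)
      + M s x (fun y => ∑ j, (y j - x j) * (lap g y * pd j g y + pd j (gr g) y / 2))) := by
  have hc : ∀ i j, Nice (fun y : Euc n => (y j - x j) * (pd i g y * pd j g y)) := by
    intro i j; fun_prop
  have e1 : ∀ y, (∑ i, (y i - x i) * pd i g y) ^ 2
      = ∑ i, ∑ j, (y i - x i) * ((y j - x j) * (pd i g y * pd j g y)) := by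
    intro y
    rw [sq, Finset.sum_mul_sum]
    refine Finset.sum_congr rfl fun i _ => Finset.sum_congr rfl fun j _ => by ring
  have hpd : ∀ i j, pd i (fun y : Euc n => (y j - x j) * (pd i g y * pd j g y)) = fun y =>
      (if i = j then 1 else 0) * (pd i g y * pd j g y)
      + (y j - x j) * (pd i (pd i g) y * pd j g y + pd i g y * pd j (pd i g) y) := by
    intro i j
    have d1 := (hg.pd i).diff
    have d2 := (hg.pd j).diff
    rw [pd_mul i (f := fun y : Euc n => y j - x j) (by fun_prop) (d1.fun_mul d2), pd_sub i (diff_coord j) (by fun_prop), pd_coord,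
      pd_const, pd_mul i d1 d2, pd_comm hg.smooth i j]
    simp
  have hgr : ∀ j y, pd j (gr g) y / 2 = ∑ i, pd i g y * pd j (pd i g) y := by
    intro j y
    have : gr g = fun y => ∑ i, pd i g y ^ 2 := rfl
    rw [this, pd_sum j _ (fun i => (hg.pd i).diff.fun_pow 2), Finset.sum_div]
    refine Finset.sum_congr rfl fun i _ => ?_
    rw [pd_pow j 2 (hg.pd i).diff]; simp; ring
  rw [M_congr e1, M_sum (F := fun i y => ∑ j, (y i - x i) * ((y j - x j) * (pd i g y * pd j g y))) _
    (fun i => CP.sum _ fun j => by fun_prop)]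
  have e2 : ∀ i, M s x (fun y => ∑ j, (y i - x i) * ((y j - x j) * (pd i g y * pd j g y)))
      = s ^ 2 * M s x (fun y => ∑ j, ((if i = j then 1 else 0) * (pd i g y * pd j g y)
      + (y j - x j) * (pd i (pd i g) y * pd j g y + pd i g y * pd j (pd i g) y))) := by
    intro i
    rw [M_sum (F := fun j y => (y i - x i) * ((y j - x j) * (pd i g y * pd j g y))) _
      (fun j => by fun_prop), M_sum (F := fun j y => (if i = j then 1 else 0) * (pd i g y * pd j g y)
      + (y j - x j) * (pd i (pd i g) y * pd j g y + pd i g y * pd j (pd i g) y)) _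
      (fun j => by fun_prop), Finset.mul_sum]
    refine Finset.sum_congr rfl fun j _ => ?_
    rw [M_ibp i (hc i j).diff (hc i j).cp ((hc i j).pd i).cp, hpd]
  rw [Finset.sum_congr rfl (fun i _ => e2 i), ← Finset.mul_sum, ← M_sum _ (fun i => CP.sum _ fun j => by
    fun_prop), ← M_add (by fun_prop) (CP.sum _ fun j => by fun_prop)]
  congr 1
  refine M_congr fun y => ?_
  simp only [Finset.sum_add_distrib, hgr]
  congr 1
  · simp [gr, sq]
  · rw [Finset.sum_comm]
    refine Finset.sum_congr rfl fun j _ => ?_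
    rw [← Finset.mul_sum, Finset.sum_add_distrib, ← Finset.sum_mul, lap_eq]

namespace Sol
variable {u v : Euc n → ℝ}

theorem swap (h : Sol u v) : Sol v u :=
  ⟨h.nv, h.nu, h.pv, h.pu, h.eqv, h.equ, by simpa [add_comm] using h.growth⟩

theorem en_swap (y : Euc n) : en u v y = en v u y := by unfold en; ring

theorem Hm_swap (s : ℝ) (x : Euc n) : Hm u v s x = Hm v u s x := M_congr fun y => by ring

theorem Em_swap (s : ℝ) (x : Euc n) : Em u v s x = Em v u s x := M_congr fun y => en_swap y

theorem Fm_swap (s : ℝ) (x : Euc n) : Fm u v s x = Fm v u s x := M_congr fun y => by ring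

variable (h : Sol u v)
include h

theorem nF : Nice (fun y => u y ^ 2 * v y ^ 2) := by
  have := h.nu; have := h.nv; fun_prop

theorem nH : Nice (fun y => u y ^ 2 + v y ^ 2) := by
  have := h.nu; have := h.nv; fun_prop

theorem nE : Nice (en u v) := h.nu.en h.nv

theorem Hpos (s : ℝ) (x : Euc n) : 0 < Hm u v s x :=
  M_pos h.nH.cp fun y => by have := h.pu y; positivity

theorem Fpos (s : ℝ) (x : Euc n) : 0 < Fm u v s x :=
  M_pos h.nF.cp fun y => by have := h.pu y; have := h.pv y; positivity

theorem F_le_E (s : ℝ) (x : Euc n) : Fm u v s x ≤ Em u v s x :=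
  M_mono h.nF.cp h.nE.cp fun y => by
    have := gr_nonneg u y
    have := gr_nonneg v y
    unfold en; linarith

theorem Epos (s : ℝ) (x : Euc n) : 0 < Em u v s x := (h.Fpos s x).trans_le (h.F_le_E s x)

theorem Npos {s : ℝ} (hs : 0 < s) (x : Euc n) : 0 < Nm u v s x := by
  have := h.Epos s x; have := h.Hpos s x
  unfold Nm; positivity

theorem hasDeriv_p (s : ℝ) (x : Euc n) : HasDerivAt (fun s => M s x (fun y => u y ^ 2))
    (2 * s * (M s x (gr u) + Fm u v s x)) s := by
  have hu := h.nu; have hv := h.nv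
  refine (hasDerivAt_M (h.nu.pow 2) s x).congr_deriv ?_
  rw [Fm, ← M_add (by fun_prop) (by fun_prop)]
  have : ∀ y, lap (fun y => u y ^ 2) y = 2 * (gr u y + u y ^ 2 * v y ^ 2) := by
    intro y; rw [lap_sq hu.smooth, h.equ]; ring
  rw [M_congr this, M_const_mul]; ring

theorem E_eq (s : ℝ) (x : Euc n) : Em u v s x = M s x (gr u) + M s x (gr v) + Fm u v s x := by
  have hu := h.nu; have hv := h.nv
  unfold Em en Fm
  rw [M_add (by fun_prop) (by fun_prop), M_add (by fun_prop) (by fun_prop)]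

theorem H_eq (s : ℝ) (x : Euc n) :
    Hm u v s x = M s x (fun y => u y ^ 2) + M s x (fun y => v y ^ 2) := by
  have hu := h.nu; have hv := h.nv
  unfold Hm
  rw [M_add (by fun_prop) (by fun_prop)]

theorem hasDeriv_H (s : ℝ) (x : Euc n) : HasDerivAt (fun s => Hm u v s x)
    (2 * s * (Em u v s x + Fm u v s x)) s := by
  have h1 := (h.hasDeriv_p s x).add (h.swap.hasDeriv_p s x)
  have e : (fun s => Hm u v s x) = (fun s => M s x (fun y => u y ^ 2))
      + (fun s => M s x (fun y => v y ^ 2)) := by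
    ext s; exact h.H_eq s x
  rw [e]
  refine h1.congr_deriv ?_
  rw [h.E_eq, Fm_swap (u := v)]; ring

/-- The Pohozaev identity. -/
theorem pohozaev (s : ℝ) (x : Euc n) :
    M s x (fun y => (∑ i, (y i - x i) * pd i u y) ^ 2) +
      M s x (fun y => (∑ i, (y i - x i) * pd i v y) ^ 2) + s ^ 2 * Fm u v s x
    = s ^ 2 * Em u v s x + s ^ 4 / 2 * M s x (lap (en u v)) := by
  have hu := h.nu; have hv := h.nv
  have hF := h.nF
  have cl : ∀ g, Nice g → CP (fun y => ∑ j, (y j - x j) * (lap g y * pd j g y + pd j (gr g) y / 2)) :=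
    fun g hg => by
      have := hg.gr
      exact CP.sum _ fun j => by fun_prop
  rw [M_stress hu, M_stress hv, h.E_eq]
  have key : M s x (fun y => ∑ j, (y j - x j) * (lap u y * pd j u y + pd j (gr u) y / 2)) +
      M s x (fun y => ∑ j, (y j - x j) * (lap v y * pd j v y + pd j (gr v) y / 2))
      = s ^ 2 / 2 * M s x (lap (en u v)) := by
    rw [← M_add (cl u hu) (cl v hv)]
    have := M_lap h.nE s x
    have e : s ^ 2 / 2 * M s x (lap (en u v)) = (s ^ 2 * M s x (lap (en u v))) * (1 / 2) := by ring
    rw [e, ← this, ← M_mul_const]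
    refine M_congr fun y => ?_
    rw [← Finset.sum_add_distrib, Finset.sum_mul]
    refine Finset.sum_congr rfl fun j _ => ?_
    have e3 : pd j (en u v) y = pd j (gr u) y + pd j (gr v) y
        + (2 * u y * pd j u y * v y ^ 2 + u y ^ 2 * (2 * v y * pd j v y)) := by
      have : en u v = fun y => (gr u y + gr v y) + u y ^ 2 * v y ^ 2 := rfl
      rw [this, pd_add j (hu.gr.add hv.gr).diff hF.diff, pd_add j hu.gr.diff hv.gr.diff,
        pd_mul j (hu.pow 2).diff (hv.pow 2).diff, pd_pow j 2 hu.diff, pd_pow j 2 hv.diff]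
      simp
    rw [e3, h.equ, h.eqv]; ring
  linear_combination s ^ 2 * key

theorem T_eq (s : ℝ) (x : Euc n) :
    M s x (fun y => u y * (∑ i, (y i - x i) * pd i u y) + v y * (∑ i, (y i - x i) * pd i v y))
      = s ^ 2 * (Em u v s x + Fm u v s x) := by
  have hu := h.nu; have hv := h.nv
  have h1 := M_lap h.nH s x
  have h2 : ∀ y, lap (fun y => u y ^ 2 + v y ^ 2) y = 2 * (en u v y + u y ^ 2 * v y ^ 2) := by
    intro y
    rw [lap_add (hu.pow 2).smooth (hv.pow 2).smooth, lap_sq hu.smooth, lap_sq hv.smooth, h.equ, h.eqv]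
    unfold en; ring
  rw [M_congr h2, M_const_mul, M_add (by fun_prop) (by fun_prop)] at h1
  have h3 : ∀ y : Euc n, ∑ i, (y i - x i) * pd i (fun y => u y ^ 2 + v y ^ 2) y = 2 *
      (u y * (∑ i, (y i - x i) * pd i u y) + v y * (∑ i, (y i - x i) * pd i v y)) := by
    intro y
    rw [Finset.mul_sum, Finset.mul_sum, ← Finset.sum_add_distrib, Finset.mul_sum]
    refine Finset.sum_congr rfl fun i _ => ?_
    rw [pd_add i (hu.pow 2).diff (hv.pow 2).diff, pd_pow i 2 hu.diff, pd_pow i 2 hv.diff]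
    simp; ring
  rw [M_congr h3, M_const_mul] at h1
  unfold Em Fm
  linarith

theorem T_sq_le (s : ℝ) (x : Euc n) :
    (s ^ 2 * (Em u v s x + Fm u v s x)) ^ 2 ≤ Hm u v s x *
    (M s x (fun y => (∑ i, (y i - x i) * pd i u y) ^ 2) +
      M s x (fun y => (∑ i, (y i - x i) * pd i v y) ^ 2)) := by
  have hu := h.nu; have hv := h.nv
  have cu : CP (fun y => (∑ i, (y i - x i) * pd i u y)) := CP.sum _ fun j => by fun_prop
  have cv : CP (fun y => (∑ i, (y i - x i) * pd i v y)) := CP.sum _ fun j => by fun_prop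
  rw [← h.T_eq]
  set A := fun y => ∑ i, (y i - x i) * pd i u y with hA
  set B := fun y => ∑ i, (y i - x i) * pd i v y with hB
  have key : ∀ t : ℝ, 0 ≤ Hm u v s x * (t * t)
      + 2 * M s x (fun y => u y * A y + v y * B y) * t
      + (M s x (fun y => A y ^ 2) + M s x (fun y => B y ^ 2)) := by
    intro t
    have h0 : 0 ≤ M s x (fun y => (t * u y + A y) ^ 2 + (t * v y + B y) ^ 2) :=
      M_nonneg fun y => by positivity
    have e : M s x (fun y => (t * u y + A y) ^ 2 + (t * v y + B y) ^ 2)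
        = (t * t) * M s x (fun y => u y ^ 2 + v y ^ 2)
          + (2 * t) * M s x (fun y => u y * A y + v y * B y)
        + (M s x (fun y => A y ^ 2) + M s x (fun y => B y ^ 2)) := by
      rw [← M_const_mul, ← M_const_mul, ← M_add (f := fun y => A y ^ 2) (by fun_prop) (by fun_prop),
        ← M_add (by fun_prop) (by fun_prop), ← M_add (by fun_prop) (by fun_prop)]
      exact M_congr fun y => by ring
    rw [e] at h0
    unfold Hm
    linarith
  have := discrim_le_zero key
  rw [discrim] at this
  linarith

theorem hasDeriv_E (s : ℝ) (x : Euc n) :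
    HasDerivAt (fun s => Em u v s x) (s * M s x (lap (en u v))) s := hasDerivAt_M h.nE s x

/-- The frequency is nondecreasing, with a quantitative lower bound for its derivative. -/
theorem hasDeriv_N {s : ℝ} (hs : 0 < s) (x : Euc n) :
    ∃ N', HasDerivAt (fun s => Nm u v s x) N' s ∧ 2 * s * Fm u v s x / Hm u v s x ≤ N' := by
  have hH := h.Hpos s x
  have hE := h.Epos s x
  have hF := h.Fpos s x
  have d1 := ((hasDerivAt_pow 2 s).mul (h.hasDeriv_E s x)).div (h.hasDeriv_H s x) hH.ne'
  refine ⟨_, d1, ?_⟩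
  rw [div_le_div_iff₀ hH (by positivity)]
  have hp := h.pohozaev s x
  have hT := h.T_sq_le s x
  set Q := M s x (fun y => (∑ i, (y i - x i) * pd i u y) ^ 2) +
      M s x (fun y => (∑ i, (y i - x i) * pd i v y) ^ 2)
  set L := M s x (lap (en u v))
  set H := Hm u v s x
  set E := Em u v s x
  set F := Fm u v s x
  have e1 : s * (((2:ℕ) * s ^ (2 - 1) * E + s ^ 2 * (s * L)) * H
      - s ^ 2 * E * (2 * s * (E + F))) = 2 * (Q + s ^ 2 * F) * H - 2 * s ^ 4 * E * (E + F) := by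
    rw [hp]; simp; ring
  have e2 : s * (2 * s * F * H) ≤ s * (((2:ℕ) * s ^ (2 - 1) * E + s ^ 2 * (s * L)) * H
      - s ^ 2 * E * (2 * s * (E + F))) := by
    rw [e1]
    have : 0 ≤ s ^ 4 * (E + F) * F := by positivity
    nlinarith
  have e3 := le_of_mul_le_mul_left e2 hs
  calc 2 * s * F * H ^ 2 = (2 * s * F * H) * H := by ring
    _ ≤ _ := by
      refine mul_le_mul_of_nonneg_right (e3.trans (le_of_eq ?_)) hH.le
      rfl

theorem N_mono {s t : ℝ} (hs : 0 < s) (hst : s ≤ t) (x : Euc n) : Nm u v s x ≤ Nm u v t x := by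
  choose! N' hN using fun r (hr : 0 < r) => h.hasDeriv_N hr x
  refine mono_of_hasDeriv (f' := N') hst (fun r hr => (hN r (hs.trans_le hr.1)).1) fun r hr => ?_
  have h0 := hs.trans_le hr.1
  refine le_trans ?_ (hN r h0).2
  have := h.Fpos r x; have := h.Hpos r x
  positivity

theorem hasDeriv_logH (s : ℝ) (x : Euc n) : HasDerivAt (fun s => Real.log (Hm u v s x))
    (2 * s * (Em u v s x + Fm u v s x) / Hm u v s x) s :=
  (h.hasDeriv_H s x).log (h.Hpos s x).ne'

/-- Growth of `H` from below in terms of the frequency. -/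
theorem logH_lower {s t : ℝ} (hs : 0 < s) (hst : s ≤ t) (x : Euc n) :
    Real.log (Hm u v s x) + 2 * Nm u v s x * (Real.log t - Real.log s) ≤ Real.log (Hm u v t x) := by
  have := mono_of_hasDeriv (f := fun r => Real.log (Hm u v r x) - 2 * Nm u v s x * Real.log r)
    (f' := fun r => 2 * r * (Em u v r x + Fm u v r x) / Hm u v r x - 2 * Nm u v s x * r⁻¹) hst
    (fun r hr => (h.hasDeriv_logH r x).sub
      ((Real.hasDerivAt_log (hs.trans_le hr.1).ne').const_mul _)) ?_
  · linarith
  · intro r hr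
    have h0 := hs.trans_le hr.1
    have hN := h.N_mono hs hr.1 x
    have hH := h.Hpos r x
    have hF := h.Fpos r x
    have : 2 * r * (Em u v r x + Fm u v r x) / Hm u v r x
        = 2 * Nm u v r x * r⁻¹ + 2 * r * Fm u v r x / Hm u v r x := by
      unfold Nm; field_simp
    rw [this]
    have : 0 ≤ 2 * r * Fm u v r x / Hm u v r x := by positivity
    have : Nm u v s x * r⁻¹ ≤ Nm u v r x * r⁻¹ := by gcongr
    linarith

/-- Growth of `H` from above in terms of the frequency. -/
theorem logH_upper {s t : ℝ} (hs : 0 < s) (hst : s ≤ t) (x : Euc n) :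
    Real.log (Hm u v t x) ≤ Real.log (Hm u v s x) + 4 * Nm u v t x * (Real.log t - Real.log s) := by
  have := mono_of_hasDeriv (f := fun r => 4 * Nm u v t x * Real.log r - Real.log (Hm u v r x))
    (f' := fun r => 4 * Nm u v t x * r⁻¹ - 2 * r * (Em u v r x + Fm u v r x) / Hm u v r x) hst
    (fun r hr => ((Real.hasDerivAt_log (hs.trans_le hr.1).ne').const_mul _).sub
      (h.hasDeriv_logH r x)) ?_
  · linarith
  · intro r hr
    have h0 := hs.trans_le hr.1
    have hN := h.N_mono h0 hr.2 x
    have hH := h.Hpos r x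
    have hF := h.Fpos r x
    have hFE := h.F_le_E r x
    have e1 : 2 * r * (Em u v r x + Fm u v r x) / Hm u v r x
        ≤ 4 * Nm u v r x * r⁻¹ := by
      have : 4 * Nm u v r x * r⁻¹ = 2 * r * (Em u v r x + Em u v r x) / Hm u v r x := by
        unfold Nm; field_simp; ring
      rw [this]; gcongr
    have : Nm u v r x * r⁻¹ ≤ Nm u v t x * r⁻¹ := by gcongr
    linarith

theorem H_growth (x : Euc n) : ∃ C : ℝ, 0 < C ∧ ∀ s, 1 ≤ s → Hm u v s x ≤ C * s ^ 2 := by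
  obtain ⟨C₀, hC₀, hg⟩ := h.growth
  set I := ∫ ξ : Euc n, (1 + ‖ξ‖) ^ 2 ∂(gm n) with hI
  have hI0 : 0 ≤ I := integral_nonneg fun ξ => by positivity
  refine ⟨C₀ ^ 2 * (1 + ‖x‖) ^ 2 * (I + 1), by positivity, fun s hs => ?_⟩
  have e : Hm u v s x ≤ ∫ ξ : Euc n, C₀ ^ 2 * (1 + ‖x‖) ^ 2 * s ^ 2 * (1 + ‖ξ‖) ^ 2 ∂(gm n) := by
    refine integral_mono (h.nH.cp.int s x) (CP.integrable (by fun_prop)) fun ξ => ?_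
    simp only
    have h1 := hg (x + s • ξ)
    have h2 := h.pu (x + s • ξ)
    have h3 := h.pv (x + s • ξ)
    have h4 : 1 + ‖x + s • ξ‖ ≤ (1 + ‖x‖) * s * (1 + ‖ξ‖) := by
      have := norm_add_le x (s • ξ)
      rw [norm_smul, Real.norm_of_nonneg (by linarith)] at this
      have hx := norm_nonneg x
      have hξ := norm_nonneg ξ
      nlinarith [mul_nonneg hx hξ, mul_nonneg (mul_nonneg hx hξ) (by linarith : 0 ≤ s), mul_nonneg hx (by linarith : 0 ≤ s - 1)]
    have h5 : u (x + s • ξ) + v (x + s • ξ) ≤ C₀ * ((1 + ‖x‖) * s * (1 + ‖ξ‖)) :=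
      h1.trans (by gcongr)
    calc u (x + s • ξ) ^ 2 + v (x + s • ξ) ^ 2 ≤ (u (x + s • ξ) + v (x + s • ξ)) ^ 2 := by
          nlinarith
      _ ≤ (C₀ * ((1 + ‖x‖) * s * (1 + ‖ξ‖))) ^ 2 := by gcongr
      _ = _ := by ring
  rw [integral_const_mul, ← hI] at e
  refine e.trans ?_
  have : 0 ≤ C₀ ^ 2 * (1 + ‖x‖) ^ 2 * s ^ 2 := by positivity
  nlinarith

theorem N_le_one {s : ℝ} (hs : 0 < s) (x : Euc n) : Nm u v s x ≤ 1 := by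
  by_contra! hN
  obtain ⟨C, hC, hg⟩ := h.H_growth x
  set ε := Nm u v s x - 1 with hε
  have hε0 : 0 < ε := by simp only [hε]; linarith
  set A := Real.log C - Real.log (Hm u v s x) + 2 * (1 + ε) * Real.log s with hA
  have key : ∀ t, 1 ≤ t → s ≤ t → 2 * ε * Real.log t ≤ A := by
    intro t h1 hst
    have e1 := h.logH_lower hs hst x
    have e2 := Real.log_le_log (h.Hpos t x) (hg t h1)
    rw [Real.log_mul hC.ne' (by positivity), Real.log_pow] at e2
    have : Nm u v s x = 1 + ε := by simp [hε]
    rw [this] at e1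
    push_cast at e2
    simp only [hA]
    nlinarith
  have h1 := key (max (max 1 s) (Real.exp ((|A| + 1) / (2 * ε)))) (by simp) (by simp)
  have h2 : (|A| + 1) / (2 * ε) ≤ Real.log (max (max 1 s) (Real.exp ((|A| + 1) / (2 * ε)))) := by
    rw [Real.le_log_iff_exp_le (by positivity)]
    exact le_max_right _ _
  rw [div_le_iff₀ (by positivity)] at h2
  have := le_abs_self A
  linarith

theorem E_le {s : ℝ} (hs : 0 < s) (x : Euc n) : s ^ 2 * Em u v s x ≤ Hm u v s x := by
  have := h.N_le_one hs x
  rwa [Nm, div_le_one (h.Hpos s x)] at this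

theorem H_mono {s t : ℝ} (hs : 0 < s) (hst : s ≤ t) (x : Euc n) : Hm u v s x ≤ Hm u v t x :=
  mono_of_hasDeriv (f := fun s => Hm u v s x) hst (fun r _ => h.hasDeriv_H r x) fun r hr => by
    have := hs.trans_le hr.1
    have := h.Epos r x; have := h.Fpos r x
    positivity

/-- `H / s²` is almost nonincreasing. -/
theorem h_anti {s t : ℝ} (hs : 0 < s) (hst : s ≤ t) (x : Euc n) :
    Hm u v t x * s ^ 2 ≤ 3 * Hm u v s x * t ^ 2 := by
  have ht := hs.trans_le hst
  choose! N' hN using fun r (hr : 0 < r) => h.hasDeriv_N hr x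
  have := mono_of_hasDeriv (f := fun r => Nm u v r x + 2 * Real.log r - Real.log (Hm u v r x))
    (f' := fun r => N' r + 2 * r⁻¹ - 2 * r * (Em u v r x + Fm u v r x) / Hm u v r x) hst
    (fun r hr => ((hN r (hs.trans_le hr.1)).1.add
      ((Real.hasDerivAt_log (hs.trans_le hr.1).ne').const_mul _)).sub (h.hasDeriv_logH r x)) ?_
  · have h1 := h.N_le_one ht x
    have h2 := h.Npos hs x
    have hH := h.Hpos s x
    have hH' := h.Hpos t x
    have h3 : Real.log (Hm u v t x * s ^ 2) ≤ Real.log (Real.exp 1 * Hm u v s x * t ^ 2) := by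
      rw [Real.log_mul hH'.ne' (by positivity), Real.log_mul (by positivity) (by positivity),
        Real.log_mul (by positivity) (by positivity), Real.log_pow, Real.log_pow, Real.log_exp]
      push_cast
      linarith
    have h4 := (Real.log_le_log_iff (by positivity) (by positivity)).1 h3
    refine h4.trans ?_
    have : Real.exp 1 ≤ 3 := by have := Real.exp_one_lt_d9; linarith
    gcongr
  · intro r hr
    have h0 := hs.trans_le hr.1
    have h1 := (hN r h0).2
    have h2 := h.N_le_one h0 x
    have hH := h.Hpos r x
    have : 2 * r * (Em u v r x + Fm u v r x) / Hm u v r x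
        = 2 * Nm u v r x * r⁻¹ + 2 * r * Fm u v r x / Hm u v r x := by
      unfold Nm; field_simp
    rw [this]
    have : Nm u v r x * r⁻¹ ≤ 1 * r⁻¹ := by gcongr
    linarith

end Sol
end monotonicity

/-! ### Growth and segregation estimates -/

section compare
variable {n : ℕ}

/-- A polynomial weight is absorbed by the Gaussian kernel of twice the width. -/
theorem M_weight (n k : ℕ) : ∃ C : ℝ, 0 < C ∧ ∀ (f : Euc n → ℝ), CP f → (∀ y, 0 ≤ f y) →
    ∀ s > 0, ∀ x, M s x (fun y => (1 + dist y x / s) ^ k * f y) ≤ C * M (2 * s) x f := by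
  refine ⟨k.factorial * Real.exp 3 * 2 ^ n, by positivity, fun f hf hf0 s hs x => ?_⟩
  have := M_le_of_kernel (f := f) (W := fun y => (1 + dist y x / s) ^ k)
    (A := k.factorial * Real.exp 3) hf (by fun_prop) hf0 hs (by positivity : 0 < 2 * s)
    (x := x) (x' := x) ?_
  · refine this.trans (le_of_eq ?_)
    have : 2 * s / s = 2 := by field_simp
    rw [this]
  · intro y
    set r := dist y x / s with hr
    have hr0 : 0 ≤ r := by positivity
    have e : dist y x / (2 * s) = r / 2 := by rw [hr]; field_simp
    rw [e]
    have h1 := Real.pow_div_factorial_le_exp (1 + r) (by positivity) k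
    rw [div_le_iff₀ (by positivity)] at h1
    calc (1 + r) ^ k * Real.exp (-(1 / 2) * r ^ 2)
        ≤ (Real.exp (1 + r) * k.factorial) * Real.exp (-(1 / 2) * r ^ 2) := by gcongr
      _ = k.factorial * Real.exp (1 + r + (-(1 / 2) * r ^ 2)) := by
          rw [Real.exp_add (1 + r)]; ring
      _ ≤ k.factorial * Real.exp (3 + (-(1 / 2) * (r / 2) ^ 2)) := by
          refine mul_le_mul_of_nonneg_left (Real.exp_le_exp.2 ?_) (by positivity)
          nlinarith [sq_nonneg (3 * r - 4)]
      _ = _ := by rw [Real.exp_add]; ring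

/-- Moving the center by at most the scale costs a factor two in the scale. -/
theorem M_center {f : Euc n → ℝ} (hf : CP f) (hf0 : ∀ y, 0 ≤ f y) {s : ℝ} (hs : 0 < s)
    {x y : Euc n} (hxy : dist y x ≤ s) : M s y f ≤ 2 ^ (n + 1) * M (2 * s) x f := by
  have := M_le_of_kernel (f := f) (W := fun _ => 1) (A := 2) hf (by fun_prop) hf0 hs
    (by positivity : 0 < 2 * s) (x := y) (x' := x) ?_
  · simp only [one_mul] at this
    refine this.trans (le_of_eq ?_)
    have : 2 * s / s = 2 := by field_simp
    rw [this]; ring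
  · intro Y
    have h1 : dist Y x ≤ dist Y y + s := (dist_triangle Y y x).trans (by gcongr)
    have h2 : dist Y x / (2 * s) ≤ (dist Y y / s + 1) / 2 := by
      rw [div_le_iff₀ (by positivity)]
      calc dist Y x ≤ dist Y y + s := h1
        _ = _ := by field_simp
    set r := dist Y y / s
    have hr : 0 ≤ r := by positivity
    have h3 : 0 ≤ dist Y x / (2 * s) := by positivity
    set ρ := dist Y x / (2 * s)
    have h4 : ρ ^ 2 ≤ ((r + 1) / 2) ^ 2 := by gcongr
    calc 1 * Real.exp (-(1 / 2) * r ^ 2) ≤ Real.exp (1 / 2 + (-(1 / 2) * ρ ^ 2)) := by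
          rw [one_mul]
          gcongr
          nlinarith [sq_nonneg (r - 1)]
      _ = Real.exp (1 / 2) * Real.exp (-(1 / 2) * ρ ^ 2) := Real.exp_add _ _
      _ ≤ 2 * Real.exp (-(1 / 2) * ρ ^ 2) := by
          gcongr
          have h5 := Real.exp_one_lt_d9
          have h6 : Real.exp (1 / 2) ^ 2 = Real.exp 1 := by rw [← Real.exp_nat_mul]; norm_num
          have h7 := Real.exp_pos (1 / 2)
          nlinarith

theorem cov_sq_le {f g : Euc n → ℝ} (hf : CP f) (hg : CP g) (s : ℝ) (x : Euc n) :
    (M s x (fun y => f y * g y) - M s x f * M s x g) ^ 2 ≤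
      (M s x (fun y => f y ^ 2) - M s x f ^ 2) * (M s x (fun y => g y ^ 2) - M s x g ^ 2) := by
  set a := M s x f with ha
  set b := M s x g with hb
  have h1 := M_mul_sq_le (s := s) (x := x) (f := fun y => f y - a) (g := fun y => g y - b)
    (by fun_prop) (by fun_prop)
  have e0 : ∀ {f g : Euc n → ℝ}, CP f → CP g → M s x (fun y => (f y - M s x f) * (g y - M s x g))
      = M s x (fun y => f y * g y) - M s x f * M s x g := by
    intro f g hf hg
    have : ∀ y, (f y - M s x f) * (g y - M s x g)
        = (f y * g y - M s x f * g y) - (M s x g * f y - M s x f * M s x g) := fun y => by ring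
    rw [M_congr this, M_sub (by fun_prop) (by fun_prop), M_sub (by fun_prop) (by fun_prop),
      M_sub (by fun_prop) (by fun_prop), M_const_mul, M_const_mul, M_const]
    ring
  have e1 := e0 hf hg
  have e2 := e0 hf hf
  have e3 := e0 hg hg
  simp only [← sq] at e2 e3
  rw [e1, e2, e3] at h1
  exact h1

theorem M_ge_of_subharm {f : Euc n → ℝ} (hf : Nice f) (h : ∀ y, 0 ≤ lap f y) {s : ℝ} (hs : 0 ≤ s)
    (x : Euc n) : f x ≤ M s x f := by
  have := mono_of_hasDeriv (f := fun s => M s x f) hs (fun r _ => hasDerivAt_M hf r x)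
    fun r hr => mul_nonneg hr.1 (M_nonneg h)
  simpa [M] using this

theorem M_mono_scale {f : Euc n → ℝ} (hf : Nice f) (h : ∀ y, 0 ≤ lap f y) {s t : ℝ} (hs : 0 ≤ s)
    (hst : s ≤ t) (x : Euc n) : M s x f ≤ M t x f :=
  mono_of_hasDeriv (f := fun s => M s x f) hst (fun r _ => hasDerivAt_M hf r x)
    fun _ hr => mul_nonneg (hs.trans hr.1) (M_nonneg h)

theorem pq_aux {s p q F Gu Gv w a b : ℝ} (hs : 0 < s) (hp : 1 ≤ s ^ 2 * p) (hp0 : 0 < p)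
    (hq0 : 0 < q) (hF : 0 < F) (hgu : 0 ≤ Gu) (hgv : 0 ≤ Gv) (vu : p - a ^ 2 ≤ s ^ 2 * Gu)
    (vv : q - b ^ 2 ≤ s ^ 2 * Gv) (hcov : (w - a * b) ^ 2 ≤ (p - a ^ 2) * (q - b ^ 2))
    (hF2 : w ^ 2 ≤ F) (ha : 0 < a) (hb : 0 < b)
    (hvv : 0 ≤ q - b ^ 2)
    (hlt : s ^ 2 * (Gu + F) / p + s ^ 2 * (Gv + F) / q < 1 / 4) : False := by
  have n1 : 0 ≤ s ^ 2 * (Gu + F) / p := by positivity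
  have n2 : 0 ≤ s ^ 2 * (Gv + F) / q := by positivity
  have l1 : s ^ 2 * (Gu + F) < p / 4 := by
    have : s ^ 2 * (Gu + F) / p < 1 / 4 := by linarith
    rw [div_lt_iff₀ hp0] at this; linarith
  have l2 : s ^ 2 * (Gv + F) < q / 4 := by
    have : s ^ 2 * (Gv + F) / q < 1 / 4 := by linarith
    rw [div_lt_iff₀ hq0] at this; linarith
  have hs2 : 0 < s ^ 2 := by positivity
  have m1 : 0 ≤ s ^ 2 * F := by positivity
  have a1 : 3 / 4 * p ≤ a ^ 2 := by nlinarith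
  have b1 : 3 / 4 * q ≤ b ^ 2 := by nlinarith
  set r := Real.sqrt (p * q) with hr
  have hr0 : 0 < r := Real.sqrt_pos.2 (by positivity)
  have hr2 : r ^ 2 = p * q := Real.sq_sqrt (by positivity)
  have c1 : (w - a * b) ^ 2 ≤ (r / 4) ^ 2 := by
    refine hcov.trans ?_
    have : (p - a ^ 2) * (q - b ^ 2) ≤ (p / 4) * (q / 4) := by
      apply mul_le_mul <;> linarith
    linarith [hr2]
  have c2 := (abs_le.1 (abs_le_of_sq_le_sq c1 (by positivity))).1
  have c3 : 3 / 4 * r ≤ a * b := by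
    refine abs_le_of_sq_le_sq' ?_ (by positivity) |>.2
    have : (3 / 4 * p) * (3 / 4 * q) ≤ a ^ 2 * b ^ 2 := by gcongr
    nlinarith
  have c4 : r / 2 ≤ w := by linarith
  have c5 : p * q / 4 ≤ F := by
    have : (r / 2) ^ 2 ≤ w ^ 2 := by gcongr
    nlinarith
  have c6 : s ^ 2 * (p * q / 4) < q / 4 := by
    have : s ^ 2 * (p * q / 4) ≤ s ^ 2 * F := by gcongr
    nlinarith
  nlinarith

namespace Sol
variable {u v : Euc n → ℝ} (h : Sol u v)
include h

theorem lap_u_nonneg (y : Euc n) : 0 ≤ lap u y := by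
  rw [h.equ]; have := h.pu y; positivity

/-- At a fixed scale, the height grows at most quadratically in the center. -/
theorem H_poly {s : ℝ} (hs : 0 < s) (x y : Euc n) :
    Hm u v s y ≤ 2 ^ (n + 1) * 12 * (1 + dist y x / s) ^ 2 * Hm u v s x := by
  set t := s + dist y x with ht
  have hd : 0 ≤ dist y x := dist_nonneg
  have h0 : 0 < t := by positivity
  have h1 := h.H_mono hs (by linarith : s ≤ t) y
  have h2 : Hm u v t y ≤ 2 ^ (n + 1) * Hm u v (2 * t) x :=
    M_center h.nH.cp (fun y => by positivity) h0 (by linarith)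
  have h3 := h.h_anti hs (by linarith : s ≤ 2 * t) x
  have h4 : Hm u v (2 * t) x ≤ 12 * (1 + dist y x / s) ^ 2 * Hm u v s x := by
    have e : 1 + dist y x / s = t / s := by rw [ht]; field_simp
    rw [e, div_pow, mul_div_assoc', div_mul_eq_mul_div, le_div_iff₀ (by positivity)]
    linarith
  calc _ ≤ _ := h1
    _ ≤ _ := h2
    _ ≤ 2 ^ (n + 1) * (12 * (1 + dist y x / s) ^ 2 * Hm u v s x) := by gcongr
    _ = _ := by ring

theorem p_pos (s : ℝ) (x : Euc n) : 0 < M s x (fun y => u y ^ 2) :=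
  M_pos (h.nu.pow 2).cp fun y => by have := h.pu y; positivity

theorem a_pos (s : ℝ) (x : Euc n) : 0 < M s x u := M_pos h.nu.cp h.pu

theorem var_u_le (s : ℝ) (x : Euc n) :
    M s x (fun y => u y ^ 2) - M s x u ^ 2 ≤ s ^ 2 * M s x (gr u) := by
  have := poincare s x h.nu
  rwa [← M_sum (F := fun i y => pd i u y ^ 2) _ (fun i => by have := h.nu; fun_prop)] at this

theorem uv_sq_le_F (s : ℝ) (x : Euc n) : M s x (fun y => u y * v y) ^ 2 ≤ Fm u v s x := by
  have hu := h.nu; have hv := h.nv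
  refine (M_sq_le (by fun_prop)).trans (le_of_eq (M_congr fun y => by ring))

/-- The frequencies of `u` and of `v` cannot both be small at a scale where `s²⟨u²⟩ ≥ 1`: both would
be nearly constant, and then `⟨u²v²⟩` would be too large. -/
theorem pq_alt {s : ℝ} (hs : 0 < s) (x : Euc n) (hp : 1 ≤ s ^ 2 * M s x (fun y => u y ^ 2)) :
    1 / 4 ≤ s ^ 2 * (M s x (gr u) + Fm u v s x) / M s x (fun y => u y ^ 2)
      + s ^ 2 * (M s x (gr v) + Fm u v s x) / M s x (fun y => v y ^ 2) := by
  by_contra! hlt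
  have hp0 := h.p_pos s x
  have hq0 := h.swap.p_pos s x
  have hF := h.Fpos s x
  have hgu : 0 ≤ M s x (gr u) := M_nonneg (gr_nonneg u)
  have hgv : 0 ≤ M s x (gr v) := M_nonneg (gr_nonneg v)
  have vu := h.var_u_le s x
  have vv := h.swap.var_u_le s x
  have hcov := cov_sq_le h.nu.cp h.nv.cp s x
  have hF2 := h.uv_sq_le_F s x
  have ha := h.a_pos s x
  have hb := h.swap.a_pos s x
  have hvv : 0 ≤ M s x (fun y => v y ^ 2) - M s x v ^ 2 := by linarith [M_sq_le (s := s) (x := x) h.nv.cp]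
  exact pq_aux hs hp hp0 hq0 hF hgu hgv vu vv hcov hF2 ha hb hvv hlt

/-- A bound for `min (u, v)` at a point, obtained by integrating `pq_alt` over the scales in
`[1/m, s]`. -/
theorem min_bound {s m : ℝ} (y : Euc n) (hm : 0 < m) (hmu : m ≤ u y) (hmv : m ≤ v y)
    (hs : 1 ≤ s * m) : m ^ 9 * s ≤ Hm u v s y ^ 4 := by
  have hs0 : 0 < s := by
    by_contra! hc
    nlinarith
  have h1 : m⁻¹ ≤ s := by rw [inv_le_iff_one_le_mul₀ hm]; exact hs
  have hm0 : 0 < m⁻¹ := by positivity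
  have low : ∀ {u v : Euc n → ℝ}, Sol u v → m ≤ u y → ∀ r, 0 ≤ r → m ^ 2 ≤ M r y (fun y => u y ^ 2) := by
    intro u v h hmu r hr
    have e1 := M_ge_of_subharm h.nu h.lap_u_nonneg hr y
    calc m ^ 2 ≤ (M r y u) ^ 2 := by gcongr; exact hmu.trans e1
      _ ≤ _ := M_sq_le h.nu.cp
  have key := mono_of_hasDeriv (f := fun r => 2 * Real.log (M r y (fun y => u y ^ 2))
      + 2 * Real.log (M r y (fun y => v y ^ 2)) - Real.log r)
    (f' := fun r => 2 * (2 * r * (M r y (gr u) + Fm u v r y) / M r y (fun y => u y ^ 2))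
      + 2 * (2 * r * (M r y (gr v) + Fm v u r y) / M r y (fun y => v y ^ 2)) - r⁻¹) h1
    (fun r hr => ((((h.hasDeriv_p r y).log (h.p_pos r y).ne').const_mul 2).add
      (((h.swap.hasDeriv_p r y).log (h.swap.p_pos r y).ne').const_mul 2)).sub
      (Real.hasDerivAt_log (hm0.trans_le hr.1).ne')) ?_
  · have p1 := low h hmu m⁻¹ hm0.le
    have q1 := low h.swap hmv m⁻¹ hm0.le
    have hp := h.p_pos s y
    have hq := h.swap.p_pos s y
    have l1 := Real.log_le_log (by positivity) p1
    have l2 := Real.log_le_log (by positivity) q1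
    rw [Real.log_pow] at l1 l2
    rw [Real.log_inv] at key
    push_cast at l1 l2
    have l3 : Real.log (m ^ 9 * s) ≤
        Real.log ((M s y (fun y => u y ^ 2) * M s y (fun y => v y ^ 2)) ^ 2) := by
      rw [Real.log_mul (by positivity) hs0.ne', Real.log_pow, Real.log_pow,
        Real.log_mul hp.ne' hq.ne']
      push_cast
      linarith
    have l4 := (Real.log_le_log_iff (by positivity) (by positivity)).1 l3
    refine l4.trans ?_
    rw [h.H_eq]
    set p := M s y (fun y => u y ^ 2)
    set q := M s y (fun y => v y ^ 2)
    have : p * q ≤ (p + q) ^ 2 := by nlinarith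
    calc (p * q) ^ 2 ≤ ((p + q) ^ 2) ^ 2 := by gcongr
      _ = _ := by ring
  · intro r hr
    have hr0 := hm0.trans_le hr.1
    have hp := h.p_pos r y
    have hq := h.swap.p_pos r y
    have e1 : 1 ≤ r ^ 2 * M r y (fun y => u y ^ 2) := by
      have := low h hmu r hr0.le
      have h2 : (m⁻¹) ^ 2 ≤ r ^ 2 := by gcongr; exact hr.1
      calc (1:ℝ) = (m⁻¹) ^ 2 * m ^ 2 := by field_simp
        _ ≤ _ := by gcongr
    have e2 := h.pq_alt hr0 y e1
    rw [Fm_swap (u := v)]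
    have e3 : 2 * (2 * r * (M r y (gr u) + Fm u v r y) / M r y (fun y => u y ^ 2))
      + 2 * (2 * r * (M r y (gr v) + Fm u v r y) / M r y (fun y => v y ^ 2)) - r⁻¹
      = (4 * (r ^ 2 * (M r y (gr u) + Fm u v r y) / M r y (fun y => u y ^ 2)
      + r ^ 2 * (M r y (gr v) + Fm u v r y) / M r y (fun y => v y ^ 2)) - 1) * r⁻¹ := by
      field_simp
      ring
    rw [e3]
    exact mul_nonneg (by linarith) (by positivity)

end Sol
end compare

/-! ### Smallness of the interaction -/

section errorbound
variable {n : ℕ}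

/-- The small quantity `(s² H)^(-1/36)` controlling all interaction errors at scale `s`. -/
noncomputable def ep (u v : Euc n → ℝ) (s : ℝ) (x : Euc n) : ℝ :=
  (s ^ 2 * Hm u v s x) ^ (-(1 / 36) : ℝ)

/-- The pointwise interaction `u²v² + ∑ |∂ᵢu| |∂ⱼv|`. -/
noncomputable def cr (u v : Euc n → ℝ) (y : Euc n) : ℝ :=
  u y ^ 2 * v y ^ 2 + ∑ i, ∑ j, |pd i u y| * |pd j v y|

theorem cr_nonneg (u v : Euc n → ℝ) (y : Euc n) : 0 ≤ cr u v y := by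
  unfold cr; positivity

@[fun_prop]
theorem CP.cr {u v : Euc n → ℝ} (hu : Nice u) (hv : Nice v) : CP (cr u v) := by
  unfold _root_.cr
  refine CP.add (by fun_prop) (CP.sum _ fun i => CP.sum _ fun j => ?_)
  exact (hu.pd i).cp.abs.mul (hv.pd j).cp.abs

/-- The weighted mean interaction. -/
noncomputable def Th (u v : Euc n → ℝ) (s : ℝ) (x : Euc n) : ℝ :=
  M s x (fun y => (1 + dist y x / s) ^ 2 * cr u v y)

/-- The divergence of `k(u)∇u` for the bounded increasing function `k(r) = rδ/(r+δ)`. -/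
noncomputable def Dd (u : Euc n → ℝ) (δ : ℝ) (y : Euc n) : ℝ :=
  δ ^ 2 / (u y + δ) ^ 2 * gr u y + u y * δ / (u y + δ) * lap u y

theorem sum_prod_le {a b : Fin n → ℝ} {W α β : ℝ}
    (hW : ∀ a b : ℝ, W * (|a| * |b|) ≤ α * a ^ 2 + β * b ^ 2) :
    W * ∑ i, ∑ j, |a i| * |b j| ≤ n * (α * ∑ i, a i ^ 2 + β * ∑ j, b j ^ 2) := by
  calc W * ∑ i, ∑ j, |a i| * |b j| = ∑ i, ∑ j, W * (|a i| * |b j|) := by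
        simp only [Finset.mul_sum]
    _ ≤ ∑ i, ∑ j, (α * a i ^ 2 + β * b j ^ 2) :=
        Finset.sum_le_sum fun i _ => Finset.sum_le_sum fun j _ => hW _ _
    _ = _ := by
        simp only [Finset.sum_add_distrib, Finset.sum_const, Finset.card_univ, Fintype.card_fin,
          nsmul_eq_mul, ← Finset.mul_sum]
        ring

theorem amgm {L τ : ℝ} (hL : 1 ≤ L) (hτ : 0 < τ) (a b : ℝ) :
    L ^ 2 * (|a| * |b|) ≤ τ⁻¹ * (1 + L)⁻¹ ^ 2 * a ^ 2 + τ * (1 + L) ^ 6 * b ^ 2 := by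
  have h0 : 0 < 1 + L := by linarith
  have h1 : L ^ 2 * (|a| * |b|) ≤ (1 + L) ^ 2 * (|a| * |b|) := by gcongr; linarith
  have h2 : 0 ≤ τ⁻¹ * ((1 + L)⁻¹ * |a| - τ * (1 + L) ^ 3 * |b|) ^ 2 := by positivity
  have h3 : τ⁻¹ * ((1 + L)⁻¹ * |a| - τ * (1 + L) ^ 3 * |b|) ^ 2
      = τ⁻¹ * (1 + L)⁻¹ ^ 2 * a ^ 2 + τ * (1 + L) ^ 6 * b ^ 2 - 2 * ((1 + L) ^ 2 * (|a| * |b|)) := by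
    rw [← sq_abs a, ← sq_abs b]; field_simp; ring
  have h4 : 0 ≤ (1 + L) ^ 2 * (|a| * |b|) := by positivity
  linarith

namespace Sol
variable {u v : Euc n → ℝ} (h : Sol u v)
include h

theorem ep_pos {s : ℝ} (hs : 0 < s) (x : Euc n) : 0 < ep u v s x := by
  have := h.Hpos s x
  exact Real.rpow_pos_of_pos (by positivity) _

theorem ep_pow {s : ℝ} (hs : 0 < s) (x : Euc n) : ep u v s x ^ 36 * (s ^ 2 * Hm u v s x) = 1 := by
  have := h.Hpos s x
  have h0 : 0 < s ^ 2 * Hm u v s x := by positivity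
  have : ep u v s x ^ 36 = (s ^ 2 * Hm u v s x)⁻¹ := by
    rw [ep, ← Real.rpow_natCast, ← Real.rpow_mul h0.le, ← Real.rpow_neg_one]
    norm_num
  rw [this, inv_mul_cancel₀ h0.ne']

theorem ep_le_one {s : ℝ} (hs : 0 < s) (x : Euc n) (hk : 1 ≤ s ^ 2 * Hm u v s x) :
    ep u v s x ≤ 1 := by
  by_contra! hc
  have h1 := h.ep_pow hs x
  have h2 : 1 < ep u v s x ^ 36 := one_lt_pow₀ hc (by norm_num)
  nlinarith

theorem ep_half {s : ℝ} (hs : 0 < s) (x : Euc n) :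
    ep u v s x ^ 18 * (Real.sqrt (Hm u v s x) * s) = 1 := by
  have h1 := h.ep_pow hs x
  have hH := h.Hpos s x
  have he := h.ep_pos hs x
  have : (ep u v s x ^ 18 * (Real.sqrt (Hm u v s x) * s)) ^ 2 = 1 := by
    rw [mul_pow, mul_pow, Real.sq_sqrt hH.le, ← h1]; ring
  nlinarith [show 0 < ep u v s x ^ 18 * (Real.sqrt (Hm u v s x) * s) by positivity]

theorem min_le {s : ℝ} (hs : 0 < s) (x y : Euc n) (hk : 1 ≤ s ^ 2 * Hm u v s x) :
    min (u y) (v y) ≤ (1 + dist y x / s) *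
      (2 ^ (n + 1) * 12 * ep u v s x ^ 2 * Real.sqrt (Hm u v s x)) := by
  have hH := h.Hpos s x
  have he := h.ep_pos hs x
  have he1 := h.ep_le_one hs x hk
  have hh := h.ep_half hs x
  have hm : 0 < min (u y) (v y) := lt_min (h.pu y) (h.pv y)
  set m := min (u y) (v y) with hmdef
  set ε := ep u v s x
  set c : ℝ := 2 ^ (n + 1) * 12 with hc
  have hc1 : 1 ≤ c := by
    have : (1:ℝ) ≤ 2 ^ (n + 1) := one_le_pow₀ (by norm_num)
    rw [hc]; linarith
  set L := 1 + dist y x / s with hL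
  have hL1 : 1 ≤ L := by rw [hL]; have : 0 ≤ dist y x / s := by positivity
                         linarith
  have hsq : 0 < Real.sqrt (Hm u v s x) := Real.sqrt_pos.2 hH
  have hsq2 : Real.sqrt (Hm u v s x) ^ 2 = Hm u v s x := Real.sq_sqrt hH.le
  by_cases hsm : s * m < 1
  · have h1 : s * m < s * (ε ^ 2 * Real.sqrt (Hm u v s x)) := by
      calc s * m < 1 := hsm
        _ = ε ^ 18 * (Real.sqrt (Hm u v s x) * s) := hh.symm
        _ ≤ ε ^ 2 * (Real.sqrt (Hm u v s x) * s) := by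
            gcongr ?_ * _
            exact pow_le_pow_of_le_one he.le he1 (by norm_num)
        _ = _ := by ring
    have h2 := lt_of_mul_lt_mul_left h1 hs.le
    calc m ≤ 1 * (1 * ε ^ 2 * Real.sqrt (Hm u v s x)) := by linarith
      _ ≤ _ := by gcongr
  · push Not at hsm
    have h1 := h.min_bound y hm (min_le_left _ _) (min_le_right _ _) hsm
    have h2 : Hm u v s y ≤ c * L ^ 2 * Hm u v s x := h.H_poly hs x y
    have hHy := h.Hpos s y
    have h3 : m ^ 9 * s ≤ (L * (c * ε ^ 2 * Real.sqrt (Hm u v s x))) ^ 9 * s := by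
      calc m ^ 9 * s ≤ Hm u v s y ^ 4 := h1
        _ ≤ (c * L ^ 2 * Hm u v s x) ^ 4 := by gcongr
        _ = c ^ 4 * L ^ 8 * Hm u v s x ^ 4 * (ε ^ 18 * (Real.sqrt (Hm u v s x) * s)) := by
            rw [hh]; ring
        _ ≤ c ^ 9 * L ^ 9 * Hm u v s x ^ 4 * (ε ^ 18 * (Real.sqrt (Hm u v s x) * s)) := by
            gcongr <;> norm_num
        _ = (L * (c * ε ^ 2 * Real.sqrt (Hm u v s x))) ^ 9 * s := by
            have : Hm u v s x ^ 4 = Real.sqrt (Hm u v s x) ^ 8 := by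
              rw [← hsq2, Real.sqrt_sq hsq.le]; ring
            rw [this]; ring
    have h4 := le_of_mul_le_mul_right h3 hs
    exact (pow_le_pow_iff_left₀ hm.le (by positivity) (by norm_num)).1 h4

theorem Dd_cont {δ : ℝ} (hδ : 0 < δ) : CP (Dd u δ) := by
  have hu := h.nu
  have hg := hu.gr
  have hne : ∀ y, u y + δ ≠ 0 := fun y => by have := h.pu y; positivity
  refine CP.of_le (g := fun y => gr u y + δ * lap u y) ?_ (by fun_prop) fun y => ?_
  · have c1 := hu.cp.cont
    have c2 := hg.cp.cont
    have c3 := hu.lap.cp.cont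
    unfold Dd
    refine Continuous.add (Continuous.mul (Continuous.div (by fun_prop) (by fun_prop) fun y => pow_ne_zero 2 (hne y)) c2)
      (Continuous.mul (Continuous.div (by fun_prop) (by fun_prop) hne) c3)
  · have h1 := h.pu y
    have h2 := gr_nonneg u y
    have h3 := h.lap_u_nonneg y
    have h4 : 0 ≤ Dd u δ y := by unfold Dd; positivity
    rw [abs_of_nonneg h4]
    unfold Dd
    have e1 : δ ^ 2 / (u y + δ) ^ 2 ≤ 1 := by
      rw [div_le_one (by positivity)]; gcongr; linarith
    have e2 : u y * δ / (u y + δ) ≤ δ := by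
      rw [div_le_iff₀ (by positivity)]; nlinarith
    nlinarith

theorem M_Dd {δ : ℝ} (hδ : 0 < δ) (s : ℝ) (x : Euc n) : s ^ 2 * M s x (Dd u δ)
    = M s x (fun y => ∑ i, (y i - x i) * (u y * δ / (u y + δ) * pd i u y)) := by
  have hu := h.nu
  have hne : ∀ y, u y + δ ≠ 0 := fun y => by have := h.pu y; positivity
  have cu := hu.cp.cont
  have kd : ∀ y, HasFDerivAt (fun y => u y * δ / (u y + δ)) ((δ ^ 2 / (u y + δ) ^ 2) • fderiv ℝ u y) y := by
    intro y
    have d1 := (hu.diff y).hasFDerivAt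
    have d2 : HasDerivAt (fun r : ℝ => r * δ / (r + δ)) (δ ^ 2 / (u y + δ) ^ 2) (u y) := by
      refine (((hasDerivAt_id (u y)).mul_const δ).div ((hasDerivAt_id (u y)).add_const δ) (hne y)).congr_deriv ?_
      simp only [id_eq]
      congr 1; ring
    exact d2.comp_hasFDerivAt y d1
  have kdd : Differentiable ℝ (fun y => u y * δ / (u y + δ)) := fun y => (kd y).differentiableAt
  have kpd : ∀ i, pd i (fun y => u y * δ / (u y + δ)) = fun y => δ ^ 2 / (u y + δ) ^ 2 * pd i u y := by
    intro i; ext y; rw [pd, (kd y).fderiv]; simp [pd]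
  have hpd : ∀ i, pd i (fun y => u y * δ / (u y + δ) * pd i u y) = fun y =>
      δ ^ 2 / (u y + δ) ^ 2 * pd i u y ^ 2 + u y * δ / (u y + δ) * pd i (pd i u) y := by
    intro i
    rw [pd_mul i kdd (hu.pd i).diff, kpd]; ext y; ring
  have kcont : Continuous (fun y => u y * δ / (u y + δ)) :=
    Continuous.div (by fun_prop) (by fun_prop) hne
  have k'cont : Continuous (fun y => δ ^ 2 / (u y + δ) ^ 2) :=
    Continuous.div (by fun_prop) (by fun_prop) fun y => pow_ne_zero 2 (hne y)
  have kCP : CP (fun y => u y * δ / (u y + δ)) := CP.of_le kcont (CP.const δ) fun y => by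
    have h1 := h.pu y
    rw [abs_of_nonneg (by positivity), div_le_iff₀ (by positivity)]; nlinarith
  have k'CP : CP (fun y => δ ^ 2 / (u y + δ) ^ 2) := CP.of_le k'cont (CP.const 1) fun y => by
    have h1 := h.pu y
    rw [abs_of_nonneg (by positivity), div_le_one (by positivity)]; gcongr; linarith
  have c1 : ∀ i, CP (fun y => u y * δ / (u y + δ) * pd i u y) := fun i => kCP.mul (hu.pd i).cp
  have c2 : ∀ i, CP (fun y => δ ^ 2 / (u y + δ) ^ 2 * pd i u y ^ 2
      + u y * δ / (u y + δ) * pd i (pd i u) y) := fun i =>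
    (k'CP.mul ((hu.pd i).pow 2).cp).add (kCP.mul ((hu.pd i).pd i).cp)
  have c3 : ∀ i, CP (fun y : Euc n => (y i - x i) * (u y * δ / (u y + δ) * pd i u y)) := fun i =>
    CP.mul (by fun_prop) (c1 i)
  rw [M_sum (F := fun i y => (y i - x i) * (u y * δ / (u y + δ) * pd i u y)) _ c3]
  have e : ∀ i, M s x (fun y => (y i - x i) * (u y * δ / (u y + δ) * pd i u y)) = s ^ 2 *
      M s x (fun y => δ ^ 2 / (u y + δ) ^ 2 * pd i u y ^ 2
      + u y * δ / (u y + δ) * pd i (pd i u) y) := by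
    intro i
    rw [M_ibp i (kdd.fun_mul (hu.pd i).diff) (c1 i) (by rw [hpd]; exact c2 i), hpd]
  rw [Finset.sum_congr rfl fun i _ => e i, ← Finset.mul_sum, ← M_sum _ c2]
  congr 1
  refine M_congr fun y => ?_
  rw [Dd, gr, lap_eq, Finset.mul_sum, Finset.mul_sum, Finset.sum_add_distrib]

omit h in
/-- `⟨|X·∇u|⟩ ≤ C √H`. -/
theorem exists_radial_bound (n : ℕ) : ∃ C : ℝ, 0 < C ∧ ∀ (u v : Euc n → ℝ), Sol u v →
    ∀ s > 0, ∀ x, M s x (fun y => |∑ i, (y i - x i) * pd i u y|) ^ 2 ≤ C * Hm u v s x := by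
  obtain ⟨C, hC, hw⟩ := M_weight n 2
  refine ⟨3 * C, by positivity, fun u v h s hs x => ?_⟩
  have hu := h.nu
  have hv := h.nv
  have c0 : CP (fun y => |∑ i, (y i - x i) * pd i u y|) := CP.abs (CP.sum _ fun i => by fun_prop)
  have c1 : CP (fun y => (1 + dist y x / s) ^ 2 * en u v y) := by
    have := h.nE; fun_prop
  have h1 := M_sq_le (s := s) (x := x) c0
  have h2 : M s x (fun y => |∑ i, (y i - x i) * pd i u y| ^ 2) ≤
      M s x (fun y => s ^ 2 * ((1 + dist y x / s) ^ 2 * en u v y)) := by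
    refine M_mono (c0.pow 2) ((CP.const _).mul c1) fun y => ?_
    rw [sq_abs]
    have e1 := Finset.sum_mul_sq_le_sq_mul_sq Finset.univ (fun i => y i - x i) (fun i => pd i u y)
    have e2 : ∑ i, (y i - x i) ^ 2 = dist y x ^ 2 := by
      rw [EuclideanSpace.dist_eq, Real.sq_sqrt (by positivity)]
      refine Finset.sum_congr rfl fun i _ => ?_
      rw [Real.dist_eq, sq_abs]
    rw [e2] at e1
    have e3 : gr u y ≤ en u v y := by
      have := gr_nonneg v y
      unfold en; have : 0 ≤ u y ^ 2 * v y ^ 2 := by positivity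
      linarith
    have e4 : dist y x ^ 2 ≤ s ^ 2 * (1 + dist y x / s) ^ 2 := by
      rw [← mul_pow]
      gcongr
      have : s * (1 + dist y x / s) = s + dist y x := by field_simp
      linarith
    calc _ ≤ _ := e1
      _ ≤ (s ^ 2 * (1 + dist y x / s) ^ 2) * en u v y := by
          have := gr_nonneg u y
          exact mul_le_mul e4 e3 (gr_nonneg u y) (by positivity)
      _ = _ := by ring
  rw [M_const_mul] at h2
  have h3 := hw _ h.nE.cp (en_nonneg u v) s hs x
  have h4 := h.E_le (by positivity : 0 < 2 * s) x
  have h5 := h.h_anti hs (by linarith : s ≤ 2 * s) x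
  have h6 : Em u v (2 * s) x * s ^ 2 ≤ 3 * Hm u v s x := by
    have : Hm u v (2 * s) x ≤ 12 * Hm u v s x := by
      have h7 : Hm u v (2 * s) x * s ^ 2 ≤ (12 * Hm u v s x) * s ^ 2 := by linarith
      exact le_of_mul_le_mul_right h7 (by positivity)
    nlinarith
  calc _ ≤ _ := h1
    _ ≤ _ := h2
    _ ≤ s ^ 2 * (C * M (2 * s) x (en u v)) := by gcongr
    _ = C * (Em u v (2 * s) x * s ^ 2) := by unfold Em; ring
    _ ≤ C * (3 * Hm u v s x) := by gcongr
    _ = _ := by ring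

theorem M_Dd_le {C : ℝ} (hC : 0 < C) {s : ℝ} {x : Euc n}
    (hb : M s x (fun y => |∑ i, (y i - x i) * pd i u y|) ^ 2 ≤ C * Hm u v s x) {δ : ℝ} (hδ : 0 < δ) :
    s ^ 2 * M s x (Dd u δ) ≤ δ * (Real.sqrt C * Real.sqrt (Hm u v s x)) := by
  have hu := h.nu
  have c0 : CP (fun y => |∑ i, (y i - x i) * pd i u y|) := CP.abs (CP.sum _ fun i => by fun_prop)
  rw [h.M_Dd hδ]
  have e : ∀ y, |∑ i, (y i - x i) * (u y * δ / (u y + δ) * pd i u y)| ≤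
      δ * |∑ i, (y i - x i) * pd i u y| := by
    intro y
    have : ∑ i, (y i - x i) * (u y * δ / (u y + δ) * pd i u y)
        = u y * δ / (u y + δ) * ∑ i, (y i - x i) * pd i u y := by
      rw [Finset.mul_sum]; exact Finset.sum_congr rfl fun i _ => by ring
    have h1 := h.pu y
    rw [this, abs_mul, abs_of_nonneg (by positivity : 0 ≤ u y * δ / (u y + δ))]
    gcongr
    rw [div_le_iff₀ (by positivity)]; nlinarith
  have hne : ∀ y, u y + δ ≠ 0 := fun y => by have := h.pu y; positivity
  have cu := hu.cp.cont
  have c1 : CP (fun y => ∑ i, (y i - x i) * (u y * δ / (u y + δ) * pd i u y)) := by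
    refine CP.of_le ?_ (g := fun y => δ * |∑ i, (y i - x i) * pd i u y|) ((CP.const _).mul c0) e
    have := fun i => (hu.pd i).cp.cont
    refine continuous_finsetSum _ fun i _ => Continuous.mul (by fun_prop) (Continuous.mul
      (Continuous.div (by fun_prop) (by fun_prop) hne) (this i))
  refine (M_mono c1 ((CP.const δ).mul c0) fun y => (le_abs_self _).trans (e y)).trans ?_
  rw [M_const_mul]
  gcongr
  rw [← Real.sqrt_mul hC.le]
  exact Real.le_sqrt_of_sq_le hb

theorem Dd_nonneg {δ : ℝ} (hδ : 0 < δ) (y : Euc n) : 0 ≤ Dd u δ y := by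
  have h1 := h.pu y
  have h2 := gr_nonneg u y
  have h3 := h.lap_u_nonneg y
  unfold Dd; positivity

omit h in
theorem cr_swap (y : Euc n) : cr u v y = cr v u y := by
  unfold cr
  rw [Finset.sum_comm]
  congr 1
  · ring
  · exact Finset.sum_congr rfl fun i _ => Finset.sum_congr rfl fun j _ => mul_comm _ _

theorem cr_le_aux {δ L τ : ℝ} (hδ : 0 < δ) (hL : 1 ≤ L) (hτ : 0 < τ) (y : Euc n)
    (hy : u y ≤ L * δ) :
    L ^ 2 * cr u v y ≤ (n + 1) * (τ⁻¹ * Dd u δ y + 64 * τ * (L ^ 6 * en u v y)) := by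
  have h1 := h.pu y
  have h2 := gr_nonneg u y
  have h2' := gr_nonneg v y
  have hF : 0 ≤ u y ^ 2 * v y ^ 2 := by positivity
  have hL0 : 0 < 1 + L := by linarith
  have hD : (1 + L)⁻¹ ^ 2 * (gr u y + u y ^ 2 * v y ^ 2) ≤ Dd u δ y := by
    unfold Dd
    rw [h.equ, mul_add]
    have k0 : (1 + L)⁻¹ ≤ δ / (u y + δ) := by
      rw [inv_eq_one_div, div_le_div_iff₀ hL0 (by positivity)]; nlinarith
    have k1 : (1 + L)⁻¹ ^ 2 ≤ δ ^ 2 / (u y + δ) ^ 2 := by rw [← div_pow]; gcongr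
    have k2 : (1 + L)⁻¹ ^ 2 ≤ δ / (u y + δ) := by
      have : (1 + L)⁻¹ ≤ 1 := inv_le_one_of_one_le₀ (by linarith)
      have : 0 < (1 + L)⁻¹ := by positivity
      nlinarith
    have k3 : u y * δ / (u y + δ) * (u y * v y ^ 2) = δ / (u y + δ) * (u y ^ 2 * v y ^ 2) := by
      ring
    rw [k3]
    gcongr
  have hs := sum_prod_le (a := fun i => pd i u y) (b := fun i => pd i v y) (W := L ^ 2)
    (α := τ⁻¹ * (1 + L)⁻¹ ^ 2) (β := τ * (1 + L) ^ 6) (amgm hL hτ)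
  have hf := amgm hL hτ (u y * v y) (u y * v y)
  rw [abs_mul_abs_self] at hf
  have hgu : ∑ i, pd i u y ^ 2 = gr u y := rfl
  have hgv : ∑ i, pd i v y ^ 2 = gr v y := rfl
  rw [hgu, hgv] at hs
  have e6 : (1 + L) ^ 6 ≤ 64 * L ^ 6 := by
    calc (1 + L) ^ 6 ≤ (2 * L) ^ 6 := by gcongr; linarith
      _ = _ := by ring
  have p1 : 0 ≤ τ⁻¹ * (1 + L)⁻¹ ^ 2 := by positivity
  have p2 : 0 ≤ τ * (1 + L) ^ 6 := by positivity
  set A := τ⁻¹ * (1 + L)⁻¹ ^ 2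
  set B := τ * (1 + L) ^ 6 with hB
  have hn : (0:ℝ) ≤ n := Nat.cast_nonneg n
  set F := u y ^ 2 * v y ^ 2
  have e1 : L ^ 2 * cr u v y ≤ (n + 1) * (A * (gr u y + F) + B * en u v y) := by
    unfold cr
    rw [mul_add]
    have f1 : L ^ 2 * F ≤ A * F + B * F := by
      simp only [F]; nlinarith
    unfold en
    have : 0 ≤ A * F := by positivity
    have : 0 ≤ B * F := by positivity
    have : 0 ≤ B * gr u y := by positivity
    have : 0 ≤ A * gr u y := by positivity
    have : 0 ≤ B * gr v y := by positivity
    have hq : 0 ≤ (n:ℝ) * (A * F + B * F + B * gr u y) := by positivity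
    simp only [F] at *
    nlinarith
  refine e1.trans ?_
  have he := en_nonneg u v y
  have g1 : A * (gr u y + F) ≤ τ⁻¹ * Dd u δ y := by
    simp only [A]; rw [mul_assoc]; gcongr
  have g2 : B * en u v y ≤ 64 * τ * (L ^ 6 * en u v y) := by
    rw [hB]
    calc τ * (1 + L) ^ 6 * en u v y ≤ τ * (64 * L ^ 6) * en u v y := by gcongr
      _ = _ := by ring
  gcongr

omit h in
/-- The interaction error is small relative to the height. -/
theorem exists_Th_bound (n : ℕ) : ∃ C : ℝ, 0 < C ∧ ∀ (u v : Euc n → ℝ), Sol u v →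
    ∀ s > 0, ∀ x, 1 ≤ s ^ 2 * Hm u v s x →
      s ^ 2 * Th u v s x ≤ C * ep u v s x * Hm u v s x := by
  obtain ⟨C1, hC1, hr⟩ := exists_radial_bound n
  obtain ⟨C6, hC6, hw⟩ := M_weight n 6
  set c : ℝ := 2 ^ (n + 1) * 12 with hc
  have hc0 : 0 < c := by positivity
  refine ⟨(n + 1) * (2 * (c * Real.sqrt C1) + 64 * C6 * 3), by positivity, fun u v h s hs x hk => ?_⟩
  have hH := h.Hpos s x
  have he := h.ep_pos hs x
  have hu := h.nu
  have hv := h.nv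
  have hE := h.nE
  set ε := ep u v s x
  set δ := c * ε ^ 2 * Real.sqrt (Hm u v s x) with hδdef
  have hδ : 0 < δ := by positivity
  have hmin : ∀ y, min (u y) (v y) ≤ (1 + dist y x / s) * δ := fun y => h.min_le hs x y hk
  have pw : ∀ y, (1 + dist y x / s) ^ 2 * cr u v y ≤
      (n + 1) * (ε⁻¹ * (Dd u δ y + Dd v δ y) + 64 * ε * ((1 + dist y x / s) ^ 6 * en u v y)) := by
    intro y
    have hL1 : 1 ≤ 1 + dist y x / s := by
      have : 0 ≤ dist y x / s := by positivity
      linarith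
    have n1 := h.Dd_nonneg hδ y
    have n2 := h.swap.Dd_nonneg hδ y
    rcases min_le_iff.1 (hmin y) with h1 | h1
    · refine (h.cr_le_aux hδ hL1 he y h1).trans ?_
      gcongr
      linarith
    · rw [cr_swap, en_swap]
      refine (h.swap.cr_le_aux hδ hL1 he y h1).trans ?_
      gcongr
      linarith
  have cD := h.Dd_cont hδ
  have cD' := h.swap.Dd_cont hδ
  have key : Th u v s x ≤ (n + 1) * (ε⁻¹ * (M s x (Dd u δ) + M s x (Dd v δ))
      + 64 * ε * M s x (fun y => (1 + dist y x / s) ^ 6 * en u v y)) := by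
    rw [← M_add cD cD', ← M_const_mul, ← M_const_mul, ← M_add (by fun_prop) (by fun_prop),
      ← M_const_mul]
    have cC := CP.cr hu hv
    exact M_mono (by fun_prop) (by fun_prop) pw
  have d1 := h.M_Dd_le hC1 (hr u v h s hs x) hδ
  have d2 := h.swap.M_Dd_le hC1 (hr v u h.swap s hs x) hδ
  rw [Hm_swap (u := v)] at d2
  have h3 := hw _ h.nE.cp (en_nonneg u v) s hs x
  have h4 := h.E_le (by positivity : 0 < 2 * s) x
  have h5 := h.h_anti hs (by linarith : s ≤ 2 * s) x
  have h6 : s ^ 2 * Em u v (2 * s) x ≤ 3 * Hm u v s x := by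
    have : Hm u v (2 * s) x ≤ 12 * Hm u v s x := by
      have h7 : Hm u v (2 * s) x * s ^ 2 ≤ (12 * Hm u v s x) * s ^ 2 := by linarith
      exact le_of_mul_le_mul_right h7 (by positivity)
    nlinarith
  have hsq2 : Real.sqrt (Hm u v s x) ^ 2 = Hm u v s x := Real.sq_sqrt hH.le
  have d3 : δ * (Real.sqrt C1 * Real.sqrt (Hm u v s x)) = c * Real.sqrt C1 * ε ^ 2 * Hm u v s x := by
    rw [hδdef]
    calc _ = c * Real.sqrt C1 * ε ^ 2 * Real.sqrt (Hm u v s x) ^ 2 := by ring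
      _ = _ := by rw [hsq2]
  rw [d3] at d1 d2
  calc s ^ 2 * Th u v s x ≤ s ^ 2 * ((n + 1) * (ε⁻¹ * (M s x (Dd u δ) + M s x (Dd v δ))
      + 64 * ε * M s x (fun y => (1 + dist y x / s) ^ 6 * en u v y))) := by gcongr
    _ = (n + 1) * (ε⁻¹ * (s ^ 2 * M s x (Dd u δ) + s ^ 2 * M s x (Dd v δ))
      + 64 * ε * (s ^ 2 * M s x (fun y => (1 + dist y x / s) ^ 6 * en u v y))) := by ring
    _ ≤ (n + 1) * (ε⁻¹ * (c * Real.sqrt C1 * ε ^ 2 * Hm u v s x + c * Real.sqrt C1 * ε ^ 2 * Hm u v s x)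
      + 64 * ε * (s ^ 2 * (C6 * M (2 * s) x (en u v)))) := by gcongr
    _ = (n + 1) * (ε * (2 * (c * Real.sqrt C1) * Hm u v s x)
      + 64 * ε * (C6 * (s ^ 2 * Em u v (2 * s) x))) := by
        unfold Em; field_simp; ring
    _ ≤ (n + 1) * (ε * (2 * (c * Real.sqrt C1) * Hm u v s x)
      + 64 * ε * (C6 * (3 * Hm u v s x))) := by gcongr
    _ = _ := by ring

theorem uv_le {s : ℝ} (hs : 0 < s) (x : Euc n) (hk : 1 ≤ s ^ 2 * Hm u v s x) :
    M s x (fun y => u y * v y) ≤ ep u v s x * Hm u v s x := by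
  have hH := h.Hpos s x
  have he := h.ep_pos hs x
  have h1 := h.uv_sq_le_F s x
  have h2 := h.F_le_E s x
  have h3 := h.E_le hs x
  have h4 := h.ep_pow hs x
  have he1 := h.ep_le_one hs x hk
  refine abs_le_of_sq_le_sq' ?_ (by positivity) |>.2
  have h5 : s ^ 2 * Hm u v s x * M s x (fun y => u y * v y) ^ 2 ≤ Hm u v s x ^ 2 := by
    have : s ^ 2 * M s x (fun y => u y * v y) ^ 2 ≤ Hm u v s x := by
      calc _ ≤ s ^ 2 * Em u v s x := by gcongr; linarith
        _ ≤ _ := h3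
    nlinarith
  calc M s x (fun y => u y * v y) ^ 2
      = ep u v s x ^ 36 * (s ^ 2 * Hm u v s x * M s x (fun y => u y * v y) ^ 2) := by
        rw [← mul_assoc, h4, one_mul]
    _ ≤ ep u v s x ^ 2 * Hm u v s x ^ 2 := by
        gcongr ?_ * ?_
        exact pow_le_pow_of_le_one he.le he1 (by norm_num)
    _ = _ := by ring

end Sol
end errorbound

/-! ### The difference of the two components -/

section balance
variable {n : ℕ}

/-- The difference `w = u - v`. -/
noncomputable def df (u v : Euc n → ℝ) (y : Euc n) : ℝ := u y - v y

@[fun_prop]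
theorem Nice.df {u v : Euc n → ℝ} (hu : Nice u) (hv : Nice v) : Nice (df u v) := by
  unfold _root_.df; fun_prop

/-- The mean `⟨w⟩`. -/
noncomputable def zm (u v : Euc n → ℝ) (s : ℝ) (x : Euc n) : ℝ := M s x (df u v)

/-- The mean gradient `⟨∇w⟩`. -/
noncomputable def bt (u v : Euc n → ℝ) (s : ℝ) (x : Euc n) (i : Fin n) : ℝ := M s x (pd i (df u v))

/-- `|⟨∇w⟩|²`. -/
noncomputable def bsq (u v : Euc n → ℝ) (s : ℝ) (x : Euc n) : ℝ := ∑ i, bt u v s x i ^ 2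

/-- The gradient oscillation `⟨|∇w - ⟨∇w⟩|²⟩`. -/
noncomputable def Rm (u v : Euc n → ℝ) (s : ℝ) (x : Euc n) : ℝ :=
  M s x (fun y => ∑ i, (pd i (df u v) y - bt u v s x i) ^ 2)

theorem Rm_nonneg (u v : Euc n → ℝ) (s : ℝ) (x : Euc n) : 0 ≤ Rm u v s x :=
  M_nonneg fun _ => by positivity

theorem bsq_nonneg (u v : Euc n → ℝ) (s : ℝ) (x : Euc n) : 0 ≤ bsq u v s x := by
  unfold bsq; positivity

namespace Sol
variable {u v : Euc n → ℝ} (h : Sol u v)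
include h

theorem nw : Nice (df u v) := h.nu.df h.nv

theorem R_eq (s : ℝ) (x : Euc n) : Rm u v s x = M s x (gr (df u v)) - bsq u v s x := by
  have hw := h.nw
  unfold Rm bsq gr
  rw [M_sum (F := fun i y => (pd i (df u v) y - bt u v s x i) ^ 2) _ (fun i => by fun_prop),
    M_sum (F := fun i y => pd i (df u v) y ^ 2) _ (fun i => by fun_prop),
    ← Finset.sum_sub_distrib]
  refine Finset.sum_congr rfl fun i _ => ?_
  have e : ∀ y, (pd i (df u v) y - bt u v s x i) ^ 2
      = pd i (df u v) y ^ 2 - 2 * bt u v s x i * pd i (df u v) y + bt u v s x i ^ 2 := fun y => by ring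
  rw [M_congr e, M_add (by fun_prop) (by fun_prop), M_sub (by fun_prop) (by fun_prop),
    M_const_mul, M_const]
  unfold bt; ring

theorem M_w2 (s : ℝ) (x : Euc n) :
    M s x (fun y => df u v y ^ 2) = Hm u v s x - 2 * M s x (fun y => u y * v y) := by
  have := h.nu; have := h.nv
  have e : ∀ y, df u v y ^ 2 = (u y ^ 2 + v y ^ 2) - 2 * (u y * v y) := fun y => by
    unfold df; ring
  rw [M_congr e, M_sub (by fun_prop) (by fun_prop), M_const_mul]; rfl

theorem pd_df (i : Fin n) : pd i (df u v) = fun y => pd i u y - pd i v y :=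
  pd_sub i h.nu.diff h.nv.diff

omit h in
theorem sum_pd_le_cr (y : Euc n) : |∑ i, pd i u y * pd i v y| ≤ cr u v y - u y ^ 2 * v y ^ 2 := by
  unfold cr
  have : |∑ i, pd i u y * pd i v y| ≤ ∑ i, ∑ j, |pd i u y| * |pd j v y| := by
    refine (Finset.abs_sum_le_sum_abs _ _).trans (Finset.sum_le_sum fun i _ => ?_)
    rw [abs_mul]
    exact Finset.single_le_sum (f := fun j => |pd i u y| * |pd j v y|)
      (fun j _ => by positivity) (Finset.mem_univ i)
  linarith

omit h in
theorem pd_le_cr (i j : Fin n) (y : Euc n) : |pd i u y| * |pd j v y| ≤ cr u v y := by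
  unfold cr
  have h1 : |pd i u y| * |pd j v y| ≤ ∑ i, ∑ j, |pd i u y| * |pd j v y| :=
    (Finset.single_le_sum (f := fun j => |pd i u y| * |pd j v y|)
      (fun j _ => by positivity) (Finset.mem_univ j)).trans
      (Finset.single_le_sum (f := fun i => ∑ j, |pd i u y| * |pd j v y|)
      (fun j _ => by positivity) (Finset.mem_univ i))
  have : 0 ≤ u y ^ 2 * v y ^ 2 := by positivity
  linarith

theorem gr_df_eq (y : Euc n) :
    gr (df u v) y = gr u y + gr v y - 2 * ∑ i, pd i u y * pd i v y := by
  unfold gr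
  rw [Finset.mul_sum, ← Finset.sum_add_distrib, ← Finset.sum_sub_distrib]
  refine Finset.sum_congr rfl fun i _ => ?_
  rw [h.pd_df i]; ring

theorem cr_le_Th {s : ℝ} (hs : 0 < s) (x : Euc n) : M s x (cr u v) ≤ Th u v s x := by
  have := h.nu; have := h.nv
  refine M_mono (by fun_prop) (by fun_prop) fun y => ?_
  have h1 : 1 ≤ (1 + dist y x / s) ^ 2 := by
    have : 0 ≤ dist y x / s := by positivity
    nlinarith
  exact le_mul_of_one_le_left (cr_nonneg u v y) h1

omit h in
theorem Th_nonneg (s : ℝ) (x : Euc n) : 0 ≤ Th u v s x :=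
  M_nonneg fun y => mul_nonneg (by positivity) (cr_nonneg u v y)

theorem gr_df_le {s : ℝ} (hs : 0 < s) (x : Euc n) :
    M s x (gr (df u v)) ≤ Em u v s x + 2 * Th u v s x := by
  have := h.nu; have := h.nv
  have h1 : M s x (gr (df u v)) ≤ M s x (fun y => en u v y + 2 * cr u v y) := by
    refine M_mono (by fun_prop) (by fun_prop) fun y => ?_
    rw [h.gr_df_eq y]
    have h2 := abs_le.1 (sum_pd_le_cr (u := u) (v := v) y)
    have : 0 ≤ u y ^ 2 * v y ^ 2 := by positivity
    unfold en
    linarith [h2.1]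
  rw [M_add (by fun_prop) (by fun_prop), M_const_mul] at h1
  have := h.cr_le_Th hs x
  unfold Em; linarith

theorem E_le_gr {s : ℝ} (hs : 0 < s) (x : Euc n) :
    Em u v s x ≤ M s x (gr (df u v)) + 3 * Th u v s x := by
  have := h.nu; have := h.nv
  have h1 : M s x (en u v) ≤ M s x (fun y => gr (df u v) y + 3 * cr u v y) := by
    refine M_mono (by fun_prop) (by fun_prop) fun y => ?_
    rw [h.gr_df_eq y]
    have h2 := abs_le.1 (sum_pd_le_cr (u := u) (v := v) y)
    have h3 : 0 ≤ u y ^ 2 * v y ^ 2 := by positivity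
    have h4 := cr_nonneg u v y
    have h5 : u y ^ 2 * v y ^ 2 ≤ cr u v y := by linarith [h2.1, h2.2]
    unfold en
    linarith [h2.1, h2.2]
  rw [M_add (by fun_prop) (by fun_prop), M_const_mul] at h1
  have := h.cr_le_Th hs x
  unfold Em; linarith

/-- The second-order Poincaré inequality for `w = u - v`: the part of `w` that is neither constant nor
linear is controlled by the gradient oscillation. -/
theorem gap_w (s : ℝ) (x : Euc n) : Hm u v s x - 2 * M s x (fun y => u y * v y) - zm u v s x ^ 2
    ≤ s ^ 2 * bsq u v s x + s ^ 2 * Rm u v s x / 2 := by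
  have hw := h.nw
  have h1 := spectral_gap s x hw
  have h2 : ∑ i, M s x (fun y => pd i (df u v) y ^ 2) = M s x (gr (df u v)) :=
    (M_sum (F := fun i y => pd i (df u v) y ^ 2) _ (fun i => by fun_prop)).symm
  have h3 := h.R_eq s x
  rw [h.M_w2, h2] at h1
  have h4 : ∑ i, M s x (pd i (df u v)) ^ 2 = bsq u v s x := rfl
  rw [h4] at h1
  unfold zm
  nlinarith

theorem R_le {s : ℝ} (hs : 0 < s) (x : Euc n) : s ^ 2 * Rm u v s x ≤
    2 * zm u v s x ^ 2 + 4 * M s x (fun y => u y * v y) + 4 * (s ^ 2 * Th u v s x) := by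
  have h1 := h.gap_w s x
  have h2 := h.R_eq s x
  have h3 := mul_le_mul_of_nonneg_left (h.gr_df_le hs x) (sq_nonneg s)
  have h4 := h.E_le hs x
  nlinarith

theorem N_ge {s : ℝ} (hs : 0 < s) (x : Euc n) : Hm u v s x - s ^ 2 * Em u v s x ≤
    zm u v s x ^ 2 + 2 * M s x (fun y => u y * v y) + 2 * (s ^ 2 * Th u v s x) := by
  have h1 := h.gap_w s x
  have h2 := h.R_eq s x
  have h3 := mul_le_mul_of_nonneg_left (h.gr_df_le hs x) (sq_nonneg s)
  have h4 := mul_nonneg (sq_nonneg s) (Rm_nonneg u v s x)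
  nlinarith

theorem hasDeriv_z (s : ℝ) (x : Euc n) :
    HasDerivAt (fun s => zm u v s x) (s * M s x (lap (df u v))) s := hasDerivAt_M h.nw s x

theorem dz_crude {s : ℝ} (x : Euc n) :
    (s ^ 2 * M s x (lap (df u v))) ^ 2 ≤ n * (s ^ 2 * Rm u v s x) := by
  have hw := h.nw
  have e1 : s ^ 2 * M s x (lap (df u v))
      = ∑ i, M s x (fun y => (y i - x i) * (pd i (df u v) y - bt u v s x i)) := by
    have : M s x (lap (df u v)) = ∑ i, M s x (pd i (pd i (df u v))) :=
      M_sum (F := fun i => pd i (pd i (df u v))) _ (fun i => by fun_prop)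
    rw [this, Finset.mul_sum]
    refine Finset.sum_congr rfl fun i _ => ?_
    have hN : Nice (fun y => pd i (df u v) y - bt u v s x i) := by fun_prop
    rw [M_ibp i hN.diff hN.cp (hN.pd i).cp]
    rw [pd_sub i (hw.pd i).diff (Nice.const (bt u v s x i)).diff, pd_const]
    simp
  have e2 : ∀ i, M s x (fun y => (y i - x i) ^ 2) = s ^ 2 := by
    intro i
    have hN : Nice (fun y : Euc n => y i - x i) := by fun_prop
    have := M_ibp i hN.diff hN.cp (hN.pd i).cp s x
    rw [pd_sub i (diff_coord i) (Nice.const (x i)).diff, pd_const, pd_coord] at this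
    simp only [if_true, sub_zero, M_const, mul_one] at this
    rw [← this]; exact M_congr fun y => by ring
  rw [e1]
  refine (sq_sum_le_card_mul_sum_sq).trans ?_
  rw [Finset.card_univ, Fintype.card_fin]
  unfold Rm
  rw [M_sum (F := fun i y => (pd i (df u v) y - bt u v s x i) ^ 2) _ (fun i => by fun_prop),
    Finset.mul_sum (a := s ^ 2)]
  gcongr with i
  have := M_mul_sq_le (s := s) (x := x) (f := fun y => y i - x i)
    (g := fun y => pd i (df u v) y - bt u v s x i) (by fun_prop) (by fun_prop)
  rwa [e2 i] at this

/-- The divergence structure of `Δw` tested against a constant vector `b`. -/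
theorem lap_mul_const (b : Fin n → ℝ) (j : Fin n) (y : Euc n) :
    lap (df u v) y * b j =
      ∑ i, pd i (fun y => -(pd i u y * pd j v y + pd i v y * pd j u y)
          - (pd i (df u v) y - b i) * (pd j (df u v) y - b j)) y
      + pd j (fun y => u y ^ 2 * v y ^ 2 / 2 + (∑ i, pd i u y * pd i v y)
          + (∑ i, (pd i (df u v) y - b i) ^ 2) / 2) y := by
  have hu := h.nu
  have hv := h.nv
  have hw := h.nw
  have hb : ∀ i, Nice (fun y => pd i (df u v) y - b i) := fun i => by fun_prop
  have pb : ∀ k i, pd k (fun y => pd i (df u v) y - b i) = pd k (pd i (df u v)) := by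
    intro k i
    rw [pd_sub k (hw.pd i).diff (Nice.const (b i)).diff, pd_const]; simp
  have e1 : ∀ i, pd i (fun y => -(pd i u y * pd j v y + pd i v y * pd j u y)
          - (pd i (df u v) y - b i) * (pd j (df u v) y - b j)) y
      = -(pd i (pd i u) y * pd j v y + pd i u y * pd i (pd j v) y
        + (pd i (pd i v) y * pd j u y + pd i v y * pd i (pd j u) y))
        - (pd i (pd i (df u v)) y * (pd j (df u v) y - b j)
          + (pd i (df u v) y - b i) * pd i (pd j (df u v)) y) := by
    intro i
    have h1 := (hu.pd i).diff.fun_mul (hv.pd j).diff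
    have h2 := (hv.pd i).diff.fun_mul (hu.pd j).diff
    rw [pd_sub i (h1.fun_add h2).fun_neg ((hb i).diff.fun_mul (hb j).diff),
      pd_neg i, pd_add i h1 h2, pd_mul i (hu.pd i).diff (hv.pd j).diff,
      pd_mul i (hv.pd i).diff (hu.pd j).diff, pd_mul i (hb i).diff (hb j).diff, pb, pb]
  have e2 : pd j (fun y => u y ^ 2 * v y ^ 2 / 2 + (∑ i, pd i u y * pd i v y)
          + (∑ i, (pd i (df u v) y - b i) ^ 2) / 2) y
      = u y * v y ^ 2 * pd j u y + v y * u y ^ 2 * pd j v y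
        + ∑ i, (pd j (pd i u) y * pd i v y + pd i u y * pd j (pd i v) y)
        + ∑ i, (pd i (df u v) y - b i) * pd j (pd i (df u v)) y := by
    have n1 : Nice (fun y => u y ^ 2 * v y ^ 2) := by fun_prop
    have n2 : ∀ i, Nice (fun y => pd i u y * pd i v y) := fun i => by fun_prop
    have n3 : ∀ i, Nice (fun y => (pd i (df u v) y - b i) ^ 2) := fun i => by fun_prop
    have n4 : Nice (fun y => ∑ i, pd i u y * pd i v y) := Nice.sum _ n2
    have n5 : Nice (fun y => ∑ i, (pd i (df u v) y - b i) ^ 2) := Nice.sum _ n3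
    have c1 : (fun y => u y ^ 2 * v y ^ 2 / 2 + (∑ i, pd i u y * pd i v y)
          + (∑ i, (pd i (df u v) y - b i) ^ 2) / 2) = fun y => ((1 / 2) * (u y ^ 2 * v y ^ 2)
          + (∑ i, pd i u y * pd i v y)) + (1 / 2) * (∑ i, (pd i (df u v) y - b i) ^ 2) := by
      ext y; ring
    rw [c1, pd_add j (by exact (((Nice.const (1 / 2)).mul n1).add n4).diff)
        (by exact ((Nice.const (1 / 2)).mul n5).diff),
      pd_add j (by exact ((Nice.const (1 / 2)).mul n1).diff) n4.diff,
      pd_const_mul j _ n1.diff, pd_const_mul j _ n5.diff,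
      pd_sum j _ (fun i => (n2 i).diff), pd_sum j _ (fun i => (n3 i).diff),
      pd_mul j (hu.pow 2).diff (hv.pow 2).diff, pd_pow j 2 hu.diff, pd_pow j 2 hv.diff]
    have c2 : ∀ i, pd j (fun y => pd i u y * pd i v y) y
        = pd j (pd i u) y * pd i v y + pd i u y * pd j (pd i v) y := by
      intro i; rw [pd_mul j (hu.pd i).diff (hv.pd i).diff]
    have c3 : ∀ i, pd j (fun y => (pd i (df u v) y - b i) ^ 2) y
        = 2 * ((pd i (df u v) y - b i) * pd j (pd i (df u v)) y) := by
      intro i; rw [pd_pow j 2 (hb i).diff, pb]; simp; ring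
    simp only [c2, c3, ← Finset.mul_sum]
    simp
    ring
  simp only [e1]
  rw [e2]
  have hcomm : ∀ i (f : Euc n → ℝ), Nice f → pd j (pd i f) = pd i (pd j f) := fun i f hf =>
    pd_comm hf.smooth j i
  have e3 : lap (df u v) y = u y * v y ^ 2 - v y * u y ^ 2 := by
    rw [← h.equ y, ← h.eqv y, ← lap_sub hu.smooth hv.smooth]; rfl
  have key : ∑ i, (-(pd i (pd i u) y * pd j v y + pd i u y * pd i (pd j v) y
        + (pd i (pd i v) y * pd j u y + pd i v y * pd i (pd j u) y))
        - (pd i (pd i (df u v)) y * (pd j (df u v) y - b j)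
          + (pd i (df u v) y - b i) * pd i (pd j (df u v)) y))
      + ∑ i, (pd j (pd i u) y * pd i v y + pd i u y * pd j (pd i v) y)
        + ∑ i, (pd i (df u v) y - b i) * pd j (pd i (df u v)) y
      = - lap u y * pd j v y - lap v y * pd j u y - lap (df u v) y * (pd j (df u v) y - b j) := by
    rw [lap_eq, lap_eq, lap_eq, ← Finset.sum_neg_distrib, Finset.sum_mul, Finset.sum_mul,
      Finset.sum_mul, ← Finset.sum_sub_distrib, ← Finset.sum_sub_distrib,
      ← Finset.sum_add_distrib, ← Finset.sum_add_distrib]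
    refine Finset.sum_congr rfl fun i _ => ?_
    rw [hcomm i u hu, hcomm i v hv, hcomm i _ hw]
    ring
  have e4 : pd j (df u v) y = pd j u y - pd j v y := by rw [h.pd_df]
  rw [h.equ, h.eqv, e3, e4] at key
  rw [e3, e4]
  linear_combination -key

/-- The drift of `⟨w⟩` tested against a vector `b` is quadratic in `∇w - b`, up to interaction terms. -/
theorem dz_vec {s : ℝ} (hs : 0 < s) (x : Euc n) (b : Fin n → ℝ) (j : Fin n) :
    s ^ 2 * |M s x (lap (df u v)) * b j| ≤ (2 * n + 1) * (s * Th u v s x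
      + s * M s x (fun y => (1 + dist y x / s) ^ 2 * ∑ i, (pd i (df u v) y - b i) ^ 2)) := by
  have hu := h.nu
  have hv := h.nv
  have hw := h.nw
  set G : Fin n → Euc n → ℝ := fun i y => -(pd i u y * pd j v y + pd i v y * pd j u y)
          - (pd i (df u v) y - b i) * (pd j (df u v) y - b j) with hG
  set ρ : Euc n → ℝ := fun y => ∑ i, (pd i (df u v) y - b i) ^ 2 with hρ
  set P : Euc n → ℝ := fun y => u y ^ 2 * v y ^ 2 / 2 + (∑ i, pd i u y * pd i v y) + ρ y / 2 with hP
  have nG : ∀ i, Nice (G i) := fun i => by rw [hG]; fun_prop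
  have nρ : Nice ρ := Nice.sum _ fun i => by fun_prop
  have n4 : Nice (fun y => ∑ i, pd i u y * pd i v y) := Nice.sum _ fun i => by fun_prop
  have nP : Nice P := by rw [hP]; fun_prop
  have ncr : CP (cr u v) := CP.cr hu hv
  have cρ := nρ.cp
  have cP := nP.cp
  have cG := fun i => (nG i).cp
  have e0 : ∀ y, lap (df u v) y * b j = (∑ i, pd i (G i) y) + pd j P y := h.lap_mul_const b j
  have e1 : s ^ 2 * (M s x (lap (df u v)) * b j)
      = M s x (fun y => (∑ i, (y i - x i) * G i y) + (y j - x j) * P y) := by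
    have c1 : CP (fun y => ∑ i, (y i - x i) * G i y) := CP.sum _ fun i => by fun_prop
    have c2 : CP (fun y => ∑ i, pd i (G i) y) := CP.sum _ fun i => ((nG i).pd i).cp
    rw [← M_mul_const, M_congr e0, M_add c2 (nP.pd j).cp, M_add c1 (by fun_prop),
      M_sum _ (fun i => ((nG i).pd i).cp), M_sum (F := fun i y => (y i - x i) * G i y) _
        (fun i => by fun_prop), mul_add, Finset.mul_sum, M_ibp j nP.diff nP.cp (nP.pd j).cp]
    congr 1
    refine Finset.sum_congr rfl fun i _ => ?_
    rw [M_ibp i (nG i).diff (nG i).cp ((nG i).pd i).cp]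
  have hs2 : 0 ≤ s ^ 2 := sq_nonneg s
  rw [← abs_of_nonneg hs2, ← abs_mul, e1]
  have hrhs : (2 * n + 1) * (s * Th u v s x + s * M s x (fun y => (1 + dist y x / s) ^ 2 * ρ y))
      = M s x (fun y => (2 * n + 1) * s * ((1 + dist y x / s) ^ 2 * cr u v y
        + (1 + dist y x / s) ^ 2 * ρ y)) := by
    rw [M_const_mul, M_add (by fun_prop) (by fun_prop)]
    unfold Th; ring
  have hrhs' : (2 * n + 1) * (s * Th u v s x
      + s * M s x (fun y => (1 + dist y x / s) ^ 2 * ∑ i, (pd i (df u v) y - b i) ^ 2))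
      = M s x (fun y => (2 * n + 1) * s * ((1 + dist y x / s) ^ 2 * cr u v y
        + (1 + dist y x / s) ^ 2 * ρ y)) := hrhs
  rw [hrhs']
  refine (abs_M_le _).trans (M_mono ?_ (by fun_prop) fun y => ?_)
  · exact (CP.add (CP.sum _ fun i => by fun_prop) (by fun_prop)).abs
  have hX : ∀ i, |y i - x i| ≤ dist y x := by
    intro i
    rw [dist_eq_norm]
    have := EuclideanSpace.norm_eq (y - x)
    calc |y i - x i| = ‖(y - x) i‖ := by simp
      _ ≤ ‖y - x‖ := PiLp.norm_apply_le (y - x) i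
  have hd : dist y x ≤ s * (1 + dist y x / s) ^ 2 := by
    have : 0 ≤ dist y x / s := by positivity
    have e : s * (1 + dist y x / s) ^ 2 = s * (1 + 2 * (dist y x / s) + (dist y x / s) ^ 2) := by
      ring
    have e' : s * (dist y x / s) = dist y x := by field_simp
    have : 0 ≤ s * (dist y x / s) ^ 2 := by positivity
    nlinarith [dist_nonneg (x := y) (y := x)]
  have hcr := cr_nonneg u v y
  have hr0 : 0 ≤ ρ y := Finset.sum_nonneg fun _ _ => sq_nonneg _
  have hr : ∀ i, (pd i (df u v) y - b i) ^ 2 ≤ ρ y := fun i =>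
    Finset.single_le_sum (f := fun i => (pd i (df u v) y - b i) ^ 2)
      (fun _ _ => sq_nonneg _) (Finset.mem_univ i)
  have hGle : ∀ i, |G i y| ≤ 2 * cr u v y + ρ y := by
    intro i
    have a1 : |pd i u y * pd j v y| ≤ cr u v y := by rw [abs_mul]; exact pd_le_cr i j y
    have a2 : |pd i v y * pd j u y| ≤ cr u v y := by
      rw [abs_mul, mul_comm]; exact pd_le_cr j i y
    have a3 : |(pd i (df u v) y - b i) * (pd j (df u v) y - b j)| ≤ ρ y := by
      rw [abs_le]
      constructor <;> nlinarith [hr i, hr j, sq_nonneg ((pd i (df u v) y - b i) +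
        (pd j (df u v) y - b j)), sq_nonneg ((pd i (df u v) y - b i) - (pd j (df u v) y - b j))]
    rw [hG]
    rw [abs_le] at a1 a2 a3 ⊢
    constructor <;> dsimp only <;> linarith [a1.1, a1.2, a2.1, a2.2, a3.1, a3.2]
  have hPle : |P y| ≤ cr u v y + ρ y := by
    have h2 := abs_le.1 (sum_pd_le_cr (u := u) (v := v) y)
    have h3 : 0 ≤ u y ^ 2 * v y ^ 2 := by positivity
    rw [hP, abs_le]
    constructor <;> dsimp only <;> linarith [h2.1, h2.2]
  calc |(∑ i, (y i - x i) * G i y) + (y j - x j) * P y|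
      ≤ |∑ i, (y i - x i) * G i y| + |(y j - x j) * P y| := abs_add_le _ _
    _ ≤ (∑ i : Fin n, dist y x * (2 * cr u v y + ρ y)) + dist y x * (cr u v y + ρ y) := by
        gcongr
        · refine (Finset.abs_sum_le_sum_abs _ _).trans (Finset.sum_le_sum fun i _ => ?_)
          rw [abs_mul]
          exact mul_le_mul (hX i) (hGle i) (abs_nonneg _) dist_nonneg
        · rw [abs_mul]
          exact mul_le_mul (hX j) hPle (abs_nonneg _) dist_nonneg
    _ = dist y x * (n * (2 * cr u v y + ρ y) + (cr u v y + ρ y)) := by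
        rw [Finset.sum_const, Finset.card_univ, Fintype.card_fin, nsmul_eq_mul]; ring
    _ ≤ (s * (1 + dist y x / s) ^ 2) * ((2 * n + 1) * (cr u v y + ρ y)) := by
        gcongr
        have : 0 ≤ (n : ℝ) * ρ y := by positivity
        nlinarith
    _ = _ := by ring

end Sol

/-- The refined drift estimate: `|z'(s)| |β(2s)| ≤ C (Θ(s) + R(2s))`. -/
theorem Sol.exists_dz_bound (n : ℕ) : ∃ C : ℝ, 0 < C ∧ ∀ u v : Euc n → ℝ, Sol u v →
    ∀ s : ℝ, 0 < s → ∀ x, (s * M s x (lap (df u v))) ^ 2 * bsq u v (2 * s) x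
      ≤ C * (Th u v s x + Rm u v (2 * s) x) ^ 2 := by
  obtain ⟨C, hC, hw⟩ := M_weight n 2
  refine ⟨(n + 1) * ((2 * n + 1) * (1 + C)) ^ 2, by positivity, fun u v h s hs x => ?_⟩
  have hwn := h.nw
  have hR := Rm_nonneg u v (2 * s) x
  have hT := Sol.Th_nonneg (u := u) (v := v) s x
  have key : ∀ j, (s * M s x (lap (df u v))) ^ 2 * bt u v (2 * s) x j ^ 2
      ≤ ((2 * n + 1) * (1 + C)) ^ 2 * (Th u v s x + Rm u v (2 * s) x) ^ 2 := by
    intro j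
    have h1 := h.dz_vec hs x (bt u v (2 * s) x) j
    have h2 := hw (fun y => ∑ i, (pd i (df u v) y - bt u v (2 * s) x i) ^ 2)
      (CP.sum _ fun i => by fun_prop) (fun y => by positivity) s hs x
    have h3 : |s * M s x (lap (df u v)) * bt u v (2 * s) x j| ≤
        (2 * n + 1) * (1 + C) * (Th u v s x + Rm u v (2 * s) x) := by
      rw [mul_assoc, abs_mul, abs_of_pos hs]
      have h4 : s ^ 2 * |M s x (lap (df u v)) * bt u v (2 * s) x j|
          ≤ s * ((2 * n + 1) * (1 + C) * (Th u v s x + Rm u v (2 * s) x)) := by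
        refine h1.trans ?_
        have : s * M s x (fun y => (1 + dist y x / s) ^ 2 *
          ∑ i, (pd i (df u v) y - bt u v (2 * s) x i) ^ 2) ≤ s * (C * Rm u v (2 * s) x) := by
          gcongr; exact h2
        calc (2 * n + 1) * (s * Th u v s x + s * M s x (fun y => (1 + dist y x / s) ^ 2 *
                ∑ i, (pd i (df u v) y - bt u v (2 * s) x i) ^ 2))
            ≤ (2 * n + 1) * (s * Th u v s x + s * (C * Rm u v (2 * s) x)) := by gcongr
          _ ≤ (2 * n + 1) * (s * ((1 + C) * Th u v s x) + s * ((1 + C) * Rm u v (2 * s) x)) := by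
              gcongr <;> nlinarith
          _ = _ := by ring
      have h5 : s * (s * |M s x (lap (df u v)) * bt u v (2 * s) x j|)
          ≤ s * ((2 * n + 1) * (1 + C) * (Th u v s x + Rm u v (2 * s) x)) := by
        linarith [h4]
      exact le_of_mul_le_mul_left h5 hs
    have := pow_le_pow_left₀ (abs_nonneg _) h3 2
    rw [sq_abs] at this
    rw [← mul_pow, ← mul_pow]
    exact this
  unfold bsq
  rw [Finset.mul_sum]
  refine (Finset.sum_le_sum fun j _ => key j).trans ?_
  rw [Finset.sum_const, Finset.card_univ, Fintype.card_fin, nsmul_eq_mul, mul_assoc]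
  gcongr; linarith

end balance

/-! ### One step of the bootstrap -/

section bootstrap
variable {n : ℕ}

/-- The imbalance `|⟨w⟩| / √H`. -/
noncomputable def yq (u v : Euc n → ℝ) (s : ℝ) (x : Euc n) : ℝ :=
  |zm u v s x| / Real.sqrt (Hm u v s x)

namespace Sol
variable {u v : Euc n → ℝ} (h : Sol u v)
include h

theorem k_mono {s t : ℝ} (hs : 0 < s) (hst : s ≤ t) (x : Euc n) :
    s ^ 2 * Hm u v s x ≤ t ^ 2 * Hm u v t x := by
  have := h.Hpos s x
  have := h.H_mono hs hst x
  gcongr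

theorem ep_anti {s t : ℝ} (hs : 0 < s) (hst : s ≤ t) (x : Euc n) :
    ep u v t x ≤ ep u v s x := by
  have := h.Hpos s x
  exact Real.rpow_le_rpow_of_nonpos (by positivity) (h.k_mono hs hst x) (by norm_num)

theorem z_sq {s : ℝ} (x : Euc n) : zm u v s x ^ 2 = yq u v s x ^ 2 * Hm u v s x := by
  have := h.Hpos s x
  rw [yq, div_pow, sq_abs, Real.sq_sqrt this.le]; field_simp

/-- Crude propagation of the mean of `w` to comparable scales. -/
theorem z_crude {s A : ℝ} (hs : 0 < s) (x : Euc n) (hA : 0 < A)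
    (hR : ∀ t ∈ Icc s (4 * s), t ^ 2 * Rm u v t x ≤ 2 * zm u v t x ^ 2 + A) {t : ℝ}
    (ht : t ∈ Icc s (4 * s)) :
    zm u v t x ^ 2 ≤ 4 ^ (2 * n + 1) * (zm u v s x ^ 2 + A) := by
  have hG : ∀ r, 0 < zm u v r x ^ 2 + A := fun r => by positivity
  have h1 := mono_of_hasDeriv (f := fun r => (2 * n + 1) * Real.log r
      - Real.log (zm u v r x ^ 2 + A))
    (f' := fun r => (2 * n + 1) * r⁻¹ - (2 * zm u v r x ^ (2 - 1) * (r * M r x (lap (df u v))))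
      / (zm u v r x ^ 2 + A)) ht.1
    (fun r hr => by
      have h0 := hs.trans_le hr.1
      exact ((Real.hasDerivAt_log h0.ne').const_mul _).sub
        ((((h.hasDeriv_z r x).pow 2).add_const A).log (hG r).ne'))
    (fun r hr => by
      have h0 := hs.trans_le hr.1
      have h2 := h.dz_crude (s := r) x
      have h3 := hR r ⟨hr.1, hr.2.trans ht.2⟩
      have h4 : r * (2 * zm u v r x ^ (2 - 1) * (r * M r x (lap (df u v))))
          ≤ (2 * n + 1) * (zm u v r x ^ 2 + A) := by
        have h5 : (n : ℝ) * (r ^ 2 * Rm u v r x) ≤ n * (2 * zm u v r x ^ 2 + A) := by gcongr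
        have h6 : 0 ≤ n * A := by positivity
        norm_num
        nlinarith [sq_nonneg (zm u v r x - r ^ 2 * M r x (lap (df u v)))]
      rw [sub_nonneg, div_le_iff₀ (hG r)]
      have : (2 * n + 1) * r⁻¹ * (zm u v r x ^ 2 + A)
        = r⁻¹ * ((2 * n + 1) * (zm u v r x ^ 2 + A)) := by ring
      rw [this]
      calc _ = r⁻¹ * (r * (2 * zm u v r x ^ (2 - 1) * (r * M r x (lap (df u v))))) := by field_simp
        _ ≤ _ := by gcongr)
  have h0 := hs.trans_le ht.1
  have h2 : Real.log t ≤ Real.log 4 + Real.log s := by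
    rw [← Real.log_mul (by norm_num) hs.ne']; exact Real.log_le_log h0 ht.2
  have h3 : Real.log (zm u v t x ^ 2 + A)
      ≤ Real.log (4 ^ (2 * n + 1) * (zm u v s x ^ 2 + A)) := by
    rw [Real.log_mul (by positivity) (hG s).ne', Real.log_pow]
    push_cast
    have : (0 : ℝ) ≤ 2 * n + 1 := by positivity
    nlinarith
  have := (Real.log_le_log_iff (hG t) (by have := hG s; positivity)).1 h3
  linarith

end Sol

/-- Control of all relevant quantities on the scales `[s, 4s]` in terms of scale `s`. -/
theorem Sol.exists_crude (n : ℕ) : ∃ C : ℝ, 1 ≤ C ∧ ∀ u v : Euc n → ℝ, Sol u v →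
    ∀ s : ℝ, 0 < s → ∀ x, 1 ≤ s ^ 2 * Hm u v s x → ∀ t ∈ Icc s (4 * s),
      zm u v t x ^ 2 ≤ C * (yq u v s x ^ 2 + ep u v s x) * Hm u v s x ∧
      t ^ 2 * Rm u v t x ≤ C * (yq u v s x ^ 2 + ep u v s x) * Hm u v s x ∧
      t ^ 2 * Th u v t x ≤ C * (yq u v s x ^ 2 + ep u v s x) * Hm u v s x ∧
      M t x (fun y => u y * v y) ≤ C * (yq u v s x ^ 2 + ep u v s x) * Hm u v s x ∧
      Hm u v t x - t ^ 2 * bsq u v t x ≤ C * (yq u v s x ^ 2 + ep u v s x) * Hm u v s x ∧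
      Hm u v t x - t ^ 2 * Em u v t x ≤ C * (yq u v s x ^ 2 + ep u v s x) * Hm u v s x := by
  obtain ⟨CT, hCT, hT⟩ := Sol.exists_Th_bound n
  set A := 4 + 4 * CT with hA
  set C1 : ℝ := 4 ^ (2 * n + 1) * (1 + 48 * A) with hC1
  have hA0 : 4 ≤ A := by linarith
  have hC10 : 1 ≤ C1 := by
    have : (1 : ℝ) ≤ 4 ^ (2 * n + 1) := one_le_pow₀ (by norm_num)
    nlinarith
  refine ⟨2 * C1 + 48 * A, by linarith, fun u v h s hs x hk t ht => ?_⟩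
  have hHs := h.Hpos s x
  have hes := h.ep_pos hs x
  have hH4 : ∀ r ∈ Icc s (4 * s), Hm u v r x ≤ 48 * Hm u v s x := by
    intro r hr
    have h1 := h.h_anti hs hr.1 x
    have h2 : r ^ 2 ≤ 16 * s ^ 2 := by
      have h0 := hs.trans_le hr.1
      nlinarith [hr.2]
    have h3 : Hm u v r x * s ^ 2 ≤ 48 * Hm u v s x * s ^ 2 := by nlinarith
    exact le_of_mul_le_mul_right h3 (by positivity)
  set Q := ep u v s x * Hm u v s x with hQ
  have hQ0 : 0 < Q := by positivity
  have hEH : ∀ r ∈ Icc s (4 * s), ep u v r x * Hm u v r x ≤ 48 * Q := by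
    intro r hr
    have h0 := hs.trans_le hr.1
    have h1 := h.ep_anti hs hr.1 x
    have h2 := h.ep_pos h0 x
    calc ep u v r x * Hm u v r x ≤ ep u v s x * (48 * Hm u v s x) := by
          gcongr
          · exact (h.Hpos r x).le
          · exact hH4 r hr
      _ = _ := by rw [hQ]; ring
  have hTh : ∀ r ∈ Icc s (4 * s), r ^ 2 * Th u v r x ≤ CT * (48 * Q) := by
    intro r hr
    have h0 := hs.trans_le hr.1
    have h1 := hT u v h r h0 x (hk.trans (h.k_mono hs hr.1 x))
    have h2 := hEH r hr
    rw [mul_assoc] at h1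
    exact h1.trans (by gcongr)
  have huv : ∀ r ∈ Icc s (4 * s), M r x (fun y => u y * v y) ≤ 48 * Q := by
    intro r hr
    have h0 := hs.trans_le hr.1
    exact (h.uv_le h0 x (hk.trans (h.k_mono hs hr.1 x))).trans (hEH r hr)
  have hRr : ∀ r ∈ Icc s (4 * s), r ^ 2 * Rm u v r x ≤ 2 * zm u v r x ^ 2 + 48 * A * Q := by
    intro r hr
    have h0 := hs.trans_le hr.1
    have h1 := h.R_le h0 x
    have h2 := huv r hr
    have h3 := hTh r hr
    rw [hA]; linarith
  have hz := h.z_crude hs x (by positivity) hRr ht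
  have hyz := h.z_sq (s := s) x
  set Z := yq u v s x ^ 2 * Hm u v s x with hZ
  have hZ0 : 0 ≤ Z := by positivity
  have hz2 : zm u v t x ^ 2 ≤ C1 * (Z + Q) := by
    refine hz.trans ?_
    have h1 : 0 ≤ A * Z := by positivity
    have h2 : Z + 48 * A * Q ≤ (1 + 48 * A) * (Z + Q) := by nlinarith
    rw [hyz, hC1, mul_assoc (4 ^ (2 * n + 1)) (1 + 48 * A)]
    gcongr
  have hgoal : ∀ B : ℝ, B * (yq u v s x ^ 2 + ep u v s x) * Hm u v s x = B * (Z + Q) := by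
    intro B; rw [hZ, hQ]; ring
  simp only [hgoal]
  have h0 := hs.trans_le ht.1
  have hAZ : 0 ≤ A * Z := by positivity
  have hAQ : 0 ≤ A * Q := by positivity
  have hCQ : 0 ≤ CT * Q := by positivity
  have hCZ : 0 ≤ CT * Z := by positivity
  have hC1Q : 0 ≤ C1 * Q := by positivity
  have hC1Z : 0 ≤ C1 * Z := by positivity
  have hAQ' : A * Q = 4 * Q + 4 * (CT * Q) := by rw [hA]; ring
  have e : (2 * C1 + 48 * A) * (Z + Q) = 2 * (C1 * Z) + 2 * (C1 * Q) + 48 * (A * Z) + 48 * (A * Q) := by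
    ring
  have g1 := hRr t ht
  have g2 := hTh t ht
  have g3 := huv t ht
  have g4 := h.gap_w t x
  have g5 := h.N_ge h0 x
  rw [e]
  rw [mul_add] at hz2
  have e2 : CT * (48 * Q) = 48 * (CT * Q) := by ring
  have e3 : 48 * A * Q = 48 * (A * Q) := by ring
  rw [e2] at g2
  rw [e3] at g1
  refine ⟨by linarith, by linarith, by linarith, by linarith, ?_, by linarith⟩
  have g6 := h.R_le h0 x
  linarith

set_option maxHeartbeats 1000000 in
/-- One doubling step of the bootstrap. -/
theorem Sol.exists_step (n : ℕ) : ∃ C : ℝ, 1 ≤ C ∧ ∀ u v : Euc n → ℝ, Sol u v →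
    ∀ s : ℝ, 0 < s → ∀ x, 1 ≤ s ^ 2 * Hm u v s x → C * (yq u v s x + ep u v s x) ≤ 1 →
      yq u v (2 * s) x ≤ 3 / 4 * yq u v s x + C * ep u v s x ∧
      ep u v (2 * s) x ≤ 19 / 20 * ep u v s x ∧
      ∀ t ∈ Icc s (2 * s), Real.log (Hm u v s x) - 2 * Real.log s
        - C * (yq u v s x + ep u v s x) ≤ Real.log (Hm u v t x) - 2 * Real.log t := by
  obtain ⟨A, hA, hcr⟩ := Sol.exists_crude n
  obtain ⟨B, hB, hdz⟩ := Sol.exists_dz_bound n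
  set C4 := 2 * A * Real.sqrt (32 * B) with hC4
  have hC40 : 0 ≤ C4 := by positivity
  refine ⟨10 * A + 10 * C4, by linarith, fun u v h s hs x hk hsm => ?_⟩
  have hHs := h.Hpos s x
  have hes := h.ep_pos hs x
  have hy0 : 0 ≤ yq u v s x := by unfold yq; positivity
  set y := yq u v s x with hy
  set e := ep u v s x with he
  have hAy : 0 ≤ A * y := by positivity
  have hAe : 0 ≤ A * e := by positivity
  have hC4y : 0 ≤ C4 * y := by positivity
  have hC4e : 0 ≤ C4 * e := by positivity
  have hsm' : 10 * (A * y) + 10 * (A * e) + 10 * (C4 * y) + 10 * (C4 * e) ≤ 1 := by linarith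
  have hyA : y ≤ A * y := le_mul_of_one_le_left hy0 hA
  have hy1 : y ≤ 1 := by linarith
  have hq : A * (y ^ 2 + e) ≤ A * y + A * e := by nlinarith
  have hq10 : A * (y ^ 2 + e) ≤ 1 / 10 := by linarith
  have hcr' := hcr u v h s hs x hk
  have hNs : 1 - A * (y ^ 2 + e) ≤ Nm u v s x := by
    have h1 := (hcr' s ⟨le_rfl, by linarith⟩).2.2.2.2.2
    unfold Nm
    rw [le_div_iff₀ hHs]
    linarith
  have hlog : ∀ t ∈ Icc s (2 * s), Real.log (Hm u v s x) - 2 * Real.log s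
        - 2 * (A * (y ^ 2 + e)) * (Real.log t - Real.log s)
        ≤ Real.log (Hm u v t x) - 2 * Real.log t := by
    intro t ht
    have h1 := h.logH_lower hs ht.1 x
    have h2 : 0 ≤ Real.log t - Real.log s := sub_nonneg.2 (Real.log_le_log hs ht.1)
    nlinarith
  have hl2 : 0 < Real.log 2 := Real.log_pos (by norm_num)
  have hl2' := Real.log_two_lt_d9
  have hH2 : 81 / 25 * Hm u v s x ≤ Hm u v (2 * s) x := by
    have h1 := hlog (2 * s) ⟨by linarith, le_rfl⟩
    rw [Real.log_mul (by norm_num) hs.ne'] at h1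
    have h2 : Real.log (81 / 25) ≤ 9 / 5 * Real.log 2 := by
      have h3 : Real.log ((9 / 5) ^ 10) ≤ Real.log (2 ^ 9) :=
        Real.log_le_log (by norm_num) (by norm_num)
      rw [Real.log_pow, Real.log_pow] at h3
      have h4 : Real.log (81 / 25) = 2 * Real.log (9 / 5) := by
        rw [← Real.log_rpow (by norm_num)]; norm_num
      push_cast at h3
      linarith
    have h3 : Real.log (81 / 25 * Hm u v s x) ≤ Real.log (Hm u v (2 * s) x) := by
      rw [Real.log_mul (by norm_num) hHs.ne']
      nlinarith
    exact (Real.log_le_log_iff (by positivity) (h.Hpos _ x)).1 h3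
  have hsq : 9 / 5 * Real.sqrt (Hm u v s x) ≤ Real.sqrt (Hm u v (2 * s) x) := by
    apply Real.le_sqrt_of_sq_le
    rw [mul_pow, Real.sq_sqrt hHs.le]; linarith
  set r := Real.sqrt (Hm u v s x) with hr
  have hr0 : 0 < r := Real.sqrt_pos.2 hHs
  have hr2 : r ^ 2 = Hm u v s x := Real.sq_sqrt hHs.le
  -- the drift bound
  have hd : ∀ t ∈ Icc s (2 * s), |t * M t x (lap (df u v))| ≤ C4 * (y ^ 2 + e) * r / s := by
    intro t ht
    have h0 := hs.trans_le ht.1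
    have h1 := hdz u v h t h0 x
    obtain ⟨-, -, k1, -, -, -⟩ := hcr' t ⟨ht.1, by linarith [ht.2]⟩
    obtain ⟨-, k2, -, -, k3, -⟩ := hcr' (2 * t) ⟨by linarith [ht.1], by linarith [ht.2]⟩
    have hb : r ^ 2 / (32 * s ^ 2) ≤ bsq u v (2 * t) x := by
      have h2 := h.H_mono hs (show s ≤ 2 * t by linarith [ht.1]) x
      have h3 : r ^ 2 / 2 ≤ (2 * t) ^ 2 * bsq u v (2 * t) x := by
        have q := mul_le_mul_of_nonneg_right hq10 hHs.le
        linarith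
      have h4 : (2 * t) ^ 2 ≤ 16 * s ^ 2 := by nlinarith [ht.2]
      rw [div_le_iff₀ (by positivity)]
      have q := mul_le_mul_of_nonneg_right h4 (bsq_nonneg u v (2 * t) x)
      linarith
    have hTR : Th u v t x + Rm u v (2 * t) x ≤ 2 * A * (y ^ 2 + e) * r ^ 2 / s ^ 2 := by
      have hst : s ^ 2 ≤ t ^ 2 := by have := ht.1; gcongr
      have hTn := Sol.Th_nonneg (u := u) (v := v) t x
      have hRn := Rm_nonneg u v (2 * t) x
      rw [le_div_iff₀ (by positivity), hr2]
      have q1 : Th u v t x * s ^ 2 ≤ Th u v t x * t ^ 2 := by gcongr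
      have q2 : Rm u v (2 * t) x * s ^ 2 ≤ Rm u v (2 * t) x * (2 * t) ^ 2 := by
        gcongr; linarith [ht.1]
      linarith
    have hTR0 : 0 ≤ Th u v t x + Rm u v (2 * t) x :=
      add_nonneg (Sol.Th_nonneg t x) (Rm_nonneg u v (2 * t) x)
    have h5 : (t * M t x (lap (df u v))) ^ 2 * (r ^ 2 / (32 * s ^ 2))
        ≤ B * (2 * A * (y ^ 2 + e) * r ^ 2 / s ^ 2) ^ 2 :=
      calc _ ≤ (t * M t x (lap (df u v))) ^ 2 * bsq u v (2 * t) x := by gcongr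
        _ ≤ _ := h1
        _ ≤ _ := by gcongr
    apply abs_le_of_sq_le_sq' _ (by positivity) |> abs_le.2
    have h6 : (C4 * (y ^ 2 + e) * r / s) ^ 2 * (r ^ 2 / (32 * s ^ 2))
        = B * (2 * A * (y ^ 2 + e) * r ^ 2 / s ^ 2) ^ 2 := by
      rw [hC4]
      have : Real.sqrt (32 * B) ^ 2 = 32 * B := Real.sq_sqrt (by positivity)
      have e1 : (2 * A * Real.sqrt (32 * B) * (y ^ 2 + e) * r / s) ^ 2
        = Real.sqrt (32 * B) ^ 2 * (2 * A * (y ^ 2 + e) * r / s) ^ 2 := by ring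
      rw [e1, this]
      field_simp
    rw [← h6] at h5
    exact le_of_mul_le_mul_right h5 (by positivity)
  have hz : |zm u v (2 * s) x| ≤ |zm u v s x| + C4 * (y ^ 2 + e) * r := by
    set D := C4 * (y ^ 2 + e) * r / s with hD
    have hDs : D * s = C4 * (y ^ 2 + e) * r := by rw [hD]; field_simp
    have m1 := mono_of_hasDeriv (f := fun t => D * t - zm u v t x)
      (f' := fun t => D * 1 - t * M t x (lap (df u v))) (show s ≤ 2 * s by linarith)
      (fun t _ => ((hasDerivAt_id t).const_mul D).sub (h.hasDeriv_z t x))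
      (fun t ht => by have := (abs_le.1 (hd t ht)).2; linarith)
    have m2 := mono_of_hasDeriv (f := fun t => D * t + zm u v t x)
      (f' := fun t => D * 1 + t * M t x (lap (df u v))) (show s ≤ 2 * s by linarith)
      (fun t _ => ((hasDerivAt_id t).const_mul D).add (h.hasDeriv_z t x))
      (fun t ht => by have := (abs_le.1 (hd t ht)).1; linarith)
    rw [← hDs]
    rw [abs_le]
    constructor <;> linarith [neg_abs_le (zm u v s x), le_abs_self (zm u v s x)]
  have hzs : |zm u v s x| = y * r := by
    rw [hy, hr, yq]; field_simp
  refine ⟨?_, ?_, ?_⟩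
  · unfold yq
    rw [div_le_iff₀ (by linarith)]
    rw [hzs] at hz
    have h1 : C4 * (y ^ 2 + e) * r ≤ (1 / 10 * y + C4 * e) * r := by
      refine mul_le_mul_of_nonneg_right ?_ hr0.le
      nlinarith
    have h2 : (3 / 4 * y + (10 * A + 10 * C4) * e) * (9 / 5 * r)
        ≤ (3 / 4 * y + (10 * A + 10 * C4) * e) * Real.sqrt (Hm u v (2 * s) x) :=
      mul_le_mul_of_nonneg_left hsq (by positivity)
    have h3 : y * r + (1 / 10 * y + C4 * e) * r
        ≤ (3 / 4 * y + (10 * A + 10 * C4) * e) * (9 / 5 * r) := by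
      have h4 : 0 ≤ y * r := by positivity
      have h5 : 0 ≤ A * e * r := by positivity
      have h6 : 0 ≤ C4 * e * r := by positivity
      have h7 : (3 / 4 * y + (10 * A + 10 * C4) * e) * (9 / 5 * r)
        = 27 / 20 * (y * r) + 18 * (A * e * r) + 18 * (C4 * e * r) := by ring
      rw [h7]
      linarith
    linarith
  · by_contra! hc
    have h1 := h.ep_pow hs x
    have h2 := h.ep_pow (show 0 < 2 * s by linarith) x
    have h3 : (19 / 20 * e) ^ 36 ≤ ep u v (2 * s) x ^ 36 :=
      pow_le_pow_left₀ (by positivity) hc.le _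
    have h4 : (2 * s) ^ 2 * Hm u v (2 * s) x ≥ 8 * (s ^ 2 * Hm u v s x) := by nlinarith
    have h5 : (1 / 7) * e ^ 36 ≤ (19 / 20 * e) ^ 36 := by
      rw [mul_pow]; gcongr; norm_num
    have h6 : ((1 / 7) * e ^ 36) * (8 * (s ^ 2 * Hm u v s x))
        ≤ ep u v (2 * s) x ^ 36 * ((2 * s) ^ 2 * Hm u v (2 * s) x) := by
      gcongr
      exact h5.trans h3
    rw [h2] at h6
    linarith
  · intro t ht
    have h1 := hlog t ht
    have h2 : Real.log t - Real.log s ≤ 1 := by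
      have := Real.log_le_log (hs.trans_le ht.1) ht.2
      rw [Real.log_mul (by norm_num) hs.ne'] at this
      linarith
    have h3 : 2 * (A * (y ^ 2 + e)) * (Real.log t - Real.log s) ≤ 2 * (A * (y ^ 2 + e)) * 1 := by
      gcongr
    linarith

end bootstrap

/-! ### The balance bootstrap -/

section nearlinear
variable {n : ℕ}

/-- At scale `s` around `x`, the function `w = u - v` is `ε`-close to a linear function vanishing at
`x`, and the interaction of `u` and `v` is negligible. -/
structure NearLin (ε : ℝ) (u v : Euc n → ℝ) (s : ℝ) (x : Euc n) : Prop where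
  z : zm u v s x ^ 2 ≤ ε * Hm u v s x
  R : s ^ 2 * Rm u v s x ≤ ε * Hm u v s x
  Th : s ^ 2 * Th u v s x ≤ ε * Hm u v s x
  uv : M s x (fun y => u y * v y) ≤ ε * Hm u v s x
  b : Hm u v s x - s ^ 2 * bsq u v s x ≤ ε * Hm u v s x

theorem Sol.ep_small {u v : Euc n → ℝ} (h : Sol u v) {s δ : ℝ} (hs : 0 < s) (x : Euc n)
    (hδ : 0 < δ) (hk : (δ⁻¹) ^ 36 ≤ s ^ 2 * Hm u v s x) : ep u v s x ≤ δ := by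
  by_contra! hc
  have h1 := h.ep_pow hs x
  have h2 : δ ^ 36 < ep u v s x ^ 36 := pow_lt_pow_left₀ hc hδ.le (by norm_num)
  have h3 : δ ^ 36 * (δ⁻¹) ^ 36 < ep u v s x ^ 36 * (s ^ 2 * Hm u v s x) := by
    have : 0 < ep u v s x ^ 36 := by have := h.ep_pos hs x; positivity
    have : 0 < (δ⁻¹) ^ 36 := by positivity
    calc δ ^ 36 * (δ⁻¹) ^ 36 < ep u v s x ^ 36 * (δ⁻¹) ^ 36 := by gcongr
      _ ≤ _ := by gcongr
  rw [h1, ← mul_pow, mul_inv_cancel₀ hδ.ne', one_pow] at h3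
  exact lt_irrefl _ h3

set_option maxHeartbeats 1000000 in
/-- The balance bootstrap: a balanced ball of large `s²H` stays balanced and nearly linear at all
larger scales, and the slope does not decay. -/
theorem Sol.exists_bal (n : ℕ) {ε : ℝ} (hε : 0 < ε) : ∃ η K : ℝ, 0 < η ∧ 1 ≤ K ∧
    ∀ u v : Euc n → ℝ, Sol u v → ∀ s : ℝ, 0 < s → ∀ x, K ≤ s ^ 2 * Hm u v s x →
      |zm u v s x| ≤ η * Real.sqrt (Hm u v s x) → ∀ S, s ≤ S →
        Hm u v s x * S ^ 2 ≤ 4 * (Hm u v S x * s ^ 2) ∧ NearLin ε u v S x := by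
  obtain ⟨A, hA, hcr⟩ := Sol.exists_crude n
  obtain ⟨C, hC, hst⟩ := Sol.exists_step n
  set δ := min (ε / A) (1 / (51 * C)) with hδ
  have hδ0 : 0 < δ := lt_min (by positivity) (by positivity)
  have hδ1 : A * δ ≤ ε := by
    have := min_le_left (ε / A) (1 / (51 * C))
    rw [← hδ, le_div_iff₀ (by positivity)] at this; linarith
  have hδ2 : 51 * C * δ ≤ 1 := by
    have := min_le_right (ε / A) (1 / (51 * C))
    rw [← hδ, le_div_iff₀ (by positivity)] at this; linarith
  refine ⟨δ / 2, max 1 ((δ / (80 * C))⁻¹ ^ 36), by positivity, le_max_left _ _,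
    fun u v h s hs x hk hz S hS => ?_⟩
  have hk1 : 1 ≤ s ^ 2 * Hm u v s x := (le_max_left _ _).trans hk
  have he0 := h.ep_small hs x (by positivity : 0 < δ / (80 * C)) ((le_max_right _ _).trans hk)
  have hy0 : ∀ t, 0 ≤ yq u v t x := fun t => by unfold yq; positivity
  have hy : yq u v s x ≤ δ / 2 := by
    unfold yq
    rw [div_le_iff₀ (Real.sqrt_pos.2 (h.Hpos s x))]; exact hz
  set Φ : ℝ → ℝ := fun t => yq u v t x + 40 * C * ep u v t x with hΦ
  have hΦ0 : Φ s ≤ δ := by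
    rw [le_div_iff₀ (by positivity)] at he0
    simp only [hΦ]; linarith
  have hΦy : ∀ t, 0 < t → yq u v t x + ep u v t x ≤ Φ t := by
    intro t ht
    have := h.ep_pos ht x
    simp only [hΦ]; nlinarith
  have hind : ∀ k : ℕ, Φ (2 ^ k * s) ≤ Φ s ∧
      Real.log (Hm u v s x) - 2 * Real.log s - 50 * C * (Φ s - Φ (2 ^ k * s))
        ≤ Real.log (Hm u v (2 ^ k * s) x) - 2 * Real.log (2 ^ k * s) := by
    intro k
    induction k with
    | zero => simp
    | succ k ih =>
      obtain ⟨i1, i2⟩ := ih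
      have hsk : 0 < 2 ^ k * s := by positivity
      have hle : s ≤ 2 ^ k * s := le_mul_of_one_le_left hs.le (one_le_pow₀ (by norm_num))
      have h1 := hΦy _ hsk
      obtain ⟨j1, j2, j3⟩ := hst u v h (2 ^ k * s) hsk x (hk1.trans (h.k_mono hs hle x))
        (by nlinarith)
      have e : (2 : ℝ) ^ (k + 1) * s = 2 * (2 ^ k * s) := by ring
      rw [e]
      have hep := h.ep_pos hsk x
      have j4 : Φ (2 * (2 ^ k * s)) ≤ 49 / 50 * Φ (2 ^ k * s) := by
        simp only [hΦ]
        have := hy0 (2 ^ k * s)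
        nlinarith
      have hΦp : 0 ≤ Φ (2 ^ k * s) := by
        have := hy0 (2 ^ k * s)
        linarith
      refine ⟨by linarith, ?_⟩
      have j5 := j3 (2 * (2 ^ k * s)) ⟨by linarith, le_rfl⟩
      have j6 : C * (yq u v (2 ^ k * s) x + ep u v (2 ^ k * s) x) ≤ C * Φ (2 ^ k * s) := by gcongr
      nlinarith
  obtain ⟨k, hk1', hk2⟩ := exists_nat_pow_near (show 1 ≤ S / s by rwa [one_le_div hs])
    (one_lt_two : (1 : ℝ) < 2)
  rw [le_div_iff₀ hs] at hk1'
  rw [div_lt_iff₀ hs] at hk2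
  have hS2 : S ≤ 2 * (2 ^ k * s) := by rw [pow_succ] at hk2; linarith
  obtain ⟨i1, i2⟩ := hind k
  have hsk : 0 < 2 ^ k * s := by positivity
  have hle : s ≤ 2 ^ k * s := le_mul_of_one_le_left hs.le (one_le_pow₀ (by norm_num))
  have h1 := hΦy _ hsk
  have hkk := hk1.trans (h.k_mono hs hle x)
  have hS0 := hs.trans_le hS
  obtain ⟨-, -, j3⟩ := hst u v h (2 ^ k * s) hsk x hkk (by nlinarith)
  have j4 := j3 S ⟨hk1', hS2⟩
  obtain ⟨c1, c2, c3, c4, c5, -⟩ := hcr u v h (2 ^ k * s) hsk x hkk S ⟨hk1', by linarith⟩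
  have hep := h.ep_pos hsk x
  have hyk := hy0 (2 ^ k * s)
  have hm := h.H_mono hsk hk1' x
  have hHp := h.Hpos (2 ^ k * s) x
  have hfin : A * (yq u v (2 ^ k * s) x ^ 2 + ep u v (2 ^ k * s) x) * Hm u v (2 ^ k * s) x
      ≤ ε * Hm u v S x := by
    have : A * (yq u v (2 ^ k * s) x ^ 2 + ep u v (2 ^ k * s) x) ≤ ε := by
      refine le_trans ?_ hδ1
      have hδ3 : δ ≤ 1 := by nlinarith
      have : yq u v (2 ^ k * s) x ^ 2 ≤ yq u v (2 ^ k * s) x := by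
        have : yq u v (2 ^ k * s) x ≤ 1 := by linarith
        nlinarith
      gcongr
      linarith
    gcongr
  refine ⟨?_, c1.trans hfin, c2.trans hfin, c3.trans hfin, c4.trans hfin, c5.trans hfin⟩
  have hHs := h.Hpos s x
  have hHS := h.Hpos S x
  have hΦp : 0 ≤ Φ (2 ^ k * s) := by linarith
  have j6 : C * (yq u v (2 ^ k * s) x + ep u v (2 ^ k * s) x) ≤ C * Φ s := by
    gcongr; linarith
  have j7 : C * Φ s ≤ C * δ := by gcongr
  have j8 : 0 ≤ C * Φ (2 ^ k * s) := by positivity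
  have hlog4 : 1 ≤ Real.log 4 := by
    have : Real.log 4 = 2 * Real.log 2 := by
      rw [← Real.log_rpow (by norm_num)]; norm_num
    rw [this]; linarith [Real.log_two_gt_d9]
  have : Real.log (Hm u v s x * S ^ 2) ≤ Real.log (4 * (Hm u v S x * s ^ 2)) := by
    rw [Real.log_mul hHs.ne' (by positivity), Real.log_mul (by norm_num) (by positivity),
      Real.log_mul hHS.ne' (by positivity), Real.log_pow, Real.log_pow]
    push_cast
    linarith
  exact (Real.log_le_log_iff (by positivity) (by positivity)).1 this

end nearlinear

/-! ### Existence of a balanced point -/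

section existence
variable {n : ℕ}

theorem sign_of_ne_zero {f : ℝ → ℝ} {a b : ℝ} (hab : a ≤ b) (hf : ContinuousOn f (Icc a b))
    (h0 : ∀ t ∈ Icc a b, f t ≠ 0) : 0 < f a ↔ 0 < f b := by
  constructor
  · intro ha
    by_contra! hb
    obtain ⟨t, ht, h⟩ := intermediate_value_Icc' hab hf ⟨hb, ha.le⟩
    exact h0 t ht h
  · intro hb
    by_contra! ha
    obtain ⟨t, ht, h⟩ := intermediate_value_Icc hab hf ⟨ha, hb.le⟩
    exact h0 t ht h

namespace Sol

theorem zm_swap {u v : Euc n → ℝ} (s : ℝ) (x : Euc n) : zm v u s x = - zm u v s x := by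
  unfold zm; rw [← M_neg]; exact M_congr fun y => by unfold df; ring

variable {u v : Euc n → ℝ} (h : Sol u v)
include h

theorem z_eq (s : ℝ) (x : Euc n) : zm u v s x = M s x u - M s x v :=
  M_sub h.nu.cp h.nv.cp

theorem continuous_z : Continuous (fun q : Euc n × ℝ => zm u v q.2 q.1) := continuous_M h.nw

theorem continuous_H : Continuous (fun q : Euc n × ℝ => Hm u v q.2 q.1) := continuous_M h.nH

theorem ab_le (s : ℝ) (x : Euc n) :
    M s x u * M s x v ≤ M s x (fun y => u y * v y) + s ^ 2 * Em u v s x / 2 := by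
  have h1 := cov_sq_le h.nu.cp h.nv.cp s x
  have h2 := h.var_u_le s x
  have h3 := h.swap.var_u_le s x
  have h4 : 0 ≤ M s x (fun y => u y ^ 2) - M s x u ^ 2 := by
    linarith [M_sq_le (s := s) (x := x) h.nu.cp]
  have h5 : 0 ≤ M s x (fun y => v y ^ 2) - M s x v ^ 2 := by
    linarith [M_sq_le (s := s) (x := x) h.nv.cp]
  have h6 := h.E_eq s x
  have h7 := h.Fpos s x
  have h8 : 0 ≤ M s x (gr u) := M_nonneg (gr_nonneg u)
  have h9 : 0 ≤ M s x (gr v) := M_nonneg (gr_nonneg v)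
  set Vu := M s x (fun y => u y ^ 2) - M s x u ^ 2
  set Vv := M s x (fun y => v y ^ 2) - M s x v ^ 2
  have hV : Vu + Vv ≤ s ^ 2 * Em u v s x := by
    rw [h6]; nlinarith [sq_nonneg s]
  have h10 : (M s x (fun y => u y * v y) - M s x u * M s x v) ^ 2 ≤ ((Vu + Vv) / 2) ^ 2 := by
    nlinarith [sq_nonneg (Vu - Vv)]
  have := (abs_le_of_sq_le_sq' h10 (by linarith)).1
  linarith

/-- If at a fixed scale `v` is everywhere dominated by `u` in the mean (or the height is bounded),
the mean squares of `v` stay bounded. -/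
theorem q_bdd {s K : ℝ} (hs : 0 < s) (hK : 0 ≤ K)
    (hy : ∀ y, M s y v ≤ M s y u ∨ Hm u v s y ≤ K) (x : Euc n) :
    ∃ C : ℝ, 0 < C ∧ ∀ t, s ≤ t → 1 ≤ t → M t x (fun y => v y ^ 2) ≤ C := by
  have hu := h.nu
  have hv := h.nv
  obtain ⟨C, hC, hg⟩ := h.H_growth x
  refine ⟨K + 1 + (1 + 2 * s ^ 2) * C, by positivity, fun t hst ht => ?_⟩
  have key : ∀ y, M s y (fun y => v y ^ 2) ≤ K + 1 + (1 + 2 * s ^ 2) * Em u v s y := by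
    intro y
    have h1 := h.swap.var_u_le s y
    have h2 : M s y (gr v) ≤ Em u v s y := by
      have h6 := h.E_eq s y
      have h7 := h.Fpos s y
      have h8 : 0 ≤ M s y (gr u) := M_nonneg (gr_nonneg u)
      linarith
    have hE := h.Epos s y
    have hb := h.swap.a_pos s y
    have h4 : M s y v ^ 2 ≤ K + 1 + (1 + s ^ 2) * Em u v s y := by
      rcases hy y with h5 | h5
      · have h6 := h.ab_le s y
        have h7 := h.uv_sq_le_F s y
        have h8 := h.F_le_E s y
        have h9 : M s y (fun y => u y * v y) ≤ 1 + Em u v s y := by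
          nlinarith [sq_nonneg (M s y (fun y => u y * v y) - 1)]
        have h10 : 0 ≤ s ^ 2 * Em u v s y := by positivity
        nlinarith
      · have h6 := M_sq_le (s := s) (x := y) hv.cp
        have h7 := h.H_eq s y
        have h8 := h.p_pos s y
        have h10 : 0 ≤ (1 + s ^ 2) * Em u v s y := by positivity
        linarith
    have h5 : s ^ 2 * M s y (gr v) ≤ s ^ 2 * Em u v s y := by gcongr
    nlinarith
  have hr : 0 ≤ t ^ 2 - s ^ 2 := by nlinarith
  set r := Real.sqrt (t ^ 2 - s ^ 2) with hrdef
  have hr2 : Real.sqrt (r ^ 2 + s ^ 2) = t := by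
    rw [hrdef, Real.sq_sqrt hr, sub_add_cancel, Real.sqrt_sq (by linarith)]
  have m1 := M_M x (hv.pow 2) r s
  have m2 := M_M x h.nE r s
  rw [hr2] at m1 m2
  rw [← m1]
  have hcE : CP (fun y => Em u v s y) := CP_M h.nE s
  refine (M_mono (CP_M (hv.pow 2) s) (by fun_prop) key).trans ?_
  rw [M_add (by fun_prop) (by fun_prop), M_const, M_const_mul]
  have m3 : M r x (fun y => Em u v s y) = Em u v t x := m2
  rw [m3]
  gcongr
  have h1 := h.E_le (by linarith : 0 < t) x
  have h2 := hg t ht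
  have h3 : t ^ 2 * Em u v t x ≤ t ^ 2 * C := by linarith
  exact le_of_mul_le_mul_left h3 (by positivity)

set_option maxHeartbeats 1000000 in
/-- If `u` strictly dominates in the mean, the frequency of `v` is bounded below. -/
theorem freq_v_ge {s η : ℝ} (hs : 0 < s) (hη : 0 < η) (hη1 : η ≤ 1) (x : Euc n)
    (hk : 1 ≤ η ^ 2 * (s ^ 2 * Hm u v s x)) (hz : η * Real.sqrt (Hm u v s x) ≤ zm u v s x) :
    η ^ 2 / 16 * M s x (fun y => v y ^ 2) ≤ s ^ 2 * (M s x (gr v) + Fm u v s x) := by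
  by_contra! hc
  have hH := h.Hpos s x
  have hHe := h.H_eq s x
  have hp := h.p_pos s x
  have hq := h.swap.p_pos s x
  have ha := h.a_pos s x
  have hb := h.swap.a_pos s x
  have hF := h.Fpos s x
  have hcov := cov_sq_le h.nu.cp h.nv.cp s x
  have hvar := h.swap.var_u_le s x
  have hvu : M s x u ^ 2 ≤ M s x (fun y => u y ^ 2) := M_sq_le h.nu.cp
  have hvv : M s x v ^ 2 ≤ M s x (fun y => v y ^ 2) := M_sq_le h.nv.cp
  have huvF := h.uv_sq_le_F s x
  have hze := h.z_eq s x
  have hgv : 0 ≤ M s x (gr v) := M_nonneg (gr_nonneg v)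
  set p := M s x (fun y => u y ^ 2)
  set q := M s x (fun y => v y ^ 2)
  set a := M s x u
  set b := M s x v
  set w := M s x (fun y => u y * v y)
  have hs2 : 0 < s ^ 2 := by positivity
  -- `a² ≥ η² H`
  have ha2 : η ^ 2 * Hm u v s x ≤ a ^ 2 := by
    have h1 : η * Real.sqrt (Hm u v s x) ≤ a := by linarith
    have h2 := pow_le_pow_left₀ (by positivity) h1 2
    rwa [mul_pow, Real.sq_sqrt hH.le] at h2
  have hVq : q - b ^ 2 ≤ η ^ 2 / 16 * q := by nlinarith
  have hsF : s ^ 2 * Fm u v s x < η ^ 2 / 16 * q := by nlinarith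
  have hcov' : (w - a * b) ^ 2 ≤ p * (η ^ 2 / 16 * q) := by
    refine hcov.trans ?_
    have : p - a ^ 2 ≤ p := by nlinarith
    exact mul_le_mul this hVq (by linarith) hp.le
  have hab : η ^ 2 * p * (15 / 16 * q) ≤ (a * b) ^ 2 := by
    rw [mul_pow]
    have h1 : 15 / 16 * q ≤ b ^ 2 := by
      have : η ^ 2 * q ≤ 1 * q := by gcongr; nlinarith
      linarith
    have h2 : η ^ 2 * p ≤ a ^ 2 := by
      have : η ^ 2 * p ≤ η ^ 2 * Hm u v s x := by gcongr; linarith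
      linarith
    exact mul_le_mul h2 h1 (by positivity) (by positivity)
  have hw : η ^ 2 * (p * q) / 4 ≤ w ^ 2 := by
    have hpq : 0 < η ^ 2 * (p * q) := by positivity
    set T := Real.sqrt (η ^ 2 * (p * q)) with hT
    have hT0 : 0 < T := Real.sqrt_pos.2 hpq
    have hT2 : T ^ 2 = η ^ 2 * (p * q) := Real.sq_sqrt hpq.le
    have h1 : |w - a * b| ≤ T / 4 := by
      refine abs_le.2 (abs_le_of_sq_le_sq' ?_ (by positivity))
      rw [div_pow, hT2]; linarith
    have h2 : 3 / 4 * T ≤ a * b := by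
      refine (abs_le_of_sq_le_sq' (a := 3 / 4 * T) ?_ (by positivity)).2
      have : (3 / 4 * T) ^ 2 = 9 / 16 * (η ^ 2 * (p * q)) := by rw [mul_pow, hT2]; norm_num
      rw [this]; linarith
    have h3 : T / 2 ≤ w := by linarith [(abs_le.1 h1).1]
    nlinarith
  have h1 : s ^ 2 * (η ^ 2 * (p * q) / 4) < η ^ 2 / 16 * q := by
    refine lt_of_le_of_lt ?_ hsF
    exact mul_le_mul_of_nonneg_left (hw.trans huvF) hs2.le
  have h2 : s ^ 2 * p < 1 / 4 := by
    have e : s ^ 2 * (η ^ 2 * (p * q) / 4) = (η ^ 2 * q) * (s ^ 2 * p) / 4 := by ring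
    have h3 : (η ^ 2 * q) * (s ^ 2 * p) < (η ^ 2 * q) * (1 / 4) := by linarith
    exact lt_of_mul_lt_mul_left h3 (by positivity)
  have h3 : η ^ 2 * (s ^ 2 * Hm u v s x) ≤ s ^ 2 * p := by
    have e := mul_le_mul_of_nonneg_left (ha2.trans hvu) hs2.le
    linarith [e, mul_left_comm (η ^ 2) (s ^ 2) (Hm u v s x)]
  linarith

theorem k_tendsto (x : Euc n) (K : ℝ) : ∃ S0 : ℝ, 1 ≤ S0 ∧ ∀ s, S0 ≤ s → K ≤ s ^ 2 * Hm u v s x := by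
  have h1 := h.Hpos 1 x
  refine ⟨max 1 (K / Hm u v 1 x), le_max_left _ _, fun s hs => ?_⟩
  have hs1 : 1 ≤ s := (le_max_left _ _).trans hs
  have hs2 : K / Hm u v 1 x ≤ s := (le_max_right _ _).trans hs
  rw [div_le_iff₀ h1] at hs2
  have := h.H_mono one_pos hs1 x
  have h3 : s * Hm u v 1 x ≤ s ^ 2 * Hm u v s x := by
    have : s ≤ s ^ 2 := by nlinarith
    gcongr
  linarith

/-- The sign of the mean of `w` is constant if it never vanishes where `s²H` is large. -/
theorem sign_const {K : ℝ}
    (hne : ∀ x s, 0 < s → K ≤ s ^ 2 * Hm u v s x → zm u v s x ≠ 0) {x y : Euc n} {s t : ℝ}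
    (hs : 0 < s) (ht : 0 < t) (hks : K ≤ s ^ 2 * Hm u v s x) (hkt : K ≤ t ^ 2 * Hm u v t y)
    (hpos : 0 < zm u v s x) : 0 < zm u v t y := by
  obtain ⟨p, hp, hmin⟩ := (isCompact_Icc (a := (0 : ℝ)) (b := 1)).exists_isMinOn
    (nonempty_Icc.2 zero_le_one) (f := fun τ => Hm u v 1 (x + τ • (y - x)))
    (h.continuous_H.comp (by fun_prop : Continuous fun τ : ℝ => (x + τ • (y - x), (1 : ℝ)))).continuousOn
  obtain ⟨S0, hS0, hk0⟩ := h.k_tendsto (x + p • (y - x)) K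
  have hm := h.Hpos 1 (x + p • (y - x))
  set S := max (max s t) (max 1 (K / Hm u v 1 (x + p • (y - x)))) with hS
  have hSs : s ≤ S := (le_max_left _ _).trans (le_max_left _ _)
  have hSt : t ≤ S := (le_max_right _ _).trans (le_max_left _ _)
  have hS1 : 1 ≤ S := (le_max_left _ _).trans (le_max_right _ _)
  have hSK : K ≤ S * Hm u v 1 (x + p • (y - x)) := by
    rw [← div_le_iff₀ hm]; exact (le_max_right _ _).trans (le_max_right _ _)
  have c1 : ∀ x : Euc n, Continuous fun r : ℝ => zm u v r x := fun x =>
    h.continuous_z.comp (by fun_prop : Continuous fun r : ℝ => (x, r))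
  have c2 : Continuous fun τ : ℝ => zm u v S (x + τ • (y - x)) :=
    h.continuous_z.comp (by fun_prop : Continuous fun τ : ℝ => (x + τ • (y - x), S))
  have s1 := (sign_of_ne_zero hSs (c1 x).continuousOn fun r hr =>
    hne x r (hs.trans_le hr.1) (hks.trans (h.k_mono hs hr.1 x))).1 hpos
  have s2 := (sign_of_ne_zero zero_le_one c2.continuousOn fun τ hτ => hne _ S (by linarith) (by
    have h1 : Hm u v 1 (x + p • (y - x)) ≤ Hm u v 1 (x + τ • (y - x)) := hmin hτ
    have h2 := h.H_mono one_pos hS1 (x + τ • (y - x))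
    have : S ≤ S ^ 2 := by nlinarith
    calc K ≤ S * Hm u v 1 (x + p • (y - x)) := hSK
      _ ≤ S ^ 2 * Hm u v S (x + τ • (y - x)) := by
        gcongr; exact h1.trans h2)).1 (by simpa using s1)
  refine (sign_of_ne_zero hSt (c1 y).continuousOn fun r hr =>
    hne y r (ht.trans_le hr.1) (hkt.trans (h.k_mono ht hr.1 y))).2 (by simpa using s2)

/-- The component `u` cannot dominate `v` at all points and scales: `⟨v²⟩` would be bounded by `q_bdd`,
but would grow like a power of the scale by `freq_v_ge`. -/
theorem not_all_pos {η K : ℝ} (hη : 0 < η) (hη1 : η ≤ 1) (hK : 1 ≤ K)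
    (hz : ∀ x s, 0 < s → K ≤ s ^ 2 * Hm u v s x → η * Real.sqrt (Hm u v s x) < zm u v s x) :
    False := by
  obtain ⟨C, hC, hq⟩ := h.q_bdd one_pos (by linarith : 0 ≤ K) (fun y => by
    by_cases hk : K ≤ 1 ^ 2 * Hm u v 1 y
    · left
      have h1 := hz y 1 one_pos hk
      have h2 := h.z_eq 1 y
      have : 0 ≤ η * Real.sqrt (Hm u v 1 y) := by positivity
      linarith
    · right; push Not at hk; linarith) 0
  obtain ⟨S0, hS0, hk0⟩ := h.k_tendsto 0 (max K (1 / η ^ 2))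
  set c := η ^ 2 / 16
  have hc : 0 < c := by positivity
  have key : ∀ S, S0 ≤ S → Real.log (M S0 0 (fun y => v y ^ 2)) + 2 * c * (Real.log S - Real.log S0)
      ≤ Real.log C := by
    intro S hS
    have h1 := mono_of_hasDeriv (f := fun r => Real.log (M r 0 (fun y => v y ^ 2)) - 2 * c * Real.log r)
      (f' := fun r => (2 * r * (M r 0 (gr v) + Fm v u r 0)) / M r 0 (fun y => v y ^ 2) - 2 * c * r⁻¹) hS
      (fun r hr => by
        have h0 : 0 < r := by linarith [hr.1]
        exact ((h.swap.hasDeriv_p r 0).log (h.swap.p_pos r 0).ne').sub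
          ((Real.hasDerivAt_log h0.ne').const_mul _))
      (fun r hr => by
        have h0 : 0 < r := by linarith [hr.1]
        have hkr := hk0 r hr.1
        have hk1 : K ≤ r ^ 2 * Hm u v r 0 := (le_max_left _ _).trans hkr
        have hk2 : 1 / η ^ 2 ≤ r ^ 2 * Hm u v r 0 := (le_max_right _ _).trans hkr
        rw [div_le_iff₀ (by positivity)] at hk2
        have h2 := h.freq_v_ge h0 hη hη1 0 (by linarith) (hz 0 r h0 hk1).le
        have hqp := h.swap.p_pos r 0
        rw [Fm_swap, sub_nonneg, le_div_iff₀ hqp]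
        have : 2 * c * r⁻¹ * M r 0 (fun y => v y ^ 2) = 2 * r⁻¹ * (c * M r 0 (fun y => v y ^ 2)) := by
          ring
        rw [this]
        calc _ ≤ 2 * r⁻¹ * (r ^ 2 * (M r 0 (gr v) + Fm u v r 0)) := by gcongr
          _ = _ := by field_simp)
    have h2 := hq S (by linarith) (by linarith)
    have h3 := Real.log_le_log (h.swap.p_pos S 0) h2
    linarith
  -- let the scale tend to infinity
  set L := (Real.log C - Real.log (M S0 0 (fun y => v y ^ 2))) / (2 * c) + 1 with hL
  have hLS := key (S0 * Real.exp (max L 0)) (le_mul_of_one_le_right (by linarith)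
    (Real.one_le_exp (le_max_right _ _)))
  rw [Real.log_mul (by linarith) (Real.exp_pos _).ne', Real.log_exp] at hLS
  have h4 : 2 * c * L ≤ 2 * c * max L 0 := by gcongr; exact le_max_left _ _
  have h5 : 2 * c * L = Real.log C - Real.log (M S0 0 (fun y => v y ^ 2)) + 2 * c := by
    rw [hL]; field_simp
  linarith

/-- There is a balanced point. -/
theorem exists_balanced {η K : ℝ} (hη : 0 < η) (hK : 1 ≤ K) : ∃ x s, 0 < s ∧
    K ≤ s ^ 2 * Hm u v s x ∧ |zm u v s x| ≤ η * Real.sqrt (Hm u v s x) := by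
  by_contra! hc
  set η' := min η 1 with hη'
  have hη'0 : 0 < η' := lt_min hη one_pos
  have hc' : ∀ x s, 0 < s → K ≤ s ^ 2 * Hm u v s x → η' * Real.sqrt (Hm u v s x) < |zm u v s x| := by
    intro x s hs hk
    refine lt_of_le_of_lt ?_ (hc x s hs hk)
    gcongr; exact min_le_left _ _
  have hne : ∀ x s, 0 < s → K ≤ s ^ 2 * Hm u v s x → zm u v s x ≠ 0 := by
    intro x s hs hk h0
    have := hc' x s hs hk
    rw [h0, abs_zero] at this
    have : 0 ≤ η' * Real.sqrt (Hm u v s x) := by positivity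
    linarith
  obtain ⟨S0, hS0, hk0⟩ := h.k_tendsto 0 K
  have hS00 : 0 < S0 := by linarith
  rcases lt_or_gt_of_ne (hne 0 S0 hS00 (hk0 S0 le_rfl)) with hneg | hpos
  · refine h.swap.not_all_pos hη'0 (min_le_right _ _) hK fun x s hs hk => ?_
    have hk' := hk
    rw [Hm_swap] at hk'
    rw [Hm_swap]
    have h1 := hc' x s hs hk'
    have h2 : 0 < zm v u s x := by
      refine h.swap.sign_const (K := K) ?_ hS00 hs ?_ hk ?_ (x := 0)
      · intro x s hs hk
        rw [Hm_swap] at hk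
        rw [zm_swap]
        exact neg_ne_zero.2 (hne x s hs hk)
      · rw [Hm_swap]; exact hk0 S0 le_rfl
      · rw [zm_swap]; linarith
    rwa [← abs_neg, ← zm_swap, abs_of_pos h2] at h1
  · refine h.not_all_pos hη'0 (min_le_right _ _) hK fun x s hs hk => ?_
    have h1 := hc' x s hs hk
    have h2 := h.sign_const hne hS00 hs (hk0 S0 le_rfl) hk hpos
    rwa [abs_of_pos h2] at h1

end Sol
end existence

/-! ### The interface -/

section interface
variable {n : ℕ}

/-- An approximate free boundary: a closed nonempty set `Z` off which the mean of `u - v` at the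
fixed scale `s₀` does not vanish, and such that `u - v` is nearly linear, of bounded slope, around
every point of `Z` at all scales beyond `s₀`. -/
structure Interface (ε : ℝ) (u v : Euc n → ℝ) (Z : Set (Euc n)) (s₀ c C : ℝ) : Prop where
  closed : IsClosed Z
  nonempty : Z.Nonempty
  s₀_ge : 1 ≤ s₀
  c_pos : 0 < c
  C_pos : 0 < C
  lower : ∀ x s, 0 < s → c * s ^ 2 ≤ Hm u v s x
  upper : ∀ x ∈ Z, ∀ S, s₀ ≤ S → Hm u v S x ≤ C * S ^ 2
  near : ∀ x ∈ Z, ∀ S, s₀ ≤ S → NearLin ε u v S x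
  ne : ∀ x, x ∉ Z → zm u v s₀ x ≠ 0

theorem Interface.swap {ε : ℝ} {u v : Euc n → ℝ} {Z : Set (Euc n)} {s₀ c C : ℝ}
    (I : Interface ε u v Z s₀ c C) (x : Euc n) (hx : x ∉ Z) : zm v u s₀ x ≠ 0 := by
  rw [Sol.zm_swap]; exact neg_ne_zero.2 (I.ne x hx)

namespace Sol
variable {u v : Euc n → ℝ} (h : Sol u v)
include h

/-- A lower bound for `H / s²` at one center and scale passes to all centers and smaller scales. -/
theorem H_ge_far {s S : ℝ} (hs : 0 < s) (x y : Euc n) (hS : s ≤ S) (hd : dist x y ≤ S) :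
    Hm u v S x * s ^ 2 ≤ 2 ^ (n + 1) * 144 * (Hm u v s y * S ^ 2) := by
  have hS0 : 0 < S := by linarith
  have h1 := h.H_poly hS0 y x
  have h2 := h.h_anti hs hS y
  have h3 : (1 + dist x y / S) ^ 2 ≤ 4 := by
    have : dist x y / S ≤ 1 := by rw [div_le_one hS0]; exact hd
    have : 0 ≤ dist x y / S := by positivity
    nlinarith
  have hH := h.Hpos S y
  calc Hm u v S x * s ^ 2 ≤ (2 ^ (n + 1) * 12 * 4 * Hm u v S y) * s ^ 2 := by
        gcongr; exact h1.trans (by gcongr)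
    _ = 2 ^ (n + 1) * 48 * (Hm u v S y * s ^ 2) := by ring
    _ ≤ 2 ^ (n + 1) * 48 * (3 * Hm u v s y * S ^ 2) := by gcongr
    _ = _ := by ring

/-- Every solution has an interface. -/
theorem exists_interface {ε : ℝ} (hε : 0 < ε) :
    ∃ Z s₀ c C, Interface ε u v Z s₀ c C := by
  obtain ⟨η, K, hη, hK, hbal⟩ := Sol.exists_bal n hε
  obtain ⟨η', K', hη', hK', hbal'⟩ := Sol.exists_bal n (by positivity : 0 < η ^ 2)
  obtain ⟨xs, ss, hss, hks, hzs⟩ := h.exists_balanced hη' hK'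
  have hB := hbal' u v h ss hss xs hks hzs
  have hHs := h.Hpos ss xs
  set A : ℝ := 2 ^ (n + 1) * 144 with hA
  have hA0 : 0 < A := by positivity
  set c : ℝ := Hm u v ss xs / (4 * ss ^ 2) / A with hc
  have hc0 : 0 < c := by positivity
  have lower : ∀ x s, 0 < s → c * s ^ 2 ≤ Hm u v s x := by
    intro x s hs
    set S := max (max s ss) (dist xs x)
    have hS1 : s ≤ S := (le_max_left _ _).trans (le_max_left _ _)
    have hS2 : ss ≤ S := (le_max_right _ _).trans (le_max_left _ _)
    have hS3 : dist xs x ≤ S := le_max_right _ _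
    have hS0 : 0 < S := by linarith
    have h1 := (hB S hS2).1
    have h2 := h.H_ge_far hs xs x hS1 hS3
    rw [← hA] at h2
    have h3 : Hm u v ss xs * S ^ 2 * s ^ 2 ≤ 4 * ss ^ 2 * A * Hm u v s x * S ^ 2 := by
      have e1 := mul_le_mul_of_nonneg_right h1 (by positivity : 0 ≤ s ^ 2)
      have e2 := mul_le_mul_of_nonneg_left h2 (by positivity : 0 ≤ 4 * ss ^ 2)
      linarith
    have h4 : Hm u v ss xs * s ^ 2 ≤ 4 * ss ^ 2 * A * Hm u v s x := by
      refine le_of_mul_le_mul_right ?_ (by positivity : 0 < S ^ 2)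
      linarith
    rw [hc, div_div, div_mul_eq_mul_div, div_le_iff₀ (by positivity)]
    linarith
  obtain ⟨G, hG, hgr⟩ := h.H_growth 0
  -- the scale beyond which `s²H ≥ K` uniformly in the center
  set s₀ := max (max 1 ss) (K / c) with hs₀
  have hs1 : 1 ≤ s₀ := (le_max_left _ _).trans (le_max_left _ _)
  have hs2 : ss ≤ s₀ := (le_max_right _ _).trans (le_max_left _ _)
  have hs00 : 0 < s₀ := by linarith
  have hs3 : K ≤ s₀ * c := by
    rw [← div_le_iff₀ hc0]; exact le_max_right _ _
  have hk : ∀ x, K ≤ s₀ ^ 2 * Hm u v s₀ x := by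
    intro x
    have h1 := lower x s₀ hs00
    have h2 : s₀ * c ≤ s₀ ^ 2 * (c * s₀ ^ 2) := by
      have : s₀ * c * 1 ≤ s₀ * c * s₀ ^ 3 := by gcongr; exact one_le_pow₀ hs1
      linarith
    exact hs3.trans (h2.trans (by gcongr))
  have cz : Continuous fun x => |zm u v s₀ x| :=
    (h.continuous_z.comp (by fun_prop : Continuous fun x : Euc n => (x, s₀))).abs
  have cH : Continuous fun x => η * Real.sqrt (Hm u v s₀ x) :=
    (Real.continuous_sqrt.comp
      (h.continuous_H.comp (by fun_prop : Continuous fun x : Euc n => (x, s₀)))).const_mul _ |>.congr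
      fun _ => rfl
  have hb : ∀ x ∈ {x | |zm u v s₀ x| ≤ η * Real.sqrt (Hm u v s₀ x)}, _ := fun x hx =>
    hbal u v h s₀ hs00 x (hk x) hx
  refine ⟨{x | |zm u v s₀ x| ≤ η * Real.sqrt (Hm u v s₀ x)}, s₀, c, 12 * (A * G),
    isClosed_le cz cH, ⟨xs, ?_⟩, hs1, hc0, by positivity, lower, ?_, fun x hx S hS => (hb x hx S hS).2, ?_⟩
  · have h1 := (hB s₀ hs2).2.z
    have h2 : zm u v s₀ xs ^ 2 ≤ (η * Real.sqrt (Hm u v s₀ xs)) ^ 2 := by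
      rwa [mul_pow, Real.sq_sqrt (h.Hpos s₀ xs).le]
    exact abs_le.2 (abs_le_of_sq_le_sq' h2 (by positivity))
  · intro x hx S hS
    have hS0 : 0 < S := by linarith
    set T := max S (dist x 0)
    have hT1 : S ≤ T := le_max_left _ _
    have hT2 : dist x 0 ≤ T := le_max_right _ _
    have hT0 : 0 < T := by linarith
    have h1 := (hb x hx T (by linarith)).1
    have h2 := h.h_anti hs00 hS x
    have h3 : Hm u v T x ≤ A * (G * T ^ 2) := by
      have h4 := h.H_ge_far hT0 x 0 le_rfl hT2
      have h5 := hgr T (by linarith)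
      have h6 : Hm u v T x ≤ A * Hm u v T 0 := by
        refine le_of_mul_le_mul_right ?_ (by positivity : 0 < T ^ 2)
        linarith
      exact h6.trans (by gcongr)
    have h4 : Hm u v s₀ x ≤ 4 * (A * G) * s₀ ^ 2 := by
      refine le_of_mul_le_mul_right ?_ (by positivity : 0 < T ^ 2)
      have e := mul_le_mul_of_nonneg_right h3 (by positivity : 0 ≤ 4 * s₀ ^ 2)
      linarith
    refine le_of_mul_le_mul_right ?_ (by positivity : 0 < s₀ ^ 2)
    have e := mul_le_mul_of_nonneg_right h4 (by positivity : 0 ≤ 3 * S ^ 2)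
    linarith
  · intro x hx h0
    apply hx
    simp only [mem_ofPred_eq, h0, abs_zero]
    positivity

/-- The interaction has mean of order `1/S` at scale `S` where the slope is bounded. -/
theorem M_uvv_le {S B : ℝ} (hS : 0 < S) (x : Euc n) (hH : Hm u v S x ≤ B * S ^ 2) :
    M S x (fun y => u y * v y ^ 2) ≤ Real.sqrt (n * B) / S := by
  have hu := h.nu
  have h1 := M_lap hu S x
  have e1 : M S x (lap u) = M S x (fun y => u y * v y ^ 2) := M_congr h.equ
  rw [e1] at h1
  have hE := h.E_le hS x
  have hEB : Em u v S x ≤ B := by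
    refine le_of_mul_le_mul_left ?_ (by positivity : 0 < S ^ 2)
    linarith
  have hg : M S x (gr u) ≤ B := by
    have h6 := h.E_eq S x
    have h7 := h.Fpos S x
    have h8 : 0 ≤ M S x (gr v) := M_nonneg (gr_nonneg v)
    linarith
  set t : ℝ := M S x (fun y => u y * v y ^ 2)
  -- each coordinate: `M((y_i - x_i) ∂_i u)² ≤ S² M((∂_i u)²)`
  have h2 : ∀ i, (M S x (fun y => (y i - x i) * pd i u y)) ^ 2 ≤ S ^ 2 * M S x (fun y => pd i u y ^ 2) := by
    intro i
    have h3 := M_mul_sq_le (s := S) (x := x) (f := fun y : Euc n => y i - x i) (g := pd i u)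
      (by fun_prop) (by fun_prop)
    have h4 := M_ibp (f := fun y : Euc n => y i - x i) i (by fun_prop) (by fun_prop)
      (by rw [pd_sub i (diff_coord i) (by fun_prop), pd_coord, pd_const]; fun_prop) S x
    rw [pd_sub i (diff_coord i) (by fun_prop), pd_coord, pd_const] at h4
    simp only [if_true, sub_zero] at h4
    rw [M_const] at h4
    have e : M S x (fun y => (y i - x i) ^ 2) = S ^ 2 := by
      rw [← mul_one (S ^ 2), ← h4]; exact M_congr fun y => by ring
    rwa [e] at h3
  rw [M_sum (F := fun i y => (y i - x i) * pd i u y) _ (fun i => by fun_prop)] at h1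
  have h3 : (S ^ 2 * t) ^ 2 ≤ n * (S ^ 2 * B) := by
    rw [← h1]
    refine (sq_sum_le_card_mul_sum_sq).trans ?_
    rw [Finset.card_univ, Fintype.card_fin]
    gcongr
    refine (Finset.sum_le_sum fun i _ => h2 i).trans ?_
    rw [← Finset.mul_sum, ← M_sum (F := fun i y => pd i u y ^ 2) _ (fun i => by fun_prop)]
    gcongr
    exact hg
  have ht : 0 ≤ t := M_nonneg fun y => by have := h.pu y; have := h.pv y; positivity
  rw [le_div_iff₀ hS]
  refine Real.le_sqrt_of_sq_le ?_
  refine le_of_mul_le_mul_left ?_ (by positivity : 0 < S ^ 2)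
  linarith [show (S ^ 2 * t) ^ 2 = S ^ 2 * (t * S) ^ 2 by ring]

end Sol
end interface

/-! ### Linear approximation -/

section far
variable {n : ℕ}

/-- The linear function with slope `β` vanishing at `x`. -/
noncomputable def lin (β x y : Euc n) : ℝ := ∑ i, β i * (y i - x i)

theorem Nice.lin (β x : Euc n) : Nice (lin β x) :=
  Nice.sum _ fun i => by fun_prop

theorem lin_eq_inner (β x y : Euc n) : lin β x y = ⟪β, y - x⟫ := by
  rw [PiLp.inner_apply]
  exact Finset.sum_congr rfl fun i _ => by simp [mul_comm]

theorem pd_lin (i : Fin n) (β x : Euc n) : pd i (lin β x) = fun _ => β i := by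
  unfold lin
  have := pd_sum i (F := fun j (y : Euc n) => β j * (y j - x j)) Finset.univ
    (fun j => ((Nice.coord j).sub (Nice.const (x j))).diff.const_mul _)
  rw [this]
  funext y
  have e : ∀ j, pd i (fun y : Euc n => β j * (y j - x j)) y = if i = j then β i else 0 := by
    intro j
    rw [pd_const_mul i _ ((Nice.coord j).sub (Nice.const (x j))).diff, pd_sub i (diff_coord j) (by fun_prop),
      pd_coord, pd_const]
    by_cases hij : i = j
    · subst hij; simp
    · simp [hij]
  rw [Finset.sum_congr rfl fun j _ => e j]
  simp

theorem M_mul_lin {f : Euc n → ℝ} (hf : Nice f) (β : Euc n) (s : ℝ) (x : Euc n) :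
    M s x (fun y => f y * lin β x y) = s ^ 2 * ∑ i, β i * M s x (pd i f) := by
  have e : ∀ y, f y * lin β x y = ∑ i, β i * ((y i - x i) * f y) := by
    intro y; unfold lin; rw [Finset.mul_sum]; exact Finset.sum_congr rfl fun i _ => by ring
  rw [M_congr e, M_sum (F := fun i y => β i * ((y i - x i) * f y)) _ (fun i => by fun_prop),
    Finset.mul_sum]
  refine Finset.sum_congr rfl fun i _ => ?_
  rw [M_const_mul, M_ibp i hf.diff hf.cp (hf.pd i).cp]; ring

theorem M_lin (β : Euc n) (s : ℝ) (x p : Euc n) : M s p (lin β x) = lin β x p := by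
  have h1 := M_mul_lin (Nice.const 1) β s p
  have e : ∀ y, lin β x y = 1 * lin β p y + lin β x p := by
    intro y; unfold lin; rw [one_mul, ← Finset.sum_add_distrib]
    exact Finset.sum_congr rfl fun i _ => by ring
  rw [M_congr e, M_add ((CP.const 1).mul (Nice.lin β p).cp) (by fun_prop), h1, M_const]
  have : ∀ i, M s p (pd i (fun _ : Euc n => (1 : ℝ))) = 0 := fun i => by rw [pd_const]; simp [M_const]
  simp [this]

theorem M_dist_sq (s : ℝ) (x : Euc n) : M s x (fun y => dist y x ^ 2) = n * s ^ 2 := by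
  have e : ∀ y : Euc n, dist y x ^ 2 = ∑ i, (y i - x i) * (y i - x i) := by
    intro y
    rw [EuclideanSpace.dist_eq, Real.sq_sqrt (Finset.sum_nonneg fun i _ => sq_nonneg _)]
    exact Finset.sum_congr rfl fun i _ => by rw [Real.dist_eq, sq_abs]; ring
  rw [M_congr e, M_sum (F := fun i (y : Euc n) => (y i - x i) * (y i - x i)) _ (fun i => by fun_prop)]
  have : ∀ i, M s x (fun y : Euc n => (y i - x i) * (y i - x i)) = s ^ 2 := by
    intro i
    have h4 := M_ibp (f := fun y : Euc n => y i - x i) i (by fun_prop) (by fun_prop)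
      (by rw [pd_sub i (diff_coord i) (by fun_prop), pd_coord, pd_const]; fun_prop) s x
    rw [pd_sub i (diff_coord i) (by fun_prop), pd_coord, pd_const] at h4
    simp only [if_true, sub_zero] at h4
    rw [h4, M_const, mul_one]
  simp [this]

/-- A function which is nonnegative near the center has an almost nonnegative mean at small
scales. -/
theorem M_tail {f : Euc n → ℝ} (hf : CP f) {τ r : ℝ} (hτ : 0 ≤ τ) (hr : 0 < r) (p : Euc n)
    (h0 : ∀ y, dist y p < r → 0 ≤ f y) :
    - (τ / r * Real.sqrt n * Real.sqrt (M τ p (fun y => f y ^ 2))) ≤ M τ p f := by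
  have h1 : ∀ y, - (r⁻¹ * (|f y| * dist y p)) ≤ f y := by
    intro y
    by_cases hy : dist y p < r
    · have := h0 y hy
      have : 0 ≤ r⁻¹ * (|f y| * dist y p) := by positivity
      linarith
    · push Not at hy
      have h2 : 1 ≤ r⁻¹ * dist y p := by
        rw [inv_mul_eq_div, one_le_div hr]; exact hy
      have h3 : |f y| * 1 ≤ |f y| * (r⁻¹ * dist y p) := by gcongr
      have := neg_abs_le (f y)
      linarith
  have h2 := M_mono (s := τ) (x := p) (by fun_prop) hf h1
  rw [M_neg, M_const_mul] at h2
  have h3 := M_mul_sq_le (s := τ) (x := p) (f := fun y => |f y|) (g := fun y => dist y p)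
    (by fun_prop) (by fun_prop)
  rw [M_dist_sq] at h3
  simp only [sq_abs] at h3
  have h4 : M τ p (fun y => |f y| * dist y p) ≤ Real.sqrt (M τ p (fun y => f y ^ 2)) * (Real.sqrt n * τ) := by
    have h5 : 0 ≤ M τ p (fun y => f y ^ 2) := M_nonneg fun y => sq_nonneg _
    refine (abs_le_of_sq_le_sq' ?_ (by positivity)).2
    rw [mul_pow, mul_pow, Real.sq_sqrt h5, Real.sq_sqrt (Nat.cast_nonneg n)]
    exact h3
  have h5 : r⁻¹ * M τ p (fun y => |f y| * dist y p) ≤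
      r⁻¹ * (Real.sqrt (M τ p (fun y => f y ^ 2)) * (Real.sqrt n * τ)) := by gcongr
  have e : τ / r * Real.sqrt n * Real.sqrt (M τ p (fun y => f y ^ 2)) =
      r⁻¹ * (Real.sqrt (M τ p (fun y => f y ^ 2)) * (Real.sqrt n * τ)) := by
    rw [div_eq_mul_inv]; ring
  rw [e]; linarith

theorem M_scale {f : Euc n → ℝ} (hf : CP f) (hf0 : ∀ y, 0 ≤ f y) {s t : ℝ} (hs : 0 < s) (hst : s ≤ t)
    (x : Euc n) : M s x f ≤ (t / s) ^ n * M t x f := by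
  have := M_le_of_kernel (f := f) (W := fun _ => 1) (A := 1) hf (by fun_prop) hf0 hs
    (by linarith : 0 < t) (x := x) (x' := x) ?_
  · simpa using this
  · intro y
    rw [one_mul, one_mul]
    have : dist y x / t ≤ dist y x / s := by gcongr
    have : (dist y x / t) ^ 2 ≤ (dist y x / s) ^ 2 := by
      have h0 : 0 ≤ t := by linarith
      gcongr
    gcongr 1
    linarith

/-- The mean slope of `u - v` as a vector. -/
noncomputable def slp (u v : Euc n → ℝ) (s : ℝ) (x : Euc n) : Euc n := WithLp.toLp 2 (bt u v s x)

theorem norm_slp_sq (u v : Euc n → ℝ) (s : ℝ) (x : Euc n) : ‖slp u v s x‖ ^ 2 = bsq u v s x := by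
  rw [EuclideanSpace.real_norm_sq_eq]; rfl

theorem bsq_swap (u v : Euc n → ℝ) (s : ℝ) (x : Euc n) :
    bsq v u s x = bsq u v s x := by
  unfold bsq bt
  refine Finset.sum_congr rfl fun i _ => ?_
  have : pd i (df v u) = fun y => - pd i (df u v) y := by
    rw [← pd_neg]; congr 1; funext y; unfold df; ring
  rw [this, M_neg, neg_sq]

namespace Sol
variable {u v : Euc n → ℝ} (h : Sol u v)
include h

theorem lin_approx {s ε : ℝ} {x : Euc n}
    (hb : Hm u v s x - s ^ 2 * bsq u v s x ≤ ε * Hm u v s x) :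
    M s x (fun y => (df u v y - lin (slp u v s x) x y) ^ 2) ≤ ε * Hm u v s x := by
  have hw := h.nw
  set β := slp u v s x with hβ
  have hl := Nice.lin β x
  have e : ∀ y, (df u v y - lin β x y) ^ 2
      = (df u v y ^ 2 - 2 * (df u v y * lin β x y)) + lin β x y * lin β x y := fun y => by ring
  rw [M_congr e, M_add (by fun_prop) (by fun_prop), M_sub (by fun_prop) (by fun_prop), M_const_mul,
    M_mul_lin hw, M_mul_lin hl, h.M_w2]
  have h1 : ∑ i, β i * M s x (pd i (df u v)) = bsq u v s x :=
    Finset.sum_congr rfl fun i _ => by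
      change bt u v s x i * bt u v s x i = _; ring
  have h2 : ∑ i, β i * M s x (pd i (lin β x)) = bsq u v s x :=
    Finset.sum_congr rfl fun i _ => by
      rw [pd_lin, M_const]
      change bt u v s x i * bt u v s x i = _; ring
  rw [h1, h2]
  have h3 : 0 ≤ M s x (fun y => u y * v y) := M_nonneg fun y => (mul_pos (h.pu y) (h.pv y)).le
  linarith

theorem z_near_lin {d θ ε : ℝ} (hd : 0 < d) (hθ : 0 < θ) (hθ1 : θ ≤ 2) {x p : Euc n}
    (hp : dist p x ≤ 2 * d)
    (hb : Hm u v (4 * d) x - (4 * d) ^ 2 * bsq u v (4 * d) x ≤ ε * Hm u v (4 * d) x) :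
    (zm u v (θ * d) p - lin (slp u v (4 * d) x) x p) ^ 2 ≤
      (2 / θ) ^ n * 2 ^ (n + 1) * ε * Hm u v (4 * d) x := by
  have hw := h.nw
  set β := slp u v (4 * d) x with hβ
  have hl := Nice.lin β x
  have e1 : zm u v (θ * d) p - lin β x p = M (θ * d) p (fun y => df u v y - lin β x y) := by
    rw [M_sub (by fun_prop) (by fun_prop), M_lin]; rfl
  rw [e1]
  refine (M_sq_le (by fun_prop)).trans ?_
  have h1 := M_scale (f := fun y => (df u v y - lin β x y) ^ 2) (by fun_prop) (fun y => sq_nonneg _)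
    (by positivity : 0 < θ * d) (t := 2 * d) (by gcongr) p
  have h2 := M_center (f := fun y => (df u v y - lin β x y) ^ 2) (by fun_prop) (fun y => sq_nonneg _)
    (by positivity : 0 < 2 * d) hp
  have h3 := h.lin_approx hb
  rw [show 2 * (2 * d) = 4 * d by ring] at h2
  rw [show 2 * d / (θ * d) = 2 / θ by field_simp] at h1
  calc _ ≤ _ := h1
    _ ≤ (2 / θ) ^ n * (2 ^ (n + 1) * (ε * Hm u v (4 * d) x)) := by
        gcongr; exact h2.trans (by gcongr)
    _ = _ := by ring

end Sol
end far

/-! ### Behaviour away from the interface -/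

section far2
variable {n : ℕ}

/-- Around a point `y` within distance `d` of a point `x` near which `u - v` is almost linear, and where
the mean of `u - v` at scale `s₀` is positive on the whole ball `B_d(y)`, the function `u` dominates
at scale `θd` and the frequency there is small. -/
theorem Sol.exists_far (n : ℕ) {ν : ℝ} (hν : 0 < ν) : ∃ ε θ : ℝ, 0 < ε ∧ 0 < θ ∧ θ ≤ 1 ∧
    ∀ u v : Euc n → ℝ, Sol u v → ∀ (d s₀ : ℝ) (x y : Euc n), 0 < s₀ → s₀ ≤ θ * d → dist y x ≤ d →
      Hm u v (4 * d) x - (4 * d) ^ 2 * bsq u v (4 * d) x ≤ ε * Hm u v (4 * d) x →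
      (∀ p, dist p y < d → 0 < zm u v s₀ p) → ∀ y', dist y' y ≤ d / 4 →
        0 < zm u v (θ * d) y' ∧ Nm u v (θ * d) y' ≤ ν ∧
          Hm u v (4 * d) x ≤ 4096 * Hm u v (θ * d) y' := by
  set A : ℝ := 2 ^ (n + 1) with hA
  have hA1 : 1 ≤ A := one_le_pow₀ (by norm_num)
  have hlogA : 0 ≤ Real.log (4096 * A) := Real.log_nonneg (by linarith)
  -- the scale ratio
  set B := Real.sqrt (n * A) with hB
  set θ : ℝ := min (min 1 (1 / (512 * (B + 1)))) (Real.exp (- (Real.log (4096 * A) / (2 * ν)))) with hθd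
  have hθ : 0 < θ := lt_min (lt_min one_pos (by positivity)) (Real.exp_pos _)
  have hθ1 : θ ≤ 1 := (min_le_left _ _).trans (min_le_left _ _)
  have hθ2 : 4 * θ * B ≤ 1 / 128 := by
    have h1 : θ ≤ 1 / (512 * (B + 1)) := (min_le_left _ _).trans (min_le_right _ _)
    rw [le_div_iff₀ (by positivity)] at h1
    have : 0 ≤ θ := hθ.le
    linarith
  have hθ3 : Real.log (4096 * A) ≤ 2 * ν * (- Real.log θ) := by
    have h1 : θ ≤ Real.exp (- (Real.log (4096 * A) / (2 * ν))) := min_le_right _ _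
    have h2 := Real.log_le_log hθ h1
    rw [Real.log_exp] at h2
    have h3 : Real.log (4096 * A) / (2 * ν) ≤ - Real.log θ := by linarith
    rw [div_le_iff₀ (by positivity)] at h3
    linarith
  set Cθ : ℝ := (2 / θ) ^ n * A with hCθ
  have hCθ0 : 0 < Cθ := by positivity
  set ε : ℝ := min (3 / 4) (1 / (128 ^ 2 * Cθ)) with hεd
  have hε : 0 < ε := lt_min (by norm_num) (by positivity)
  have hε1 : ε ≤ 3 / 4 := min_le_left _ _
  have hε2 : Cθ * ε ≤ (1 / 128) ^ 2 := by
    have h1 : ε ≤ 1 / (128 ^ 2 * Cθ) := min_le_right _ _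
    rw [le_div_iff₀ (by positivity)] at h1
    linarith
  refine ⟨ε, θ, hε, hθ, hθ1, fun u v h d s₀ x y hs₀ hsd hyx hb hpos => ?_⟩
  have hd : 0 < d := pos_of_mul_pos_right (lt_of_lt_of_le hs₀ hsd) hθ.le
  have hτ : 0 < θ * d := by positivity
  have hH := h.Hpos (4 * d) x
  set H := Hm u v (4 * d) x with hHd
  set β := slp u v (4 * d) x with hβ
  have hQ : 0 < Real.sqrt H := Real.sqrt_pos.2 hH
  have hQ2 : Real.sqrt H ^ 2 = H := Real.sq_sqrt hH.le
  have hβd : Real.sqrt H / 8 ≤ ‖β‖ * d := by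
    refine (abs_le_of_sq_le_sq' ?_ (by positivity)).2
    rw [div_pow, hQ2, mul_pow, hβ, norm_slp_sq]
    have : ε * H ≤ 3 / 4 * H := by gcongr
    linarith
  have hβ0 : 0 < ‖β‖ := by
    by_contra! hc
    have : ‖β‖ * d ≤ 0 := mul_nonpos_of_nonpos_of_nonneg hc hd.le
    linarith
  -- the mean of `u - v` at scale `θd` is close to the linear function
  have hzl : ∀ p, dist p x ≤ 2 * d → |zm u v (θ * d) p - lin β x p| ≤ Real.sqrt H / 128 := by
    intro p hp
    have h1 := h.z_near_lin hd hθ (by linarith) hp hb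
    refine abs_le.2 (abs_le_of_sq_le_sq' (h1.trans ?_) (by positivity))
    rw [← hA, ← hCθ, div_pow, hQ2, ← hHd]
    calc Cθ * ε * H ≤ (1 / 128) ^ 2 * H := by gcongr
      _ = _ := by ring
  have hHp : ∀ p, dist p x ≤ 2 * d → Hm u v (2 * d) p ≤ A * H := by
    intro p hp
    have h1 := M_center (f := fun y => u y ^ 2 + v y ^ 2) h.nH.cp (fun y => by positivity)
      (by positivity : 0 < 2 * d) hp
    rwa [show 2 * (2 * d) = 4 * d by ring] at h1
  -- positivity near `p` gives an almost nonnegative mean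
  have hzp : ∀ p, dist p x ≤ 2 * d → (∀ y', dist y' p < d / 4 → 0 < zm u v s₀ y') →
      - (Real.sqrt H / 128) ≤ zm u v (θ * d) p := by
    intro p hp hpp
    have hw := h.nw
    have hr : 0 ≤ (θ * d) ^ 2 - s₀ ^ 2 := by
      have := pow_le_pow_left₀ hs₀.le hsd 2
      linarith
    set r := Real.sqrt ((θ * d) ^ 2 - s₀ ^ 2) with hrd
    have hr2 : Real.sqrt (r ^ 2 + s₀ ^ 2) = θ * d := by
      rw [hrd, Real.sq_sqrt hr, sub_add_cancel, Real.sqrt_sq hτ.le]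
    have hrθ : r ≤ θ * d := by
      rw [← hr2]; exact Real.le_sqrt_of_sq_le (by nlinarith [sq_nonneg s₀])
    have m1 := M_M p hw r s₀
    have m2 := M_M p (hw.pow 2) r s₀
    rw [hr2] at m1 m2
    have hc : CP (fun y => M s₀ y (df u v)) := CP_M hw s₀
    have t1 := M_tail hc (Real.sqrt_nonneg _) (by positivity : 0 < d / 4) p
      (fun y' hy' => (hpp y' hy').le) (τ := r)
    rw [m1] at t1
    have t2 : M r p (fun y => M s₀ y (df u v) ^ 2) ≤ A * H := by
      calc _ ≤ M r p (fun y => M s₀ y (fun y => df u v y ^ 2)) :=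
            M_mono (by fun_prop) (CP_M (hw.pow 2) s₀) fun y => M_sq_le hw.cp
        _ = M (θ * d) p (fun y => df u v y ^ 2) := m2
        _ ≤ Hm u v (θ * d) p := by
            rw [h.M_w2]
            have : 0 ≤ M (θ * d) p (fun y => u y * v y) :=
              M_nonneg fun y => (mul_pos (h.pu y) (h.pv y)).le
            linarith
        _ ≤ Hm u v (2 * d) p := h.H_mono hτ (by gcongr; linarith) p
        _ ≤ A * H := hHp p hp
    have t3 : r / (d / 4) * Real.sqrt n * Real.sqrt (M r p (fun y => M s₀ y (df u v) ^ 2)) ≤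
        Real.sqrt H / 128 := by
      have e1 : r / (d / 4) ≤ 4 * θ := by
        rw [div_le_iff₀ (by positivity)]; linarith
      calc _ ≤ 4 * θ * Real.sqrt n * Real.sqrt (A * H) := by gcongr
        _ = 4 * θ * B * Real.sqrt H := by
            rw [hB, Real.sqrt_mul (by linarith : 0 ≤ A), Real.sqrt_mul (Nat.cast_nonneg n)]; ring
        _ ≤ 1 / 128 * Real.sqrt H := by gcongr
        _ = _ := by ring
    have : M (θ * d) p (df u v) = zm u v (θ * d) p := rfl
    linarith
  -- `y` lies on the positive side of the linear function
  have hL : ‖β‖ * d / 2 < lin β x y := by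
    by_contra! hc
    set e : Euc n := (3 * d / 4 / ‖β‖) • β with he
    have hen : ‖e‖ = 3 * d / 4 := by
      rw [he, norm_smul, Real.norm_of_nonneg (by positivity)]; field_simp
    have hpy : dist (y - e) y = 3 * d / 4 := by
      rw [dist_eq_norm, sub_sub_cancel_left, norm_neg, hen]
    have hpx : dist (y - e) x ≤ 2 * d := by
      have := dist_triangle (y - e) y x
      linarith
    have hlp : lin β x (y - e) ≤ - (‖β‖ * d / 4) := by
      have h1 : lin β x (y - e) = lin β x y - ⟪β, e⟫ := by
        rw [lin_eq_inner, lin_eq_inner, show y - e - x = (y - x) - e by abel, inner_sub_right]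
      have h2 : ⟪β, e⟫ = 3 * d / 4 * ‖β‖ := by
        rw [he, inner_smul_right, real_inner_self_eq_norm_sq]; field_simp
      rw [h1, h2]; linarith
    have h1 := hzp (y - e) hpx fun y' hy' => hpos y' (by
      have := dist_triangle y' (y - e) y
      linarith)
    have h2 := (abs_le.1 (hzl (y - e) hpx)).2
    linarith
  intro y' hy'
  have hy'x : dist y' x ≤ 2 * d := by
    have := dist_triangle y' y x
    linarith
  have hl' : ‖β‖ * d / 4 ≤ lin β x y' := by
    have h1 : lin β x y' = lin β x y + ⟪β, y' - y⟫ := by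
      rw [lin_eq_inner, lin_eq_inner, ← inner_add_right]; congr 1; abel
    have h2 := abs_real_inner_le_norm β (y' - y)
    rw [← dist_eq_norm] at h2
    have h3 : ‖β‖ * dist y' y ≤ ‖β‖ * (d / 4) := by gcongr
    have h4 := (abs_le.1 h2).1
    linarith
  have hz : Real.sqrt H / 64 ≤ zm u v (θ * d) y' := by
    have := (abs_le.1 (hzl y' hy'x)).1
    linarith
  have hHy : H / 4096 ≤ Hm u v (θ * d) y' := by
    have h1 : (Real.sqrt H / 64) ^ 2 ≤ zm u v (θ * d) y' ^ 2 := by gcongr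
    have h2 : zm u v (θ * d) y' ^ 2 ≤ M (θ * d) y' (fun y => df u v y ^ 2) := M_sq_le h.nw.cp
    rw [h.M_w2] at h2
    have : 0 ≤ M (θ * d) y' (fun y => u y * v y) :=
      M_nonneg fun y => (mul_pos (h.pu y) (h.pv y)).le
    rw [div_pow, hQ2] at h1
    linarith
  refine ⟨by linarith, ?_, by linarith⟩
  have h1 := h.logH_lower hτ (by gcongr; linarith : θ * d ≤ 2 * d) y'
  have h2 := Real.log_le_log (h.Hpos (2 * d) y') (hHp y' hy'x)
  have h3 := Real.log_le_log (by positivity) hHy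
  rw [Real.log_mul hθ.ne' hd.ne', Real.log_mul (by norm_num) hd.ne'] at h1
  rw [Real.log_mul (by positivity) hH.ne'] at h2
  rw [Real.log_div hH.ne' (by norm_num)] at h3
  rw [Real.log_mul (by norm_num) (by positivity)] at hθ3 hlogA
  have hN := (h.Npos hτ y')
  by_contra! hc
  have hl2 : 0 < Real.log 2 := Real.log_pos (by norm_num)
  have hlt : 0 ≤ - Real.log θ := by linarith [Real.log_nonpos hθ.le hθ1]
  have h4 : 2 * ν * (Real.log 2 - Real.log θ) < 2 * Nm u v (θ * d) y' * (Real.log 2 - Real.log θ) := by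
    have : 0 < Real.log 2 - Real.log θ := by linarith
    gcongr
  have h5 : 0 < ν * Real.log 2 := by positivity
  linarith

end far2

/-! ### Pointwise lower bounds for the dominant component -/

section descend
variable {n : ℕ}

namespace Sol
variable {u v : Euc n → ℝ} (h : Sol u v)
include h

/-- Small frequency and large height force one component to dominate. -/
theorem z_sq_ge {s : ℝ} (hs : 1 ≤ s) (x : Euc n) (hN : Nm u v s x ≤ 1 / 100)
    (hH : 100 ≤ Hm u v s x) : 96 / 100 * Hm u v s x ≤ zm u v s x ^ 2 := by
  have hH0 := h.Hpos s x
  have hE0 := h.Epos s x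
  unfold Nm at hN
  rw [div_le_iff₀ hH0] at hN
  have h1 := h.var_u_le s x
  have h2 := h.swap.var_u_le s x
  have hE := h.E_eq s x
  have hF := h.Fpos s x
  have hFE := h.F_le_E s x
  have hab := h.ab_le s x
  have hw := h.uv_sq_le_F s x
  have hHe := h.H_eq s x
  rw [h.z_eq]
  set w := M s x (fun y => u y * v y)
  have hs2 : 1 ≤ s ^ 2 := one_le_pow₀ hs
  have hES : Em u v s x ≤ s ^ 2 * Em u v s x := by nlinarith
  have hw2 : w ≤ Hm u v s x / 100 := by
    refine (abs_le_of_sq_le_sq' ?_ (by positivity)).2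
    have : Hm u v s x / 100 * 1 ≤ Hm u v s x / 100 * (Hm u v s x / 100) := by gcongr; linarith
    rw [sq (Hm u v s x / 100)]
    linarith
  have hvar : s ^ 2 * M s x (gr u) + s ^ 2 * M s x (gr v) ≤ s ^ 2 * Em u v s x := by
    rw [hE]; nlinarith
  nlinarith

/-- Where `u` dominates with small frequency, the frequency of the other component `v` is at least
`3/4`. -/
theorem freq_v {s : ℝ} (hs : 1 ≤ s) (x : Euc n) (hN : Nm u v s x ≤ 1 / 100)
    (hH : 100 ≤ Hm u v s x) (hz : 0 < zm u v s x) :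
    3 / 4 * M s x (fun y => v y ^ 2) ≤ s ^ 2 * (M s x (gr v) + Fm u v s x) := by
  by_contra! hc
  have hzs := h.z_sq_ge hs x hN hH
  have hH0 := h.Hpos s x
  unfold Nm at hN
  rw [div_le_iff₀ hH0] at hN
  have h1 := h.var_u_le s x
  have h2 := h.swap.var_u_le s x
  have hE := h.E_eq s x
  have hF := h.Fpos s x
  have hw := h.uv_sq_le_F s x
  have hcov := cov_sq_le h.nu.cp h.nv.cp s x
  have hvu : M s x u ^ 2 ≤ M s x (fun y => u y ^ 2) := M_sq_le h.nu.cp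
  have hvv : M s x v ^ 2 ≤ M s x (fun y => v y ^ 2) := M_sq_le h.nv.cp
  have ha := h.a_pos s x
  have hb := h.swap.a_pos s x
  have hq := h.swap.p_pos s x
  have hgv : 0 ≤ M s x (gr v) := M_nonneg (gr_nonneg v)
  rw [h.z_eq] at hzs hz
  set w := M s x (fun y => u y * v y)
  set a := M s x u
  set b := M s x v
  set p := M s x (fun y => u y ^ 2)
  set q := M s x (fun y => v y ^ 2)
  set H := Hm u v s x
  have hs2 : 1 ≤ s ^ 2 := one_le_pow₀ hs
  have hsg : 0 ≤ s ^ 2 * M s x (gr v) := by positivity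
  have hsF : 0 ≤ s ^ 2 * Fm u v s x := by positivity
  have hVq : q - b ^ 2 ≤ 3 / 4 * q := by linarith
  have hVp : p - a ^ 2 ≤ 1 / 100 * H := by
    refine h1.trans (le_trans ?_ hN)
    gcongr
    linarith
  have hF1 : Fm u v s x < 3 / 4 * q := by
    have : 1 * Fm u v s x ≤ s ^ 2 * Fm u v s x := by gcongr
    linarith
  have ha2 : 96 / 100 * H ≤ a ^ 2 := by
    refine hzs.trans ?_
    gcongr; linarith
  have hb2 : 1 / 4 * q ≤ b ^ 2 := by linarith
  have hab2 : 24 / 100 * (H * q) ≤ (a * b) ^ 2 := by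
    rw [mul_pow]
    have := mul_le_mul ha2 hb2 (by positivity) (by positivity)
    linarith
  have hcov2 : (w - a * b) ^ 2 ≤ 75 / 10000 * (H * q) := by
    have := hcov.trans (mul_le_mul hVp hVq (by linarith) (by positivity))
    linarith
  have hHq : 0 < H * q := by positivity
  set T := Real.sqrt (H * q)
  have hT0 : 0 < T := Real.sqrt_pos.2 hHq
  have hT2 : T ^ 2 = H * q := Real.sq_sqrt hHq.le
  have k1 : 48 / 100 * T ≤ a * b := by
    refine (abs_le_of_sq_le_sq' (a := 48 / 100 * T) ?_ (by positivity)).2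
    rw [mul_pow, hT2]; linarith
  have k2 : |w - a * b| ≤ 9 / 100 * T := by
    refine abs_le.2 (abs_le_of_sq_le_sq' ?_ (by positivity))
    rw [mul_pow, hT2]; linarith
  have k3 : 3 / 10 * T ≤ w := by linarith [(abs_le.1 k2).1]
  have k4 : (3 / 10 * T) ^ 2 ≤ w ^ 2 := by gcongr
  rw [mul_pow, hT2] at k4
  have k5 : 100 * q ≤ H * q := by gcongr
  linarith

/-- The value of `u` is controlled from below by its mean. -/
theorem u_ge_mean (x : Euc n) : M 1 x u - M 1 x (fun y => v y ^ 2) / 2 ≤ u x := by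
  have hu := h.nu
  have hv := h.nv
  set q1 := M 1 x (fun y => v y ^ 2) with hq1
  have hqm : ∀ s, 0 ≤ s → s ≤ 1 → M s x (fun y => v y ^ 2) ≤ q1 := by
    intro s h0 hs1
    refine mono_of_hasDeriv hs1 (fun r _ => h.swap.hasDeriv_p r x) fun r hr => ?_
    have h1 := h.swap.Fpos r x
    have h2 : 0 ≤ M r x (gr v) := M_nonneg (gr_nonneg v)
    have h3 : 0 ≤ r := h0.trans hr.1
    positivity
  have key := mono_of_hasDeriv (a := 0) (b := 1)
    (f := fun s => M s x (fun y => v y ^ 2) / 4 + s ^ 2 * (q1 / 4) - M s x u)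
    (f' := fun s => 2 * s * (M s x (gr v) + Fm v u s x) / 4 + (2 * s) * (q1 / 4) - s * M s x (lap u))
    zero_le_one
    (fun s _ => by
      refine (((h.swap.hasDeriv_p s x).div_const 4).add
        (HasDerivAt.mul_const (d := q1 / 4) ?_)).sub (hasDerivAt_M hu s x)
      simpa using hasDerivAt_pow 2 s)
    (fun s hs => by
      have h2 : 0 ≤ M s x (gr v) := M_nonneg (gr_nonneg v)
      have h3 := hqm s hs.1 hs.2
      have h4 : M s x (lap u) ≤ Fm u v s x / 2 + M s x (fun y => v y ^ 2) / 2 := by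
        unfold Fm
        rw [← M_div_const, ← M_div_const, ← M_add (by fun_prop) (by fun_prop)]
        refine M_mono hu.lap.cp (by fun_prop) fun y => ?_
        rw [h.equ]
        nlinarith [mul_nonneg (sq_nonneg (u y - 1)) (sq_nonneg (v y))]
      rw [Fm_swap]
      have h5 : s * M s x (lap u) ≤ s * ((M s x (gr v) + Fm u v s x) / 2 + q1 / 2) := by
        have := hs.1
        gcongr
        linarith
      linarith)
  have e0 : M 0 x u = u x := by simp [M]
  have e1 : M 0 x (fun y => v y ^ 2) = v x ^ 2 := by simp [M]
  simp only [e0, e1] at key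
  have := sq_nonneg (v x)
  linarith

/-- Where `u` dominates at scale `τ` with small frequency, `u` is at least of order `√τ` pointwise:
the small frequency keeps `H` at least of order `τ^(3/2)` down to scale `1`, where `⟨v²⟩` is only of
order `√τ`. -/
theorem u_sq_ge {τ c C L : ℝ} (hτ : 1 ≤ τ) (x : Euc n) (hz : 0 < zm u v τ x)
    (hN : Nm u v τ x ≤ 1 / 100) (hc : 0 < c) (hcH : c * τ ^ 2 ≤ Hm u v τ x)
    (hCH : Hm u v τ x ≤ C * τ ^ 2) (hL : 0 ≤ L) (ht1 : 100 ≤ c * Real.sqrt τ)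
    (ht2 : (L + C / 2) ^ 2 ≤ 9 / 10 * c * Real.sqrt τ) : L * Real.sqrt τ ≤ u x := by
  have hτ0 : 0 < τ := by linarith
  set t := Real.sqrt τ with ht
  have ht0 : 0 < t := Real.sqrt_pos.2 hτ0
  have htt : t ^ 2 = τ := Real.sq_sqrt hτ0.le
  have h1t : 1 ≤ t := Real.one_le_sqrt.2 hτ
  have hlog : Real.log τ = 2 * Real.log t := by rw [← htt, Real.log_pow]; norm_num
  have hlt : 0 ≤ Real.log t := Real.log_nonneg h1t
  have hC : 0 ≤ C := by
    have := h.Hpos τ x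
    by_contra! hc'
    have : C * τ ^ 2 ≤ 0 := mul_nonpos_of_nonpos_of_nonneg hc'.le (by positivity)
    linarith
  have hH1 : c * t ^ 3 ≤ Hm u v 1 x := by
    have h1 := h.logH_upper one_pos hτ x
    rw [Real.log_one, sub_zero] at h1
    have h2 : Real.log (Hm u v τ x) ≤ Real.log (Hm u v 1 x * t) := by
      rw [Real.log_mul (h.Hpos 1 x).ne' ht0.ne']
      refine h1.trans ?_
      have : 4 * Nm u v τ x * Real.log τ ≤ 4 * (1 / 100) * Real.log τ := by
        have : 0 ≤ Real.log τ := by linarith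
        gcongr
      linarith
    have h3 := (Real.log_le_log_iff (h.Hpos τ x) (mul_pos (h.Hpos 1 x) ht0)).1 h2
    refine le_of_mul_le_mul_right ?_ ht0
    have e : τ ^ 2 = t ^ 4 := by rw [← htt]; ring
    rw [e] at hcH
    linarith
  have hH100 : 100 ≤ Hm u v 1 x := by
    have : c * t * 1 ≤ c * t * t ^ 2 := by gcongr; exact one_le_pow₀ h1t
    linarith
  have hN' : ∀ s, 1 ≤ s → s ≤ τ → Nm u v s x ≤ 1 / 100 := fun s h1 h2 =>
    (h.N_mono (by linarith) h2 x).trans hN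
  have hH' : ∀ s, 1 ≤ s → 100 ≤ Hm u v s x := fun s h1 =>
    hH100.trans (h.H_mono one_pos h1 x)
  have cz : Continuous fun r : ℝ => zm u v r x :=
    h.continuous_z.comp (by fun_prop : Continuous fun r : ℝ => (x, r))
  have hne : ∀ s, 1 ≤ s → s ≤ τ → zm u v s x ≠ 0 := by
    intro s h1 h2 h0
    have := h.z_sq_ge h1 x (hN' s h1 h2) (hH' s h1)
    have := hH' s h1
    rw [h0] at *
    linarith
  have hzp : ∀ s, 1 ≤ s → s ≤ τ → 0 < zm u v s x := fun s h1 h2 =>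
    (sign_of_ne_zero h2 cz.continuousOn fun r hr => hne r (h1.trans hr.1) hr.2).2 hz
  -- decay of the mean square of `v`
  have hq : M 1 x (fun y => v y ^ 2) ≤ C * t := by
    have h1 := mono_of_hasDeriv
      (f := fun r => Real.log (M r x (fun y => v y ^ 2)) - 3 / 2 * Real.log r)
      (f' := fun r => (2 * r * (M r x (gr v) + Fm v u r x)) / M r x (fun y => v y ^ 2) - 3 / 2 * r⁻¹) hτ
      (fun r hr => by
        have h0 : 0 < r := by linarith [hr.1]
        exact ((h.swap.hasDeriv_p r x).log (h.swap.p_pos r x).ne').sub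
          ((Real.hasDerivAt_log h0.ne').const_mul _))
      (fun r hr => by
        have h0 : 0 < r := by linarith [hr.1]
        have h2 := h.freq_v hr.1 x (hN' r hr.1 hr.2) (hH' r hr.1) (hzp r hr.1 hr.2)
        have hqp := h.swap.p_pos r x
        rw [Fm_swap, sub_nonneg, le_div_iff₀ hqp]
        have : 3 / 2 * r⁻¹ * M r x (fun y => v y ^ 2) = 2 * r⁻¹ * (3 / 4 * M r x (fun y => v y ^ 2)) := by
          ring
        rw [this]
        calc _ ≤ 2 * r⁻¹ * (r ^ 2 * (M r x (gr v) + Fm u v r x)) := by gcongr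
          _ = _ := by field_simp)
    simp only [Real.log_one, mul_zero, sub_zero] at h1
    have h2 : Real.log (M 1 x (fun y => v y ^ 2) * t ^ 3) ≤ Real.log (M τ x (fun y => v y ^ 2)) := by
      rw [Real.log_mul (h.swap.p_pos 1 x).ne' (by positivity), Real.log_pow]
      push_cast
      linarith
    have h3 := (Real.log_le_log_iff (mul_pos (h.swap.p_pos 1 x) (by positivity)) (h.swap.p_pos τ x)).1 h2
    have h4 := h.H_eq τ x
    have h5 := h.p_pos τ x
    refine le_of_mul_le_mul_right ?_ (by positivity : 0 < t ^ 3)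
    have e : τ ^ 2 = t ^ 4 := by rw [← htt]; ring
    rw [e] at hCH
    linarith
  have ha : (L + C / 2) * t ≤ M 1 x u := by
    have h1 := h.z_sq_ge le_rfl x (hN' 1 le_rfl hτ) hH100
    have h2 := hzp 1 le_rfl hτ
    rw [h.z_eq] at h1 h2
    have hb := h.swap.a_pos 1 x
    have h3 : (M 1 x u - M 1 x v) ^ 2 ≤ M 1 x u ^ 2 := by gcongr; linarith
    refine (abs_le_of_sq_le_sq' ?_ (h.a_pos 1 x).le).2
    rw [mul_pow]
    calc (L + C / 2) ^ 2 * t ^ 2 ≤ 9 / 10 * c * t * t ^ 2 := by gcongr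
      _ = 9 / 10 * (c * t ^ 3) := by ring
      _ ≤ 96 / 100 * Hm u v 1 x := by
          have : 0 < c * t ^ 3 := by positivity
          linarith
      _ ≤ _ := h1.trans h3
  have := h.u_ge_mean x
  linarith

end Sol
end descend

/-! ### Dichotomy in terms of the distance to the interface -/

section dichotomy
variable {n : ℕ}

namespace Sol

/-- The mean of `u - v` keeps its sign on a ball that does not meet the interface. -/
theorem z_pos_ball {u v : Euc n → ℝ} (h : Sol u v) {s d : ℝ} {y : Euc n}
    (hne : ∀ p, dist p y < d → zm u v s p ≠ 0) (hy : 0 < zm u v s y) :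
    ∀ p, dist p y < d → 0 < zm u v s p := by
  intro p hp
  have hc : Continuous fun t : ℝ => zm u v s (y + t • (p - y)) :=
    h.continuous_z.comp (by fun_prop : Continuous fun t : ℝ => (y + t • (p - y), s))
  have := sign_of_ne_zero zero_le_one hc.continuousOn (fun t ht => hne _ (by
    rw [dist_eq_norm, add_sub_cancel_left, norm_smul, Real.norm_eq_abs, abs_of_nonneg ht.1]
    rw [dist_eq_norm] at hp
    nlinarith [norm_nonneg (p - y), ht.2]))
  simp only [zero_smul, add_zero, one_smul, add_sub_cancel] at this
  exact this.1 hy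

/-- Growth of `u` in terms of a bound for `Hm` at a nearby point. -/
theorem u_sq_le {u v : Euc n → ℝ} (h : Sol u v) {S C : ℝ} (hS : 0 < S) {x y : Euc n}
    (hd : dist y x ≤ S) (hH : Hm u v (2 * S) x ≤ C * (2 * S) ^ 2) :
    Hm u v S y ≤ 2 ^ (n + 1) * C * 4 * S ^ 2 ∧ u y ^ 2 ≤ 2 ^ (n + 1) * C * 4 * S ^ 2 := by
  have h1 : Hm u v S y ≤ 2 ^ (n + 1) * Hm u v (2 * S) x :=
    M_center h.nH.cp (fun y => by positivity) hS hd
  have h2 : Hm u v S y ≤ 2 ^ (n + 1) * C * 4 * S ^ 2 := by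
    calc _ ≤ 2 ^ (n + 1) * Hm u v (2 * S) x := h1
      _ ≤ 2 ^ (n + 1) * (C * (2 * S) ^ 2) := by gcongr
      _ = _ := by ring
  refine ⟨h2, le_trans ?_ h2⟩
  have h3 : u y ≤ M S y u := M_ge_of_subharm h.nu h.lap_u_nonneg hS.le y
  have h4 : M S y u ^ 2 ≤ M S y (fun y => u y ^ 2) := M_sq_le h.nu.cp
  have h5 := h.H_eq S y
  have h6 := h.swap.p_pos S y
  have h7 : u y ^ 2 ≤ M S y u ^ 2 := by
    have := h.pu y
    gcongr
  linarith

/-- There is a closed nonempty set `Z` along which the solution grows at most linearly, uniformly,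
and such that at distance `d ≥ D` from `Z` one of the components is at least `√d`. -/
theorem exists_dichotomy {u v : Euc n → ℝ} (h : Sol u v) :
    ∃ (Z : Set (Euc n)) (s₀ D K : ℝ), IsClosed Z ∧ Z.Nonempty ∧ 1 ≤ s₀ ∧ s₀ ≤ D ∧ 64 ≤ D ∧ 0 < K ∧
      (∀ x ∈ Z, ∀ S, s₀ ≤ S → Hm u v S x ≤ K * S ^ 2) ∧
      ∀ y, D ≤ infDist y Z → (∀ y', dist y' y ≤ 8 → infDist y Z ≤ u y' ^ 2) ∨
        (∀ y', dist y' y ≤ 8 → infDist y Z ≤ v y' ^ 2) := by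
  obtain ⟨ε, θ, hε, hθ, hθ1, hfar⟩ := Sol.exists_far n (ν := 1 / 100) (by norm_num)
  obtain ⟨Z, s₀, c, C, I⟩ := h.exists_interface hε
  set C' : ℝ := 2 ^ (n + 1) * 16 * C / θ ^ 2 with hC'
  set L : ℝ := (√θ)⁻¹ with hL
  set Q : ℝ := 100 / c + (L + C' / 2) ^ 2 / (9 / 10 * c) with hQ
  have hc := I.c_pos
  have hC := I.C_pos
  have hs₀ := I.s₀_ge
  have hQ1 : 100 / c ≤ Q := by
    rw [hQ]; have : 0 ≤ (L + C' / 2) ^ 2 / (9 / 10 * c) := by positivity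
    linarith
  have hQ2 : (L + C' / 2) ^ 2 / (9 / 10 * c) ≤ Q := by
    rw [hQ]; have : 0 ≤ 100 / c := by positivity
    linarith
  have hQ0 : 0 ≤ Q := le_trans (by positivity) hQ1
  set D : ℝ := 64 + s₀ / θ + Q ^ 2 / θ with hD
  have hsθ : s₀ ≤ s₀ / θ := le_div_self (by linarith) hθ hθ1
  have hQθ : 0 ≤ Q ^ 2 / θ := by positivity
  refine ⟨Z, s₀, D, C, I.closed, I.nonempty, hs₀, by linarith, by linarith, hC, I.upper, ?_⟩
  intro y hy
  obtain ⟨x, hx, hxd⟩ := I.closed.exists_infDist_eq_dist I.nonempty y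
  set d := infDist y Z with hd
  have hd0 : 0 < d := by linarith
  have hs₀d : s₀ ≤ θ * d := by
    have : s₀ / θ ≤ d := by linarith
    rw [div_le_iff₀ hθ] at this; linarith
  have hQd : Q ≤ √(θ * d) := by
    apply Real.le_sqrt_of_sq_le
    have : Q ^ 2 / θ ≤ d := by linarith
    rw [div_le_iff₀ hθ] at this; linarith
  have ht1 : 100 ≤ c * √(θ * d) := by
    have := hQ1.trans hQd
    rw [div_le_iff₀ hc] at this; linarith
  have ht2 : (L + C' / 2) ^ 2 ≤ 9 / 10 * c * √(θ * d) := by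
    have := hQ2.trans hQd
    rw [div_le_iff₀ (by positivity)] at this; linarith
  have hnotin : ∀ p, dist p y < d → p ∉ Z := by
    intro p hp hpZ
    have := infDist_le_dist_of_mem (x := y) hpZ
    rw [dist_comm] at this; linarith
  -- the estimate for the component that dominates near `y`
  have key : ∀ u v : Euc n → ℝ, Sol u v →
      (∀ x s, 0 < s → c * s ^ 2 ≤ Hm u v s x) →
      (∀ x ∈ Z, ∀ S, s₀ ≤ S → Hm u v S x ≤ C * S ^ 2) →
      (Hm u v (4*d) x - (4*d) ^ 2 * bsq u v (4*d) x ≤ ε * Hm u v (4*d) x) →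
      (∀ p, dist p y < d → zm u v s₀ p ≠ 0) → 0 < zm u v s₀ y →
      ∀ y', dist y' y ≤ 8 → d ≤ u y' ^ 2 := by
    intro u v h hlow hup hb hne hz y' hy'
    have hy'' : dist y' y ≤ d / 4 := by linarith
    obtain ⟨h1, h2, -⟩ := hfar u v h d s₀ x y (by linarith) hs₀d hxd.symm.le hb
      (h.z_pos_ball hne hz) y' hy''
    have hθd : 0 < θ * d := by positivity
    have hyx : dist y' x ≤ 2 * d := by linarith [dist_triangle y' y x]
    have h3 := (h.u_sq_le (C := C) (by positivity : 0 < 2 * d) hyx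
      (hup x hx _ (by nlinarith))).1
    have h4 : Hm u v (θ * d) y' ≤ C' * (θ * d) ^ 2 := by
      refine (h.H_mono hθd (by nlinarith : θ * d ≤ 2 * d) y').trans (h3.trans (le_of_eq ?_))
      rw [hC']; field_simp; ring
    have h5 := h.u_sq_ge (by linarith) y' h1 h2 hc (hlow y' _ hθd) h4 (by positivity : 0 ≤ L) ht1 ht2
    calc d = (L * √(θ * d)) ^ 2 := by
          rw [mul_pow, Real.sq_sqrt hθd.le, hL, inv_pow, Real.sq_sqrt hθ.le]; field_simp
      _ ≤ _ := by gcongr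
  have hyZ : y ∉ Z := hnotin y (by simpa using hd0)
  have hnear := (I.near x hx (4 * d) (by nlinarith)).b
  rcases lt_or_gt_of_ne (I.ne y hyZ) with hz | hz
  · right
    refine key v u h.swap (fun x s hs => ?_) (fun x hx S hS => ?_) ?_ (fun p hp => I.swap p (hnotin p hp)) ?_
    · rw [← Hm_swap]; exact I.lower x s hs
    · rw [← Hm_swap]; exact I.upper x hx S hS
    · rw [← Hm_swap, bsq_swap]; exact hnear
    · rw [zm_swap]; linarith
  · left
    exact key u v h I.lower I.upper hnear (fun p hp => I.ne p (hnotin p hp)) hz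

end Sol
end dichotomy

/-! ### A local mean value inequality -/

section localmean
variable {n : ℕ}

theorem CP.of_compact {f : Euc n → ℝ} (hf : Continuous f) (hc : HasCompactSupport f) : CP f := by
  obtain ⟨C, hC⟩ := hf.bounded_above_of_compact_support hc
  refine ⟨hf, max C 0, 0, le_max_right _ _, fun x => ?_⟩
  simpa using (hC x).trans (le_max_left C 0)

theorem hasCompactSupport_pd {f : Euc n → ℝ} (hc : HasCompactSupport f) (i : Fin n) :
    HasCompactSupport (pd i f) := hc.fderiv_apply ℝ _

theorem Nice.of_compact {f : Euc n → ℝ} (hf : Smooth f) (hc : HasCompactSupport f) : Nice f := by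
  intro m
  induction m generalizing f with
  | zero => exact ⟨hf, CP.of_compact hf.continuous hc⟩
  | succ m ih => exact ⟨hf, CP.of_compact hf.continuous hc, fun i =>
      ih (hf.pd i) (hasCompactSupport_pd hc i)⟩

theorem pd_translate (f : Euc n → ℝ) (x : Euc n) (i : Fin n) :
    pd i (fun y => f (y - x)) = fun y => pd i f (y - x) := by
  ext y; unfold pd; rw [fderiv_comp_sub]

theorem pd_eq_zero_of_const {f : Euc n → ℝ} {c : ℝ} {U : Set (Euc n)} (hU : IsOpen U)
    (h : ∀ y ∈ U, f y = c) (i : Fin n) : ∀ y ∈ U, pd i f y = 0 := by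
  intro y hy
  have : f =ᶠ[nhds y] fun _ => c := by
    filter_upwards [hU.mem_nhds hy] with z hz using h z hz
  unfold pd; rw [this.fderiv_eq]; simp

/-- Cut-off functions with bounds on the derivatives that are uniform in the center. -/
theorem exists_cutoff (n : ℕ) : ∃ K : ℝ, 0 < K ∧ ∀ x : Euc n, ∃ φ : Euc n → ℝ, Nice φ ∧ φ x = 1 ∧
    (∀ y, 0 ≤ φ y) ∧ (∀ y, φ y ≤ 1) ∧ (∀ y, 1 < dist y x → φ y = 0) ∧
    (∀ i y, |pd i φ y| ≤ K) ∧ (∀ i y, |pd i (pd i φ) y| ≤ K) ∧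
    ∀ y, dist y x < 1 / 2 ∨ 1 < dist y x → ∀ i, pd i φ y = 0 ∧ pd i (pd i φ) y = 0 := by
  let b : ContDiffBump (0 : Euc n) := ⟨1 / 2, 1, by norm_num, by norm_num⟩
  have hb : Smooth (b : Euc n → ℝ) := b.contDiff
  have hc : HasCompactSupport (b : Euc n → ℝ) := b.hasCompactSupport
  have h1 : ∀ i, ∃ C, ∀ y, ‖pd i b y‖ ≤ C := fun i =>
    (hb.pd i).continuous.bounded_above_of_compact_support (hasCompactSupport_pd hc i)
  have h2 : ∀ i, ∃ C, ∀ y, ‖pd i (pd i b) y‖ ≤ C := fun i =>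
    ((hb.pd i).pd i).continuous.bounded_above_of_compact_support
      (hasCompactSupport_pd (hasCompactSupport_pd hc i) i)
  choose C1 hC1 using h1
  choose C2 hC2 using h2
  have hle : ∀ (F : Fin n → ℝ) i, F i ≤ ∑ j, |F j| := fun F i =>
    (le_abs_self _).trans (Finset.single_le_sum (f := fun j => |F j|) (fun j _ => abs_nonneg _)
      (Finset.mem_univ i))
  refine ⟨1 + ∑ j, |C1 j| + ∑ j, |C2 j|, by positivity, fun x => ⟨fun y => b (y - x), ?_, ?_, ?_, ?_,
    ?_, ?_, ?_, ?_⟩⟩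
  · refine Nice.of_compact (hb.comp (by fun_prop)) ?_
    exact hc.comp_homeomorph (Homeomorph.subRight x)
  · simp only [sub_self]
    exact b.one_of_mem_closedBall (by simp [b])
  · exact fun y => b.nonneg
  · exact fun y => b.le_one
  · intro y hy
    refine b.zero_of_le_dist ?_
    simpa [b, dist_eq_norm] using (dist_eq_norm y x ▸ hy).le
  · intro i y
    rw [pd_translate]
    have := (hC1 i (y - x)).trans (hle C1 i)
    have h0 : 0 ≤ ∑ j, |C2 j| := by positivity
    rw [Real.norm_eq_abs] at this
    linarith
  · intro i y
    rw [pd_translate, pd_translate]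
    have := (hC2 i (y - x)).trans (hle C2 i)
    have h0 : 0 ≤ ∑ j, |C1 j| := by positivity
    rw [Real.norm_eq_abs] at this
    linarith
  · have key : ∀ (U : Set (Euc n)) (c : ℝ), IsOpen U → (∀ y ∈ U, b (y - x) = c) → ∀ y ∈ U, ∀ i,
        pd i (fun y => b (y - x)) y = 0 ∧ pd i (pd i (fun y => b (y - x))) y = 0 := by
      intro U c hU hc y hy i
      have := pd_eq_zero_of_const hU hc i
      exact ⟨this y hy, pd_eq_zero_of_const hU this i y hy⟩
    rintro y (hy | hy)
    · refine key (ball x (1 / 2)) 1 isOpen_ball (fun z hz => ?_) y hy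
      refine b.one_of_mem_closedBall ?_
      rw [mem_ball, dist_eq_norm] at hz
      simpa [b] using hz.le
    · refine key {z | 1 < dist z x} 0 (isOpen_lt (by fun_prop) (by fun_prop)) (fun z hz => ?_) y hy
      refine b.zero_of_le_dist ?_
      simpa [b, dist_eq_norm] using (dist_eq_norm z x ▸ hz : 1 < ‖z - x‖).le

/-- Local mean value inequality for nonnegative subharmonic functions, with a Gaussian mean of any
majorant on a ball in place of the mean over that ball. -/
theorem local_mean (n : ℕ) : ∃ C : ℝ, 0 < C ∧ ∀ v : Euc n → ℝ, Nice v → (∀ y, 0 ≤ v y) →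
    (∀ y, 0 ≤ lap v y) → ∀ (x : Euc n) (f : Euc n → ℝ), CP f → (∀ y, 0 ≤ f y) →
    (∀ y, dist y x ≤ 1 → v y ≤ f y) → v x ≤ C * M 2 x f := by
  obtain ⟨K, hK, hcut⟩ := exists_cutoff n
  obtain ⟨A, hA, hweight⟩ := M_weight n (n + 2)
  refine ⟨2 ^ n + 3 * (n : ℝ) * K * 2 ^ (n + 2) * A, by positivity, ?_⟩
  intro v hv hv0 hlap x f hf hf0 hvf
  obtain ⟨φ, hφ, hφx, hφ0, hφ1, hφout, hK1, hK2, hvan⟩ := hcut x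
  set C' : ℝ := 3 * (n : ℝ) * K * 2 ^ (n + 2) * A with hC'
  have hM0 : 0 ≤ M 2 x f := M_nonneg hf0
  have hg : Nice (fun y => φ y * v y) := by fun_prop
  have hlapeq : ∀ y, lap (fun y => φ y * v y) y =
      φ y * lap v y + 2 * (∑ i, pd i (fun z => v z * pd i φ z) y) - v y * lap φ y := by
    intro y
    rw [lap_eq, lap_eq, lap_eq, Finset.mul_sum, Finset.mul_sum, Finset.mul_sum,
      ← Finset.sum_add_distrib, ← Finset.sum_sub_distrib]
    refine Finset.sum_congr rfl fun i _ => ?_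
    have d1 := hφ.diff; have d2 := hv.diff; have d3 := (hφ.pd i).diff; have d4 := (hv.pd i).diff
    rw [pd_mul i d1 d2, pd_add i (by fun_prop) (by fun_prop), pd_mul i d3 d2, pd_mul i d1 d4,
      pd_mul i d2 d3]
    ring
  have hder : ∀ s ∈ Icc (0 : ℝ) 1, 0 ≤ s * M s x (lap (fun y => φ y * v y)) + C' * M 2 x f := by
    intro s hs
    rcases hs.1.eq_or_lt with h0 | h0
    · rw [← h0]; simp only [zero_mul, zero_add]; positivity
    have cpi : ∀ i, Nice (fun z => v z * pd i φ z) := fun i => by fun_prop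
    have cps : CP (fun y => ∑ i, pd i (fun z => v z * pd i φ z) y) :=
      CP.sum _ fun i => ((cpi i).pd i).cp
    have cps' : CP (fun y => ∑ i, (y i - x i) * (v y * pd i φ y)) :=
      CP.sum _ fun i => by fun_prop
    have clv : CP (lap v) := hv.lap.cp
    have clp : CP (lap φ) := hφ.lap.cp
    have e1 : s ^ 2 * M s x (fun y => ∑ i, pd i (fun z => v z * pd i φ z) y) =
        M s x (fun y => ∑ i, (y i - x i) * (v y * pd i φ y)) := by
      rw [M_sum (F := fun i y => pd i (fun z => v z * pd i φ z) y) _ (fun i => ((cpi i).pd i).cp),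
        M_sum (F := fun i y => (y i - x i) * (v y * pd i φ y)) _ (fun i => by fun_prop),
        Finset.mul_sum]
      refine Finset.sum_congr rfl fun i _ => ?_
      exact (M_ibp i (cpi i).diff (cpi i).cp ((cpi i).pd i).cp s x).symm
    -- pointwise bound of the commutator terms, supported in the annulus `1/2 ≤ |y - x| ≤ 1`
    have e2 : ∀ y, -(3 * (n : ℝ) * K * (2 * s) ^ (n + 2) * ((1 + dist y x / s) ^ (n + 2) * f y)) ≤
        2 * (∑ i, (y i - x i) * (v y * pd i φ y)) - s ^ 2 * (v y * lap φ y) := by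
      intro y
      have hfy := hf0 y
      have hn0 : (0 : ℝ) ≤ 3 * (n : ℝ) * K * (2 * s) ^ (n + 2) * ((1 + dist y x / s) ^ (n + 2) * f y) := by
        positivity
      by_cases hy : dist y x < 1 / 2 ∨ 1 < dist y x
      · have := hvan y hy
        have e3 : lap φ y = 0 := by rw [lap_eq]; exact Finset.sum_eq_zero fun i _ => (this i).2
        rw [e3, Finset.sum_eq_zero fun i _ => by rw [(this i).1, mul_zero, mul_zero]]
        linarith
      · push Not at hy
        have hvy := hv0 y
        have hvf' := hvf y hy.2
        have b1 : |∑ i, (y i - x i) * (v y * pd i φ y)| ≤ n * (K * f y) := by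
          calc _ ≤ ∑ i, |(y i - x i) * (v y * pd i φ y)| := Finset.abs_sum_le_sum_abs _ _
            _ ≤ ∑ _i : Fin n, K * f y := by
              refine Finset.sum_le_sum fun i _ => ?_
              rw [abs_mul, abs_mul, abs_of_nonneg hvy]
              have c1 : |y i - x i| ≤ 1 := by
                have := PiLp.norm_apply_le (y - x) i
                simp only [PiLp.sub_apply, Real.norm_eq_abs] at this
                rw [dist_eq_norm] at hy
                exact this.trans hy.2
              calc |y i - x i| * (v y * |pd i φ y|) ≤ 1 * (f y * K) := by
                    gcongr; exact hK1 i y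
                _ = _ := by ring
            _ = _ := by simp
        have b2 : |lap φ y| ≤ n * K := by
          rw [lap_eq]
          calc _ ≤ ∑ i, |pd i (pd i φ) y| := Finset.abs_sum_le_sum_abs _ _
            _ ≤ ∑ _i : Fin n, K := Finset.sum_le_sum fun i _ => hK2 i y
            _ = _ := by simp
        have b3 : s ^ 2 * (v y * lap φ y) ≤ n * (K * f y) := by
          calc s ^ 2 * (v y * lap φ y) ≤ s ^ 2 * (v y * |lap φ y|) := by
                gcongr; exact le_abs_self _
            _ ≤ 1 * (f y * (n * K)) := by
                gcongr
                exact pow_le_one₀ hs.1 hs.2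
            _ = _ := by ring
        have b4 : 1 ≤ (2 * s) ^ (n + 2) * (1 + dist y x / s) ^ (n + 2) := by
          rw [← mul_pow]
          refine one_le_pow₀ ?_
          have : 2 * s * (1 + dist y x / s) = 2 * s + 2 * dist y x := by field_simp
          rw [this]; linarith [hy.1]
        have b5 : 3 * (n : ℝ) * K * f y * 1 ≤ 3 * (n : ℝ) * K * f y * ((2 * s) ^ (n + 2) * (1 + dist y x / s) ^ (n + 2)) := by
          gcongr
        have := (abs_le.1 b1).1
        linarith
    have e3 : -(3 * (n : ℝ) * K * (2 * s) ^ (n + 2) * (A * M (2 * s) x f)) ≤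
        s ^ 2 * M s x (lap (fun y => φ y * v y)) := by
      calc _ ≤ -(3 * (n : ℝ) * K * (2 * s) ^ (n + 2) * M s x (fun y => (1 + dist y x / s) ^ (n + 2) * f y)) := by
            have := hweight f hf hf0 s h0 x
            gcongr
        _ = M s x (fun y => -(3 * (n : ℝ) * K * (2 * s) ^ (n + 2) * ((1 + dist y x / s) ^ (n + 2) * f y))) := by
            rw [M_neg, M_const_mul]
        _ ≤ M s x (fun y => 2 * (∑ i, (y i - x i) * (v y * pd i φ y)) - s ^ 2 * (v y * lap φ y)) :=
            M_mono (by fun_prop) (by fun_prop) e2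
        _ = 2 * (s ^ 2 * M s x (fun y => ∑ i, pd i (fun z => v z * pd i φ z) y)) -
              s ^ 2 * M s x (fun y => v y * lap φ y) := by
            rw [M_sub (by fun_prop) (by fun_prop), M_const_mul, M_const_mul, e1]
        _ = s ^ 2 * M s x (fun y => 2 * (∑ i, pd i (fun z => v z * pd i φ z) y) - v y * lap φ y) := by
            rw [M_sub (by fun_prop) (by fun_prop), M_const_mul]; ring
        _ ≤ _ := by
            gcongr
            refine M_mono (by fun_prop) hg.lap.cp fun y => ?_
            rw [hlapeq]
            have := mul_nonneg (hφ0 y) (hlap y)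
            linarith
    have e4 : (s : ℝ) ^ n * M (2 * s) x f ≤ M 2 x f := by
      have := M_scale hf hf0 (by positivity : 0 < 2 * s) (by linarith [hs.2] : 2 * s ≤ 2) x
      have h3 : (2 / (2 * s)) ^ n = (s ^ n)⁻¹ := by rw [← inv_pow]; congr 1; field_simp
      rw [h3, inv_mul_eq_div, le_div_iff₀ (by positivity)] at this
      linarith
    have e5 : s * (s ^ n * M (2 * s) x f) ≤ 1 * M 2 x f := by
      have : 0 ≤ M (2 * s) x f := M_nonneg hf0
      gcongr
      exact hs.2
    refine nonneg_of_mul_nonneg_right (a := s) ?_ h0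
    have e6 : C' * s * (s * (s ^ n * M (2 * s) x f)) ≤ C' * s * (1 * M 2 x f) := by gcongr
    have e7 : 3 * (n : ℝ) * K * (2 * s) ^ (n + 2) * (A * M (2 * s) x f) =
      C' * s * (s * (s ^ n * M (2 * s) x f)) := by rw [hC', mul_pow]; ring
    rw [e7] at e3
    linarith
  have hfin := mono_of_hasDeriv (f := fun s => M s x (fun y => φ y * v y) + s * (C' * M 2 x f))
    (f' := fun s => s * M s x (lap (fun y => φ y * v y)) + C' * M 2 x f) zero_le_one
    (fun s _ => ((hasDerivAt_M hg s x).add ((hasDerivAt_id s).mul_const _)).congr_deriv (by simp)) hder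
  have h0 : M 0 x (fun y => φ y * v y) = v x := by simp [M, hφx]
  simp only [h0, zero_mul, add_zero, one_mul] at hfin
  have h1 : M 1 x (fun y => φ y * v y) ≤ M 1 x f := by
    refine M_mono hg.cp hf fun y => ?_
    by_cases hy : 1 < dist y x
    · rw [hφout y hy, zero_mul]; exact hf0 y
    · calc φ y * v y ≤ 1 * f y := by
            have := hv0 y
            gcongr
            · exact hφ1 y
            · exact hvf y (not_lt.1 hy)
        _ = _ := one_mul _
  have h2 := M_scale hf hf0 one_pos (by norm_num : (1 : ℝ) ≤ 2) x
  simp only [div_one] at h2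
  linarith

end localmean

/-! ### Decay of the smaller component -/

section decay
variable {n : ℕ}

theorem pd_pd_nonpos_of_isLocalMax {g : Euc n → ℝ} (hg : Smooth g) {Y : Euc n}
    (h : IsLocalMax g Y) (i : Fin n) : pd i (pd i g) Y ≤ 0 := by
  set e : Euc n := EuclideanSpace.single i 1 with he
  have hline : ∀ t : ℝ, HasDerivAt (fun t : ℝ => Y + t • e) e t := fun t => by
    simpa using ((hasDerivAt_id t).smul_const e).const_add Y
  have hd : ∀ f : Euc n → ℝ, Differentiable ℝ f → ∀ t : ℝ,
      HasDerivAt (fun t : ℝ => f (Y + t • e)) (pd i f (Y + t • e)) t := fun f hf t =>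
    (hf _).hasFDerivAt.comp_hasDerivAt t (hline t)
  set φ : ℝ → ℝ := fun t => g (Y + t • e) with hφ
  have d1 : deriv φ = fun t => pd i g (Y + t • e) := by
    ext t; exact (hd g hg.diff t).deriv
  have d2 : deriv (deriv φ) 0 = pd i (pd i g) Y := by
    rw [d1, (hd _ (hg.pd i).diff 0).deriv]; simp
  have hmax : IsLocalMax φ 0 := by
    have hc : Filter.Tendsto (fun t : ℝ => Y + t • e) (nhds 0) (nhds Y) := by
      have := (hline 0).continuousAt.tendsto
      simpa using this
    have := hc.eventually h
    unfold IsLocalMax IsMaxFilter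
    simpa [hφ] using this
  by_contra! hpos
  rw [← d2] at hpos
  have hmin : IsLocalMin φ 0 :=
    isLocalMin_of_deriv_deriv_pos hpos hmax.deriv_eq_zero (hd g hg.diff 0).continuousAt
  have hconst : φ =ᶠ[nhds 0] fun _ => φ 0 := by
    filter_upwards [hmax, hmin] with t h1 h2 using le_antisymm h1 h2
  have h1 := hconst.deriv.deriv_eq
  have h2 : deriv (deriv fun _ : ℝ => φ 0) 0 = 0 := by simp
  rw [h1, h2] at hpos
  exact lt_irrefl _ hpos

theorem lap_dist_sq (y Y : Euc n) : lap (fun z : Euc n => ∑ j, (z j - y j) ^ 2) Y = 2 * n := by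
  have h1 : ∀ i, pd i (fun z : Euc n => ∑ j, (z j - y j) ^ 2) = fun z => 2 * (z i - y i) := by
    intro i
    rw [pd_sum (F := fun j (z : Euc n) => (z j - y j) ^ 2) i _ (fun j => by fun_prop)]
    ext z
    rw [Finset.sum_eq_single i]
    · rw [pd_pow i 2 (f := fun z : Euc n => z i - y i) (by fun_prop),
        pd_sub i (diff_coord i) (by fun_prop), pd_coord, pd_const]
      simp
    · intro j _ hj
      rw [pd_pow i 2 (f := fun z : Euc n => z j - y j) (by fun_prop),
        pd_sub i (diff_coord j) (by fun_prop), pd_coord, pd_const]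
      simp [hj.symm]
    · simp
  rw [lap_eq]
  have h2 : ∀ i, pd i (pd i (fun z : Euc n => ∑ j, (z j - y j) ^ 2)) Y = 2 := by
    intro i
    rw [h1, pd_const_mul i 2 (f := fun z : Euc n => z i - y i) (by fun_prop),
      pd_sub i (diff_coord i) (by fun_prop), pd_coord, pd_const]
    simp
  simp [h2]; ring

/-- Comparison with a paraboloid: a function with `Δv ≥ Λ v` on a unit ball is at most
`2 n / Λ` times its supremum at the center. -/
theorem barrier {v : Euc n → ℝ} (hv : Smooth v) {Λ B : ℝ} (hΛ : 0 < Λ) (hB : 0 ≤ B) (y : Euc n)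
    (hvB : ∀ Y, dist Y y ≤ 1 → v Y ≤ B) (hlap : ∀ Y, dist Y y ≤ 1 → Λ * v Y ≤ lap v Y) :
    v y ≤ 2 * n / Λ * B := by
  set q : Euc n → ℝ := fun z => ∑ j, (z j - y j) ^ 2 with hq
  have hqd : ∀ z, q z = dist z y ^ 2 := by
    intro z
    rw [EuclideanSpace.dist_eq, Real.sq_sqrt (by positivity)]
    exact Finset.sum_congr rfl fun j _ => by rw [Real.dist_eq, sq_abs]
  have hqs : Smooth q := by unfold Smooth; fun_prop
  have hBq : Smooth (fun z => B * q z) := by unfold Smooth; fun_prop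
  set g : Euc n → ℝ := fun z => v z - B * q z with hg
  have hgs : Smooth g := hv.sub hBq
  obtain ⟨Y, hY, hmax⟩ := (isCompact_closedBall y (1 : ℝ)).exists_isMaxOn
    ⟨y, mem_closedBall_self zero_le_one⟩ hgs.continuous.continuousOn
  have hgy : v y ≤ g Y := by
    have := hmax (mem_closedBall_self zero_le_one : y ∈ closedBall y 1)
    simpa [hg, hqd] using this
  have hYd : dist Y y ≤ 1 := hY
  rcases hYd.eq_or_lt with h1 | h1
  · have h2 := hvB Y hYd
    have h3 : g Y = v Y - B := by simp [hg, hqd, h1]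
    have : 0 ≤ 2 * n / Λ * B := by positivity
    linarith
  · have hloc : IsLocalMax g Y := hmax.isLocalMax (closedBall_mem_nhds_of_mem h1)
    have h2 : lap g Y ≤ 0 := by
      rw [lap_eq]; exact Finset.sum_nonpos fun i _ => pd_pd_nonpos_of_isLocalMax hgs hloc i
    have h3 : lap g Y = lap v Y - B * (2 * n) := by
      rw [hg, lap_sub hv hBq, ← lap_dist_sq y Y]
      congr 1
      simp only [lap_eq, Finset.mul_sum]
      refine Finset.sum_congr rfl fun i _ => ?_
      rw [pd_const_mul i B hqs.diff, pd_const_mul i B (hqs.pd i).diff]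
    have h4 := hlap Y hYd
    have h5 : g Y ≤ v Y := by
      have : 0 ≤ q Y := by rw [hqd]; positivity
      simp only [hg]; nlinarith
    refine hgy.trans (h5.trans ?_)
    rw [div_mul_eq_mul_div, le_div_iff₀ hΛ]
    linarith

theorem barrier_iter {v : Euc n → ℝ} (hv : Smooth v) {Λ B : ℝ} (hΛ : 0 < Λ) (hB : 0 ≤ B) (k : ℕ)
    (y : Euc n) (hvB : ∀ Y, dist Y y ≤ k → v Y ≤ B)
    (hlap : ∀ Y, dist Y y ≤ k → Λ * v Y ≤ lap v Y) : v y ≤ (2 * n / Λ) ^ k * B := by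
  induction k generalizing y with
  | zero => simpa using hvB y (by simp)
  | succ k ih =>
    rw [pow_succ', mul_assoc]
    refine barrier hv hΛ (by positivity) y (fun Y hY => ih Y (fun z hz => ?_) fun z hz => ?_)
      fun Y hY => ?_
    · refine hvB z ?_
      push_cast; linarith [dist_triangle z Y y]
    · refine hlap z ?_
      push_cast; linarith [dist_triangle z Y y]
    · refine hlap Y ?_
      push_cast; have : (0:ℝ) ≤ k := by positivity
      linarith

namespace Sol

/-- At a point where `u ≥ √d` in a neighbourhood while both components are `O(d)`, the cubic
interaction is small and is controlled by a mean of the quadratic one. -/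
theorem far_bound (n : ℕ) {κ : ℝ} (hκ : 0 < κ) : ∃ C : ℝ, 0 < C ∧ ∀ u v : Euc n → ℝ, Sol u v →
    ∀ (y : Euc n) (d : ℝ), 1 ≤ d → (∀ y', dist y' y ≤ 8 → d ≤ u y' ^ 2) →
    (∀ y', dist y' y ≤ 8 → u y' ≤ κ * d ∧ v y' ≤ κ * d) →
    u y * v y ^ 3 + v y * u y ^ 3 ≤ C / d ∧
    u y * v y ^ 3 + v y * u y ^ 3 ≤ C * M 16 y (fun y => u y * v y ^ 2 + v y * u y ^ 2) := by
  obtain ⟨A, hA, hmean⟩ := local_mean n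
  refine ⟨2 * κ ^ 3 * (2 * n) ^ 5 * κ + 2 * κ ^ 3 * (2 * n) ^ 5 * (A * 4 ^ n * 2 ^ (n + 1)) + 1,
    by positivity, ?_⟩
  intro u v h y d hd hdom hgr
  have hd0 : 0 < d := by linarith
  set g : Euc n → ℝ := fun y => u y * v y ^ 2 + v y * u y ^ 2 with hg
  have hu := h.nu; have hv := h.nv
  have cg : CP g := by rw [hg]; fun_prop
  have hg0 : ∀ z, 0 ≤ g z := fun z => by
    have := h.pu z; have := h.pv z; simp only [hg]; positivity
  have hMg : 0 ≤ M 16 y g := M_nonneg hg0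
  have hlap : ∀ Y, dist Y y ≤ (5 : ℕ) → d * v Y ≤ lap v Y := by
    intro Y hY
    rw [h.eqv, mul_comm d]
    have := h.pv Y
    gcongr
    exact hdom Y (by push_cast at hY; linarith)
  have hm : u y * v y ^ 3 + v y * u y ^ 3 ≤ 2 * κ ^ 3 * d ^ 3 * v y := by
    obtain ⟨h1, h2⟩ := hgr y (by simp)
    have pu := h.pu y; have pv := h.pv y
    calc u y * v y ^ 3 + v y * u y ^ 3 = v y * (u y * v y ^ 2 + u y ^ 3) := by ring
      _ ≤ v y * ((κ * d) * (κ * d) ^ 2 + (κ * d) ^ 3) := by gcongr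
      _ = _ := by ring
  have hn : (0 : ℝ) ≤ n := by positivity
  have red : ∀ B, 0 ≤ B → (∀ Y, dist Y y ≤ (5 : ℕ) → v Y ≤ B) →
      u y * v y ^ 3 + v y * u y ^ 3 ≤ 2 * κ ^ 3 * (2 * n) ^ 5 * B / d ^ 2 := by
    intro B hB hvB
    have := barrier_iter hv.smooth hd0 hB 5 y hvB hlap
    calc _ ≤ 2 * κ ^ 3 * d ^ 3 * v y := hm
      _ ≤ 2 * κ ^ 3 * d ^ 3 * ((2 * n / d) ^ 5 * B) := by gcongr
      _ = _ := by rw [div_pow]; field_simp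
  constructor
  · have := red (κ * d) (by positivity) fun Y hY => (hgr Y (by push_cast at hY; linarith)).2
    calc _ ≤ 2 * κ ^ 3 * (2 * n) ^ 5 * (κ * d) / d ^ 2 := this
      _ = 2 * κ ^ 3 * (2 * n) ^ 5 * κ / d := by field_simp
      _ ≤ _ := by
        gcongr
        have : 0 ≤ 2 * κ ^ 3 * (2 * n) ^ 5 * (A * 4 ^ n * 2 ^ (n + 1)) := by positivity
        linarith
  · have := red (A * 4 ^ n * 2 ^ (n + 1) * M 16 y g) (by positivity) fun Y hY => ?_
    · calc _ ≤ 2 * κ ^ 3 * (2 * n) ^ 5 * (A * 4 ^ n * 2 ^ (n + 1) * M 16 y g) / d ^ 2 := this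
        _ ≤ 2 * κ ^ 3 * (2 * n) ^ 5 * (A * 4 ^ n * 2 ^ (n + 1) * M 16 y g) :=
          div_le_self (by positivity) (one_le_pow₀ hd)
        _ = (2 * κ ^ 3 * (2 * n) ^ 5 * (A * 4 ^ n * 2 ^ (n + 1))) * M 16 y g := by ring
        _ ≤ _ := by
          gcongr
          have : 0 ≤ 2 * κ ^ 3 * (2 * n) ^ 5 * κ := by positivity
          linarith
    · push_cast at hY
      have h1 := hmean v hv (fun z => (h.pv z).le) (h.swap.lap_u_nonneg) Y g cg hg0 (fun z hz => ?_)
      · have h2 := M_scale cg hg0 (by norm_num : (0:ℝ) < 2) (by norm_num : (2:ℝ) ≤ 8) Y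
        have h3 := M_center cg hg0 (by norm_num : (0:ℝ) < 8) (x := y) (y := Y) (by linarith)
        norm_num at h2 h3
        calc v Y ≤ A * M 2 Y g := h1
          _ ≤ A * (4 ^ n * (2 ^ (n + 1) * M 16 y g)) := by
            gcongr
            refine h2.trans ?_
            gcongr
          _ = _ := by ring
      · have h2 := hdom z (by linarith [dist_triangle z Y y])
        have pu := h.pu z; have pv := h.pv z
        have : v z * 1 ≤ v z * u z ^ 2 := by gcongr; linarith
        have : 0 < u z * v z ^ 2 := by positivity
        simp only [hg]; linarith

/-- Control of the cubic interaction, pointwise, in terms of the distance to the interface `Z`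
and of the quadratic interaction. -/
theorem exists_control {u v : Euc n → ℝ} (h : Sol u v) :
    ∃ (Z : Set (Euc n)) (s₀ D K C : ℝ), Z.Nonempty ∧ 1 ≤ s₀ ∧ s₀ ≤ D ∧ 64 ≤ D ∧ 0 < K ∧ 0 < C ∧
      (∀ x ∈ Z, ∀ S, s₀ ≤ S → Hm u v S x ≤ K * S ^ 2) ∧
      (∀ y, D ≤ infDist y Z → u y * v y ^ 3 + v y * u y ^ 3 ≤ C / infDist y Z) ∧
      ∀ y, u y * v y ^ 3 + v y * u y ^ 3 ≤ C * (u y * v y ^ 2 + v y * u y ^ 2) +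
        C * M 16 y (fun y => u y * v y ^ 2 + v y * u y ^ 2) := by
  obtain ⟨Z, s₀, D, K, hcl, hne, hs₀, hsD, hD, hK, hup, hfar⟩ := h.exists_dichotomy
  set κ : ℝ := √(2 ^ (n + 1) * K * 4) with hκ
  have hκ0 : 0 < κ := Real.sqrt_pos.2 (by positivity)
  have hκ2 : κ ^ 2 = 2 ^ (n + 1) * K * 4 := Real.sq_sqrt (by positivity)
  have grow : ∀ y S, s₀ ≤ S → infDist y Z ≤ S → u y ≤ κ * S ∧ v y ≤ κ * S := by
    intro y S hS hyS
    obtain ⟨x, hx, hxd⟩ := hcl.exists_infDist_eq_dist hne y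
    have hS0 : 0 < S := by linarith
    have h1 := hup x hx (2 * S) (by linarith)
    have h2 := (h.u_sq_le hS0 (hxd ▸ hyS) h1).2
    have h3 := (h.swap.u_sq_le hS0 (hxd ▸ hyS) (by rw [← Hm_swap]; exact h1)).2
    rw [← hκ2, ← mul_pow] at h2 h3
    exact ⟨(abs_le_of_sq_le_sq' h2 (by positivity)).2, (abs_le_of_sq_le_sq' h3 (by positivity)).2⟩
  obtain ⟨C, hC, hfb⟩ := far_bound n (κ := κ * 2) (by positivity)
  have far : ∀ y, D ≤ infDist y Z → u y * v y ^ 3 + v y * u y ^ 3 ≤ C / infDist y Z ∧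
    u y * v y ^ 3 + v y * u y ^ 3 ≤ C * M 16 y (fun y => u y * v y ^ 2 + v y * u y ^ 2) := by
    intro y hy
    have hgr : ∀ y', dist y' y ≤ 8 → u y' ≤ κ * 2 * infDist y Z ∧ v y' ≤ κ * 2 * infDist y Z := by
      intro y' hy'
      have := infDist_le_infDist_add_dist (s := Z) (x := y') (y := y)
      rw [mul_assoc]
      exact grow y' _ (by linarith) (by linarith)
    rcases hfar y hy with h1 | h1
    · exact hfb u v h y _ (by linarith) h1 hgr
    · have := hfb v u h.swap y _ (by linarith) h1 fun y' hy' => (hgr y' hy').symm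
      rw [add_comm (v y * u y ^ 3), M_congr (g := fun y => u y * v y ^ 2 + v y * u y ^ 2)
        (fun z => add_comm _ _)] at this
      exact this
  refine ⟨Z, s₀, D, K, C + κ * D, hne, hs₀, hsD, hD, hK, ?_, hup, ?_, ?_⟩
  · have : 0 < D := by linarith
    positivity
  · intro y hy
    refine (far y hy).1.trans ?_
    have : 0 < κ * D := mul_pos hκ0 (by linarith)
    have : 0 < infDist y Z := by linarith
    gcongr; linarith
  · intro y
    have pu := h.pu y; have pv := h.pv y
    have hMg : 0 ≤ M 16 y (fun y => u y * v y ^ 2 + v y * u y ^ 2) := M_nonneg fun z => by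
      have := h.pu z; have := h.pv z; positivity
    have hκD : 0 < κ * D := mul_pos hκ0 (by linarith)
    have hgy : 0 < u y * v y ^ 2 + v y * u y ^ 2 := by positivity
    rcases le_total D (infDist y Z) with hy | hy
    · refine (far y hy).2.trans ?_
      have : 0 ≤ (C + κ * D) * (u y * v y ^ 2 + v y * u y ^ 2) := by positivity
      have : 0 ≤ κ * D * M 16 y (fun y => u y * v y ^ 2 + v y * u y ^ 2) := by positivity
      linarith
    · obtain ⟨h1, h2⟩ := grow y D hsD hy
      have h3 : u y * v y ^ 3 + v y * u y ^ 3 ≤ κ * D * (u y * v y ^ 2 + v y * u y ^ 2) := by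
        calc u y * v y ^ 3 + v y * u y ^ 3 = v y * (u y * v y ^ 2) + u y * (v y * u y ^ 2) := by ring
          _ ≤ (κ * D) * (u y * v y ^ 2) + (κ * D) * (v y * u y ^ 2) := by gcongr
          _ = _ := by ring
      have : 0 ≤ C * (u y * v y ^ 2 + v y * u y ^ 2) := by positivity
      have : 0 ≤ (C + κ * D) * M 16 y (fun y => u y * v y ^ 2 + v y * u y ^ 2) := by positivity
      linarith

end Sol
end decay

/-! ### The integral bound -/

section conclusion
variable {n : ℕ}

/-- Integrals over a ball are bounded by Gaussian means at any larger scale. -/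
theorem integral_ball_le {f : Euc n → ℝ} (hf : CP f) (hf0 : ∀ y, 0 ≤ f y) {R S : ℝ} (hS : 0 < S)
    (hRS : R ≤ S) (x : Euc n) :
    ∫ y in ball x R, f y ≤
      Real.exp (1 / 2) * (∫ η : Euc n, Real.exp (-(1 / 2) * ‖η‖ ^ 2)) * (S ^ n * M S x f) := by
  have hZ := gauss_Z_pos (n := n)
  rw [M_eq_integral f hS x]
  have hker_int : Integrable (fun y => Real.exp (1 / 2) *
      (Real.exp (-(1 / 2) * (dist y x / S) ^ 2) * f y)) := (hf.int_kernel hS x).const_mul _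
  calc ∫ y in ball x R, f y ≤
      ∫ y in ball x R, Real.exp (1 / 2) * (Real.exp (-(1 / 2) * (dist y x / S) ^ 2) * f y) := by
        refine setIntegral_mono_on ?_ hker_int.integrableOn measurableSet_ball fun y hy => ?_
        · exact (hf.cont.continuousOn.integrableOn_compact (isCompact_closedBall x R)).mono_set
            ball_subset_closedBall
        · rw [← mul_assoc, ← Real.exp_add]
          have h1 : dist y x / S ≤ 1 := by
            rw [div_le_one hS]; exact (mem_ball.1 hy).le.trans hRS
          have h2 : 0 ≤ dist y x / S := by positivity
          have h3 : 1 ≤ Real.exp (1 / 2 + -(1 / 2) * (dist y x / S) ^ 2) := by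
            apply Real.one_le_exp; nlinarith
          exact le_mul_of_one_le_left (hf0 y) h3
    _ ≤ ∫ y, Real.exp (1 / 2) * (Real.exp (-(1 / 2) * (dist y x / S) ^ 2) * f y) :=
        setIntegral_le_integral hker_int (Filter.Eventually.of_forall fun y => by
          have := hf0 y
          simp only [Pi.zero_apply]
          positivity)
    _ = _ := by
        rw [integral_const_mul]
        have hSn : S ^ n ≠ 0 := by positivity
        generalize (∫ η : Euc n, Real.exp (-(1 / 2) * ‖η‖ ^ 2)) = I at hZ ⊢
        generalize (∫ y, Real.exp (-(1 / 2) * (dist y x / S) ^ 2) * f y) = J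
        rw [mul_assoc (Real.exp (1 / 2)), mul_assoc (I⁻¹), mul_left_comm (S ^ n), ← mul_assoc I,
          mul_inv_cancel₀ hZ.ne', one_mul, ← mul_assoc (S ^ n), mul_inv_cancel₀ hSn, one_mul]

/-- The integral bound, by distinguishing whether the distance of the ball to the interface is large
compared with its radius. -/
theorem Sol.bound {u v : Euc n → ℝ} (h : Sol u v) :
    ∃ C > (0 : ℝ), ∀ R > (1 : ℝ), ∀ x : Euc n,
      ∫ y in ball x R, (u y * v y ^ 3 + v y * u y ^ 3) ≤ C * R ^ ((n : ℝ) - 1) := by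
  obtain ⟨Z, s₀, D, K, C, hne, hs₀, hsD, hD, hK, hC, hup, hfar, hall⟩ := h.exists_control
  have hu := h.nu; have hv := h.nv
  set m : Euc n → ℝ := fun y => u y * v y ^ 3 + v y * u y ^ 3 with hm
  set g : Euc n → ℝ := fun y => u y * v y ^ 2 + v y * u y ^ 2 with hg
  have cm : CP m := by rw [hm]; fun_prop
  have ng : Nice g := by rw [hg]; fun_prop
  have hm0 : ∀ z, 0 ≤ m z := fun z => by
    have := h.pu z; have := h.pv z; simp only [hm]; positivity
  have hg0 : ∀ z, 0 ≤ g z := fun z => by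
    have := h.pu z; have := h.pv z; simp only [hg]; positivity
  set W : ℝ := Real.exp (1 / 2) * (∫ η : Euc n, Real.exp (-(1 / 2) * ‖η‖ ^ 2)) with hW
  have hW0 : 0 < W := mul_pos (Real.exp_pos _) gauss_Z_pos
  set P : ℝ := 2 ^ (n + 1) * Real.sqrt (n * K) with hP
  have hP0 : 0 ≤ P := by positivity
  refine ⟨W * C + W * (2 * C * P) * (2 + D) ^ n, by positivity, fun R hR x => ?_⟩
  have hR0 : 0 < R := by linarith
  have hpow : R ^ ((n : ℝ) - 1) = R ^ n / R := by
    rw [Real.rpow_sub_one hR0.ne', Real.rpow_natCast]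
  rw [hpow]
  have hRR : 0 < R ^ n / R := by positivity
  rcases le_or_gt ((1 + D) * R) (infDist x Z) with hx | hx
  · -- the ball is far from the interface
    have h1 : ∫ y in ball x R, m y ≤ ∫ _y in ball x R, C / R := by
      refine setIntegral_mono_on ?_ (integrableOn_const measure_ball_lt_top.ne) measurableSet_ball fun y hy => ?_
      · exact (cm.cont.continuousOn.integrableOn_compact (isCompact_closedBall x R)).mono_set
            ball_subset_closedBall
      · have h2 := infDist_le_infDist_add_dist (s := Z) (x := x) (y := y)
        have h3 := mem_ball'.1 hy
        have h4 : D * R ≤ infDist y Z := by linarith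
        have h5 : D * 1 ≤ D * R := by gcongr
        have h6 : 1 * R ≤ D * R := by gcongr; linarith
        refine (hfar y (by linarith)).trans ?_
        gcongr
        linarith
    have h2 := integral_ball_le (f := fun _ => C / R) (CP.const _) (fun _ => by positivity) hR0
      le_rfl x
    rw [M_const] at h2
    calc _ ≤ W * (R ^ n * (C / R)) := h1.trans h2
      _ = W * C * (R ^ n / R) := by ring
      _ ≤ _ := by
        gcongr
        have : 0 ≤ W * (2 * C * P) * (2 + D) ^ n := by positivity
        linarith
  · -- the ball meets a comparable neighbourhood of the interface
    set S : ℝ := (2 + D) * R with hS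
    obtain ⟨x₁, hx₁, hd⟩ := (infDist_lt_iff hne).1 hx
    have hdS : dist x x₁ ≤ S := by rw [hS]; linarith
    have hDS : 2 + D ≤ S := by
      have : (2 + D) * 1 ≤ (2 + D) * R := by gcongr
      linarith
    have hS0 : 0 < S := by linarith
    have hRS : R ≤ S := by
      have : 1 * R ≤ (2 + D) * R := by gcongr; linarith
      linarith
    have hmean : ∀ t, S ≤ t → M t x g ≤ P / S := by
      intro t ht
      have ht0 : 0 < t := by linarith
      have h1 := M_center ng.cp hg0 ht0 (hdS.trans ht)
      have h2 := hup x₁ hx₁ (2 * t) (by linarith)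
      have h3 := h.M_uvv_le (by positivity) x₁ h2
      have h4 := h.swap.M_uvv_le (by positivity) x₁ ((Sol.Hm_swap _ _).le.trans h2)
      have h5 : M (2 * t) x₁ g ≤ Real.sqrt (n * K) / t := by
        rw [hg, M_add (by fun_prop) (by fun_prop)]
        calc _ ≤ Real.sqrt (n * K) / (2 * t) + Real.sqrt (n * K) / (2 * t) := add_le_add h3 h4
          _ = _ := by field_simp; ring
      calc M t x g ≤ 2 ^ (n + 1) * (Real.sqrt (n * K) / t) := h1.trans (by gcongr)
        _ = P / t := by rw [hP]; ring
        _ ≤ P / S := by gcongr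
    have hMm : M S x m ≤ 2 * C * P / S := by
      have c1 : CP (fun y => M 16 y g) := CP_M ng 16
      have c2 : CP g := ng.cp
      calc M S x m ≤ M S x (fun y => C * g y + C * M 16 y g) :=
            M_mono cm (by fun_prop) hall
        _ = C * M S x g + C * M (Real.sqrt (S ^ 2 + 16 ^ 2)) x g := by
            rw [M_add (by fun_prop) (by fun_prop), M_const_mul, M_const_mul, M_M x ng]
        _ ≤ C * (P / S) + C * (P / S) := by
            gcongr
            · exact hmean S le_rfl
            · refine hmean _ (Real.le_sqrt_of_sq_le (by norm_num))
        _ = _ := by ring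
    calc _ ≤ W * (S ^ n * M S x m) := integral_ball_le cm hm0 hS0 hRS x
      _ ≤ W * (S ^ n * (2 * C * P / S)) := by gcongr
      _ ≤ W * (S ^ n * (2 * C * P / R)) := by gcongr
      _ = W * (2 * C * P) * (2 + D) ^ n * (R ^ n / R) := by rw [hS, mul_pow]; ring
      _ ≤ _ := by
        gcongr
        have : 0 ≤ W * C := by positivity
        linarith

end conclusion

theorem cubic_interaction_bound (n : ℕ) (hn : 2 ≤ n)
    (u v : Euc n → ℝ)
    (hu : ContDiff ℝ (⊤ : ℕ∞) u) (hv : ContDiff ℝ (⊤ : ℕ∞) v)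
    (hupos : ∀ x, 0 < u x) (hvpos : ∀ x, 0 < v x)
    (hequ : ∀ x, lap u x = u x * v x ^ 2)
    (heqv : ∀ x, lap v x = v x * u x ^ 2)
    (C₀ : ℝ) (hC₀ : 0 < C₀)
    (hgrowth : ∀ x, u x + v x ≤ C₀ * (1 + ‖x‖)) :
    ∃ C > (0 : ℝ), ∀ R > (1 : ℝ), ∀ x : Euc n,
      ∫ y in ball x R, (u y * v y ^ 3 + v y * u y ^ 3) ≤ C * R ^ ((n : ℝ) - 1) := by
  have cu : CP u := ⟨hu.continuous, C₀, 1, hC₀.le, fun x => by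
    rw [abs_of_pos (hupos x), pow_one]; linarith [hgrowth x, hvpos x]⟩
  have cv : CP v := ⟨hv.continuous, C₀, 1, hC₀.le, fun x => by
    rw [abs_of_pos (hvpos x), pow_one]; linarith [hgrowth x, hupos x]⟩
  obtain ⟨nu, nv⟩ := nice_of_system hu hv hequ heqv cu cv
  exact Sol.bound ⟨nu, nv, hupos, hvpos, hequ, heqv, C₀, hC₀, hgrowth⟩
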